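/- Let d ≥ 1, let V : ℝ^d → ℝ be smooth with e^{−V} Lebesgue-integrable, let μ be the probability measure on ℝ^d with density proportional to e^{−V}, and assume there exists ρ ∈ ℝ such that ∇²V(x) ≥ ρ I_d for all x (as symmetric matrices). Let a : ℝ^d → ℝ be smooth and positive, and assume a, a^{−1} and |∇a| are bounded. Define κ_a = inf_{x ∈ ℝ^d} { 2ρ_−(∇²V(x)) − a(x)·L(a^{−1})(x) }, where ρ_−(A) denotes the smallest eigenvalue of a symmetric matrix A and Lg = Δg − ∇V·∇g. If κ_a > 0, then for every compactly supported smooth function f : ℝ^d → ℝ one has Ent_μ(f²) ≤ (4 ‖a‖_∞ ‖a^{−1}‖_∞ / κ_a) ∫_{ℝ^d} |∇f|² dμ. -/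

import Mathlib

open Real MeasureTheory Finset Matrix Set

noncomputable section

/-- Partial derivative of `f` in the `i`-th coordinate direction. -/
def pd {d : ℕ} (i : Fin d) (f : EuclideanSpace ℝ (Fin d) → ℝ)
    (x : EuclideanSpace ℝ (Fin d)) : ℝ :=
  fderiv ℝ f x (EuclideanSpace.single i 1)

/-- Laplacian of `f`. -/
def lap {d : ℕ} (f : EuclideanSpace ℝ (Fin d) → ℝ) (x : EuclideanSpace ℝ (Fin d)) : ℝ :=
  ∑ i, pd i (fun y => pd i f y) x

/-- Diffusion operator `L f = Δ f - ∇V ⋅ ∇f` associated with the potential `V`. -/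
def diffOp {d : ℕ} (V f : EuclideanSpace ℝ (Fin d) → ℝ) (x : EuclideanSpace ℝ (Fin d)) : ℝ :=
  lap f x - ∑ i, pd i V x * pd i f x

/-- Hessian matrix of `V` at `x`. -/
def hess {d : ℕ} (V : EuclideanSpace ℝ (Fin d) → ℝ) (x : EuclideanSpace ℝ (Fin d)) :
    Matrix (Fin d) (Fin d) ℝ :=
  Matrix.of fun i j => pd i (fun y => pd j V y) x

/-- Smallest (real) eigenvalue of a matrix: the infimum of its real spectrum. -/
def minEig {d : ℕ} (A : Matrix (Fin d) (Fin d) ℝ) : ℝ :=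
  sInf (spectrum ℝ A)

/-- The probability measure with density proportional to `exp (-V)` w.r.t. Lebesgue measure. -/
def gibbs {d : ℕ} (V : EuclideanSpace ℝ (Fin d) → ℝ) : Measure (EuclideanSpace ℝ (Fin d)) :=
  (∫⁻ x, ENNReal.ofReal (Real.exp (-V x)))⁻¹ •
    volume.withDensity fun x => ENNReal.ofReal (Real.exp (-V x))

/-- Entropy of `g` with respect to the measure `μ`. -/
def entropy {d : ℕ} (μ : Measure (EuclideanSpace ℝ (Fin d)))
    (g : EuclideanSpace ℝ (Fin d) → ℝ) : ℝ :=
  ∫ x, g x * Real.log (g x) ∂μ - (∫ x, g x ∂μ) * Real.log (∫ x, g x ∂μ)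

/-- Squared Euclidean norm of the gradient of `f` at `x`. -/
def gradSq {d : ℕ} (f : EuclideanSpace ℝ (Fin d) → ℝ) (x : EuclideanSpace ℝ (Fin d)) : ℝ :=
  ∑ i, (pd i f x) ^ 2

end


/-! ### Elementary calculus of partial derivatives -/

section calculus
variable {d : ℕ}

/-- Smooth functions. -/
def Sm (u : EuclideanSpace ℝ (Fin d) → ℝ) : Prop := ContDiff ℝ (⊤ : ℕ∞) u

theorem Sm.diff {u : EuclideanSpace ℝ (Fin d) → ℝ} (hu : Sm u) : Differentiable ℝ u :=
  ContDiff.differentiable hu (by simp)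

theorem Sm.cont {u : EuclideanSpace ℝ (Fin d) → ℝ} (hu : Sm u) : Continuous u :=
  ContDiff.continuous hu

theorem Sm.pd {u : EuclideanSpace ℝ (Fin d) → ℝ} (hu : Sm u) (i : Fin d) : Sm (pd i u) := by
  unfold Sm at *
  have h : ContDiff ℝ (⊤ : ℕ∞) (fderiv ℝ u) := by
    apply ContDiff.fderiv_right hu (m := ((⊤ : ℕ∞) : WithTop ℕ∞))
    simp
  exact h.clm_apply contDiff_const

theorem Sm.const (c : ℝ) : Sm (fun _ : EuclideanSpace ℝ (Fin d) => c) := contDiff_const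

theorem Sm.add {u v : EuclideanSpace ℝ (Fin d) → ℝ} (hu : Sm u) (hv : Sm v) :
    Sm (fun x => u x + v x) := ContDiff.add hu hv
theorem Sm.sub {u v : EuclideanSpace ℝ (Fin d) → ℝ} (hu : Sm u) (hv : Sm v) :
    Sm (fun x => u x - v x) := ContDiff.sub hu hv
theorem Sm.neg {u : EuclideanSpace ℝ (Fin d) → ℝ} (hu : Sm u) :
    Sm (fun x => - u x) := ContDiff.neg hu
theorem Sm.mul {u v : EuclideanSpace ℝ (Fin d) → ℝ} (hu : Sm u) (hv : Sm v) :
    Sm (fun x => u x * v x) := ContDiff.mul hu hv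
theorem Sm.pow {u : EuclideanSpace ℝ (Fin d) → ℝ} (hu : Sm u) (n : ℕ) :
    Sm (fun x => u x ^ n) := ContDiff.pow hu n
theorem Sm.inv {u : EuclideanSpace ℝ (Fin d) → ℝ} (hu : Sm u) (h : ∀ x, u x ≠ 0) :
    Sm (fun x => (u x)⁻¹) := ContDiff.inv hu h
theorem Sm.sum {ι : Type*} {s : Finset ι} {u : ι → EuclideanSpace ℝ (Fin d) → ℝ}
    (hu : ∀ i ∈ s, Sm (u i)) : Sm (fun x => ∑ i ∈ s, u i x) := ContDiff.sum hu

theorem pd_const (i : Fin d) (c : ℝ) :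
    pd i (fun _ : EuclideanSpace ℝ (Fin d) => c) = fun _ => 0 := by
  funext x; simp [pd]

theorem pd_add {u v : EuclideanSpace ℝ (Fin d) → ℝ} (hu : Sm u) (hv : Sm v) (i : Fin d) :
    pd i (fun x => u x + v x) = fun x => pd i u x + pd i v x := by
  funext x
  unfold pd
  rw [fderiv_fun_add (hu.diff x) (hv.diff x)]; rfl

theorem pd_sub {u v : EuclideanSpace ℝ (Fin d) → ℝ} (hu : Sm u) (hv : Sm v) (i : Fin d) :
    pd i (fun x => u x - v x) = fun x => pd i u x - pd i v x := by
  funext x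
  unfold pd
  rw [fderiv_fun_sub (hu.diff x) (hv.diff x)]; rfl

theorem pd_mul {u v : EuclideanSpace ℝ (Fin d) → ℝ} (hu : Sm u) (hv : Sm v) (i : Fin d) :
    pd i (fun x => u x * v x) = fun x => pd i u x * v x + u x * pd i v x := by
  funext x
  unfold pd
  rw [fderiv_fun_mul (hu.diff x) (hv.diff x)]
  simp; ring

theorem pd_const_mul {u : EuclideanSpace ℝ (Fin d) → ℝ} (hu : Sm u) (c : ℝ) (i : Fin d) :
    pd i (fun x => c * u x) = fun x => c * pd i u x := by
  rw [pd_mul (Sm.const c) hu, pd_const]; simp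

theorem pd_sum {ι : Type*} {s : Finset ι} {u : ι → EuclideanSpace ℝ (Fin d) → ℝ}
    (hu : ∀ j ∈ s, Sm (u j)) (i : Fin d) :
    pd i (fun x => ∑ j ∈ s, u j x) = fun x => ∑ j ∈ s, pd i (u j) x := by
  funext x
  unfold pd
  rw [fderiv_fun_sum (fun j hj => (hu j hj).diff x)]
  simp

/-- Chain rule with an outer one-variable function. -/
theorem pd_comp {u : EuclideanSpace ℝ (Fin d) → ℝ} (hu : Sm u) (i : Fin d) (g : ℝ → ℝ)
    (x : EuclideanSpace ℝ (Fin d)) {g' : ℝ} (hg : HasDerivAt g g' (u x)) :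
    pd i (fun x => g (u x)) x = g' * pd i u x := by
  unfold pd
  have := hg.comp_hasFDerivAt x (hu.diff x).hasFDerivAt
  rw [show (fun x => g (u x)) = g ∘ u from rfl, this.fderiv]
  simp

theorem pd_inv {u : EuclideanSpace ℝ (Fin d) → ℝ} (hu : Sm u) (h : ∀ x, u x ≠ 0) (i : Fin d) :
    pd i (fun x => (u x)⁻¹) = fun x => -1 * (pd i u x * ((u x)⁻¹ * (u x)⁻¹)) := by
  funext x
  rw [pd_comp hu i (fun y => y⁻¹) x (hasDerivAt_inv (h x))]
  field_simp

theorem pd_log {u : EuclideanSpace ℝ (Fin d) → ℝ} (hu : Sm u) (h : ∀ x, u x ≠ 0) (i : Fin d) :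
    pd i (fun x => Real.log (u x)) = fun x => pd i u x * (u x)⁻¹ := by
  funext x
  rw [pd_comp hu i Real.log x (Real.hasDerivAt_log (h x))]
  ring

theorem pd_exp_neg {u : EuclideanSpace ℝ (Fin d) → ℝ} (hu : Sm u) (i : Fin d) :
    pd i (fun x => Real.exp (- u x)) = fun x => - (pd i u x * Real.exp (-u x)) := by
  funext x
  have : HasDerivAt (fun y : ℝ => Real.exp (-y)) (Real.exp (-(u x)) * (-1)) (u x) :=
    (hasDerivAt_id (u x)).neg.exp
  rw [pd_comp hu i (fun y => Real.exp (-y)) x this]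
  ring

/-- A vector is the sum of its coordinates times the basis vectors. -/
theorem vec_eq_sum (v : EuclideanSpace ℝ (Fin d)) :
    v = ∑ i, v i • EuclideanSpace.single i (1 : ℝ) := by
  ext j
  simp [Finset.sum_apply, Pi.single_apply]

theorem fderiv_eq_sum (u : EuclideanSpace ℝ (Fin d) → ℝ) (x v : EuclideanSpace ℝ (Fin d)) :
    fderiv ℝ u x v = ∑ i, v i * pd i u x := by
  conv_lhs => rw [vec_eq_sum v]
  simp [pd]

theorem pd_congr_nhds {u v : EuclideanSpace ℝ (Fin d) → ℝ} {x : EuclideanSpace ℝ (Fin d)}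
    (h : u =ᶠ[nhds x] v) (i : Fin d) : pd i u x = pd i v x := by
  unfold pd; rw [h.fderiv_eq]

theorem pd_congr_nhds' {u v : EuclideanSpace ℝ (Fin d) → ℝ} {x : EuclideanSpace ℝ (Fin d)}
    (h : u =ᶠ[nhds x] v) (i : Fin d) : pd i u =ᶠ[nhds x] pd i v := by
  filter_upwards [h.eventuallyEq_nhds] with y hy using pd_congr_nhds hy i

/-! ### Uniform bounds on derivatives up to a given order -/

/-- All partial derivatives of order at most `k` are bounded by `S`. -/
def Bd : ℕ → ℝ → (EuclideanSpace ℝ (Fin d) → ℝ) → Prop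
  | 0, S, u => ∀ x, |u x| ≤ S
  | (k+1), S, u => (∀ x, |u x| ≤ S) ∧ ∀ i, Bd k S (pd i u)

theorem Bd.zero {k : ℕ} {S : ℝ} {u : EuclideanSpace ℝ (Fin d) → ℝ} (h : Bd k S u) (x) :
    |u x| ≤ S := by
  cases k with
  | zero => exact h x
  | succ k => exact h.1 x

theorem Bd.mono {k : ℕ} {S S' : ℝ} (hS : S ≤ S') : ∀ {u : EuclideanSpace ℝ (Fin d) → ℝ},
    Bd k S u → Bd k S' u := by
  induction k with
  | zero => intro u h x; exact (h x).trans hS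
  | succ k ih => intro u h; exact ⟨fun x => (h.1 x).trans hS, fun i => ih (h.2 i)⟩

theorem Bd.pred {k : ℕ} {S : ℝ} : ∀ {u : EuclideanSpace ℝ (Fin d) → ℝ},
    Bd (k+1) S u → Bd k S u := by
  induction k with
  | zero => intro u h x; exact h.1 x
  | succ k ih => intro u h; exact ⟨h.1, fun i => ih (h.2 i)⟩

theorem Bd.of_le {k l : ℕ} {S : ℝ} {u : EuclideanSpace ℝ (Fin d) → ℝ} (hkl : l ≤ k)
    (h : Bd k S u) : Bd l S u := by
  induction hkl with
  | refl => exact h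
  | step _ ih => exact ih h.pred

theorem Bd.add {k : ℕ} {S S' : ℝ} : ∀ {u v : EuclideanSpace ℝ (Fin d) → ℝ}, Sm u → Sm v →
    Bd k S u → Bd k S' v → Bd k (S + S') (fun x => u x + v x) := by
  induction k with
  | zero => intro u v _ _ h h' x; exact (abs_add_le _ _).trans (add_le_add (h x) (h' x))
  | succ k ih =>
    intro u v hu hv h h'
    refine ⟨fun x => (abs_add_le _ _).trans (add_le_add (h.1 x) (h'.1 x)), fun i => ?_⟩
    rw [pd_add hu hv]
    exact ih (hu.pd i) (hv.pd i) (h.2 i) (h'.2 i)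

theorem Bd.const {k : ℕ} {S c : ℝ} (h : |c| ≤ S) :
    Bd k S (fun _ : EuclideanSpace ℝ (Fin d) => c) := by
  induction k generalizing c with
  | zero => intro x; exact h
  | succ k ih =>
    refine ⟨fun x => h, fun i => ?_⟩
    rw [pd_const]
    exact ih (by simpa using (abs_nonneg c).trans h)

theorem Bd.nonneg {k : ℕ} {S : ℝ} {u : EuclideanSpace ℝ (Fin d) → ℝ} (h : Bd k S u) : 0 ≤ S :=
  (abs_nonneg _).trans (h.zero 0)

theorem Bd.mul {k : ℕ} {S S' : ℝ} : ∀ {u v : EuclideanSpace ℝ (Fin d) → ℝ}, Sm u → Sm v →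
    Bd k S u → Bd k S' v → Bd k (2 ^ k * S * S') (fun x => u x * v x) := by
  induction k with
  | zero =>
    intro u v _ _ h h' x
    rw [abs_mul]
    simpa using mul_le_mul (h x) (h' x) (abs_nonneg _) ((abs_nonneg _).trans (h x))
  | succ k ih =>
    intro u v hu hv h h'
    have hS := h.nonneg
    have hS' := h'.nonneg
    refine ⟨fun x => ?_, fun i => ?_⟩
    · rw [abs_mul]
      have h1 := mul_le_mul (h.1 x) (h'.1 x) (abs_nonneg _) hS
      have h2 : (1:ℝ) ≤ 2 ^ (k+1) := one_le_pow₀ (by norm_num)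
      have h3 : 0 ≤ S * S' := mul_nonneg hS hS'
      nlinarith
    · rw [pd_mul hu hv]
      have := (ih (hu.pd i) hv (h.2 i) h'.pred).add ((hu.pd i).mul hv) (hu.mul (hv.pd i))
        (ih hu (hv.pd i) h.pred (h'.2 i))
      exact this.mono (by rw [pow_succ]; linarith)

theorem Bd.sum {ι : Type*} {s : Finset ι} {k : ℕ} {S : ι → ℝ}
    {u : ι → EuclideanSpace ℝ (Fin d) → ℝ}
    (hu : ∀ j ∈ s, Sm (u j)) (h : ∀ j ∈ s, Bd k (S j) (u j)) :
    Bd k (∑ j ∈ s, S j) (fun x => ∑ j ∈ s, u j x) := by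
  classical
  induction s using Finset.induction_on with
  | empty => simpa using Bd.const (by simp)
  | insert a s ha ih =>
    simp only [Finset.sum_insert ha]
    exact Bd.add (hu a (by simp)) (Sm.sum fun j hj => hu j (by simp [hj])) (h a (by simp))
      (ih (fun j hj => hu j (by simp [hj])) (fun j hj => h j (by simp [hj])))

theorem Bd.const_mul {k : ℕ} {S c : ℝ} : ∀ {u : EuclideanSpace ℝ (Fin d) → ℝ}, Sm u →
    Bd k S u → Bd k (|c| * S) (fun x => c * u x) := by
  induction k with
  | zero => intro u _ h x; rw [abs_mul]; exact mul_le_mul_of_nonneg_left (h x) (abs_nonneg _)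
  | succ k ih =>
    intro u hu h
    refine ⟨fun x => ?_, fun i => ?_⟩
    · rw [abs_mul]; exact mul_le_mul_of_nonneg_left (h.1 x) (abs_nonneg _)
    · rw [pd_const_mul hu]; exact ih (hu.pd i) (h.2 i)

/-- Uniform bounds for the inverse. -/
theorem Bd.inv (k : ℕ) (S ε : ℝ) (hε : 0 < ε) : ∃ S', ∀ u : EuclideanSpace ℝ (Fin d) → ℝ,
    Sm u → (∀ x, ε ≤ u x) → Bd k S u → Bd k S' (fun x => (u x)⁻¹) := by
  have key : ∀ u : EuclideanSpace ℝ (Fin d) → ℝ, (∀ x, ε ≤ u x) → ∀ x, |(u x)⁻¹| ≤ ε⁻¹ := by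
    intro u hu x
    rw [abs_of_pos (inv_pos.2 (hε.trans_le (hu x)))]
    exact inv_anti₀ hε (hu x)
  induction k with
  | zero => exact ⟨ε⁻¹, fun u _ h _ => key u h⟩
  | succ k ih =>
    obtain ⟨S', hS'⟩ := ih
    refine ⟨max ε⁻¹ (|(-1:ℝ)| * (2 ^ k * S * (2 ^ k * S' * S'))), fun u hu h hb => ?_⟩
    have hne : ∀ x, u x ≠ 0 := fun x => (hε.trans_le (h x)).ne'
    refine ⟨fun x => (key u h x).trans (le_max_left _ _), fun i => ?_⟩
    rw [pd_inv hu hne]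
    have h1 := hS' u hu h hb.pred
    have hi := hu.inv hne
    have h2 := (hb.2 i).mul (hu.pd i) (hi.mul hi) (h1.mul hi hi h1)
    exact (h2.const_mul (c := -1) ((hu.pd i).mul (hi.mul hi))).mono (le_max_right _ _)

/-- A smooth function that is constant outside a ball has bounded derivatives of all orders. -/
theorem Bd.of_const_outside (k : ℕ) : ∀ {u : EuclideanSpace ℝ (Fin d) → ℝ} {c r : ℝ}, Sm u →
    (∀ x, r < ‖x‖ → u x = c) → ∃ S, Bd k S u := by
  have key : ∀ {u : EuclideanSpace ℝ (Fin d) → ℝ} {c r : ℝ}, Sm u →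
    (∀ x, r < ‖x‖ → u x = c) → ∃ S, ∀ x, |u x| ≤ S := by
    intro u c r hu h
    obtain ⟨C, hC⟩ := (isCompact_closedBall (0 : EuclideanSpace ℝ (Fin d)) r).exists_bound_of_continuousOn
      hu.cont.continuousOn
    refine ⟨max C |c|, fun x => ?_⟩
    by_cases hx : r < ‖x‖
    · rw [h x hx]; exact le_max_right _ _
    · exact (hC x (by simpa using hx)).trans (le_max_left _ _)
  induction k with
  | zero => intro u c r hu h; exact key hu h
  | succ k ih =>
    intro u c r hu h
    obtain ⟨S0, hS0⟩ := key hu h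
    have : ∀ i, ∃ S, Bd k S (pd i u) := by
      intro i
      refine ih (c := 0) (r := r) (hu.pd i) (fun x hx => ?_)
      have : u =ᶠ[nhds x] fun _ => c := by
        filter_upwards [(isOpen_lt continuous_const continuous_norm).mem_nhds hx] with y hy
          using h y hy
      rw [pd_congr_nhds this, pd_const]
    choose S hS using this
    refine ⟨max S0 (∑ i, |S i|), fun x => (hS0 x).trans (le_max_left _ _), fun i => ?_⟩
    exact (hS i).mono (((le_abs_self _).trans
      (Finset.single_le_sum (f := fun i => |S i|) (fun _ _ => abs_nonneg _) (Finset.mem_univ i))).trans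
        (le_max_right _ _))

end calculus


section chain
variable {d : ℕ} {ι : Type*} [Fintype ι]

/-- The gradient vector. -/
noncomputable def grd (V : EuclideanSpace ℝ (Fin d) → ℝ) (x : EuclideanSpace ℝ (Fin d)) :
    EuclideanSpace ℝ (Fin d) := WithLp.toLp 2 (fun i => pd i V x)

/-- Explicit Euler step of the gradient flow. -/
noncomputable def Tm (h : ℝ) (V : EuclideanSpace ℝ (Fin d) → ℝ) (x : EuclideanSpace ℝ (Fin d)) :
    EuclideanSpace ℝ (Fin d) := x - h • grd V x

/-- Averaging operator of the Euler chain with noise uniformly distributed on the points `z p`. -/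
noncomputable def Av (z : ι → EuclideanSpace ℝ (Fin d)) (h : ℝ) (V u : EuclideanSpace ℝ (Fin d) → ℝ)
    (x : EuclideanSpace ℝ (Fin d)) : ℝ :=
  (Fintype.card ι : ℝ)⁻¹ * ∑ p, u (Tm h V x + z p)

theorem grd_smooth {V : EuclideanSpace ℝ (Fin d) → ℝ} (hV : Sm V) :
    ContDiff ℝ (⊤ : ℕ∞) (grd V) := by
  rw [contDiff_euclidean]
  intro i
  exact hV.pd i

theorem Tm_smooth {V : EuclideanSpace ℝ (Fin d) → ℝ} (hV : Sm V) (h : ℝ) :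
    ContDiff ℝ (⊤ : ℕ∞) (Tm h V) :=
  contDiff_id.sub ((grd_smooth hV).const_smul h)

theorem comp_T_smooth {V u : EuclideanSpace ℝ (Fin d) → ℝ} (hV : Sm V) (hu : Sm u) (h : ℝ)
    (z : EuclideanSpace ℝ (Fin d)) : Sm (fun x => u (Tm h V x + z)) :=
  ContDiff.comp hu ((Tm_smooth hV h).add contDiff_const)

theorem Av_smooth {V u : EuclideanSpace ℝ (Fin d) → ℝ} (hV : Sm V) (hu : Sm u) (h : ℝ)
    (z : ι → EuclideanSpace ℝ (Fin d)) : Sm (Av z h V u) :=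
  Sm.mul (Sm.const _) (Sm.sum fun p _ => comp_T_smooth hV hu h (z p))

theorem fderiv_grd_apply {V : EuclideanSpace ℝ (Fin d) → ℝ} (hV : Sm V)
    (x v : EuclideanSpace ℝ (Fin d)) (j : Fin d) :
    (fderiv ℝ (grd V) x v) j = fderiv ℝ (pd j V) x v := by
  have h1 : HasFDerivAt (grd V) (fderiv ℝ (grd V) x) x :=
    ((grd_smooth hV).differentiable (by simp) x).hasFDerivAt
  have h2 := (EuclideanSpace.proj (𝕜 := ℝ) j).hasFDerivAt.comp x h1
  have h3 : (⇑(EuclideanSpace.proj (𝕜 := ℝ) j) ∘ grd V) = pd j V := rfl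
  rw [h3] at h2
  rw [h2.fderiv]; rfl

theorem pd_comp_T {V u : EuclideanSpace ℝ (Fin d) → ℝ} (hV : Sm V) (hu : Sm u) (h : ℝ)
    (z : EuclideanSpace ℝ (Fin d)) (i : Fin d) (x) :
    pd i (fun x => u (Tm h V x + z)) x =
      pd i u (Tm h V x + z) - h * ∑ j, pd i (pd j V) x * pd j u (Tm h V x + z) := by
  have hT : HasFDerivAt (fun x => Tm h V x + z)
      (ContinuousLinearMap.id ℝ (EuclideanSpace ℝ (Fin d)) - h • fderiv ℝ (grd V) x) x := by
    have h1 : HasFDerivAt (grd V) (fderiv ℝ (grd V) x) x :=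
      ((grd_smooth hV).differentiable (by simp) x).hasFDerivAt
    exact ((hasFDerivAt_id x).sub (h1.const_smul h)).add_const z
  have h2 := ((hu.diff (Tm h V x + z)).hasFDerivAt).comp x hT
  have h3 : pd i (fun x => u (Tm h V x + z)) x =
      fderiv ℝ u (Tm h V x + z) ((ContinuousLinearMap.id ℝ (EuclideanSpace ℝ (Fin d)) - h • fderiv ℝ (grd V) x)
        (EuclideanSpace.single i 1)) := by
    unfold pd
    rw [show (fun x => u (Tm h V x + z)) = u ∘ (fun x => Tm h V x + z) from rfl, h2.fderiv]
    rfl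
  rw [h3, _root_.sub_apply, map_sub, ContinuousLinearMap.id_apply]
  congr 1
  rw [ContinuousLinearMap.smul_apply, map_smul, fderiv_eq_sum, smul_eq_mul]
  congr 1
  apply Finset.sum_congr rfl
  intro j _
  rw [fderiv_grd_apply hV]; rfl

theorem pd_Av {V u : EuclideanSpace ℝ (Fin d) → ℝ} (hV : Sm V) (hu : Sm u) (h : ℝ)
    (z : ι → EuclideanSpace ℝ (Fin d)) (i : Fin d) :
    pd i (Av z h V u) = fun x =>
      Av z h V (pd i u) x + (-h) * ∑ j, pd i (pd j V) x * Av z h V (pd j u) x := by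
  funext x
  have h1 : pd i (Av z h V u) x = (Fintype.card ι : ℝ)⁻¹ *
      ∑ p, pd i (fun x => u (Tm h V x + z p)) x := by
    unfold Av
    rw [pd_const_mul (Sm.sum fun p _ => comp_T_smooth hV hu h (z p)),
      pd_sum (fun p _ => comp_T_smooth hV hu h (z p))]
  rw [h1]
  simp only [pd_comp_T hV hu, Av, Finset.sum_sub_distrib, ← Finset.mul_sum]
  rw [Finset.sum_comm]
  simp only [← Finset.mul_sum]
  rw [mul_sub, sub_eq_add_neg]
  congr 1
  simp only [Finset.mul_sum]
  rw [← Finset.sum_neg_distrib]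
  apply Finset.sum_congr rfl; intro j _
  rw [← Finset.sum_neg_distrib]
  apply Finset.sum_congr rfl; intro p _
  ring

theorem Av_mono [Nonempty ι] {V u v : EuclideanSpace ℝ (Fin d) → ℝ} (h : ℝ)
    (z : ι → EuclideanSpace ℝ (Fin d)) (huv : ∀ x, u x ≤ v x) (x) : Av z h V u x ≤ Av z h V v x := by
  unfold Av
  apply mul_le_mul_of_nonneg_left _ (by positivity)
  exact Finset.sum_le_sum fun p _ => huv _

theorem Av_const [Nonempty ι] {V : EuclideanSpace ℝ (Fin d) → ℝ} (h : ℝ)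
    (z : ι → EuclideanSpace ℝ (Fin d)) (c : ℝ) (x) : Av z h V (fun _ => c) x = c := by
  simp [Av]

theorem Av_abs_le [Nonempty ι] {V u : EuclideanSpace ℝ (Fin d) → ℝ} (h : ℝ)
    (z : ι → EuclideanSpace ℝ (Fin d)) {S : ℝ} (hu : ∀ x, |u x| ≤ S) (x) : |Av z h V u x| ≤ S := by
  rw [abs_le]
  constructor
  · rw [← Av_const (V := V) h z (-S) x]
    exact Av_mono h z (fun x => (abs_le.1 (hu x)).1) x
  · conv_rhs => rw [← Av_const (V := V) h z S x]
    exact Av_mono h z (fun x => (abs_le.1 (hu x)).2) x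

/-- Stability of derivative bounds. -/
theorem Av_Bd [Nonempty ι] {V : EuclideanSpace ℝ (Fin d) → ℝ} (hV : Sm V)
    (hVB : ∀ k, ∃ S, ∀ i j, Bd k S (pd i (pd j V))) (k : ℕ) :
    ∃ C, 0 ≤ C ∧ ∀ (z : ι → EuclideanSpace ℝ (Fin d)) (h : ℝ), 0 ≤ h → h ≤ 1 →
      ∀ u : EuclideanSpace ℝ (Fin d) → ℝ, Sm u → ∀ S, Bd k S u →
        Bd k ((1 + C * h) * S) (Av z h V u) := by
  induction k with
  | zero =>
    refine ⟨0, le_rfl, fun z h h0 h1 u hu S hS x => ?_⟩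
    simpa using Av_abs_le h z hS x
  | succ k ih =>
    obtain ⟨C, hC, ih⟩ := ih
    obtain ⟨K, hK⟩ := hVB k
    have hK0 : 0 ≤ |K| := abs_nonneg K
    refine ⟨C + d * (2 ^ k * |K| * (1 + C)), by positivity, fun z h h0 h1 u hu S hS => ?_⟩
    have hS0 := hS.nonneg
    refine ⟨fun x => ?_, fun i => ?_⟩
    · refine (Av_abs_le h z hS.1 x).trans ?_
      have : 0 ≤ (C + d * (2 ^ k * |K| * (1 + C))) * h := by positivity
      nlinarith
    · rw [pd_Av hV hu]
      have hsm : ∀ j, Sm (Av z h V (pd j u)) := fun j => Av_smooth hV (hu.pd j) h z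
      have hb : ∀ j, Bd k ((1 + C * h) * S) (Av z h V (pd j u)) := fun j =>
        ih z h h0 h1 (pd j u) (hu.pd j) S (hS.2 j)
      have hp : ∀ j, Sm (fun x => pd i (pd j V) x * Av z h V (pd j u) x) := fun j =>
        ((hV.pd j).pd i).mul (hsm j)
      have hpb : ∀ j, Bd k (2 ^ k * |K| * ((1 + C * h) * S))
          (fun x => pd i (pd j V) x * Av z h V (pd j u) x) := fun j =>
        (((hK i j).mono (le_abs_self K))).mul ((hV.pd j).pd i) (hsm j) (hb j)
      have h2 := Bd.sum (s := Finset.univ) (fun j _ => hp j) (fun j _ => hpb j)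
      have h3 := (hb i).add (hsm i) ((Sm.const (-h)).mul (Sm.sum fun j _ => hp j))
        (h2.const_mul (c := -h) (Sm.sum fun j _ => hp j))
      refine h3.mono ?_
      simp only [abs_neg, abs_of_nonneg h0, Finset.sum_const, Finset.card_univ, Fintype.card_fin,
        nsmul_eq_mul]
      have h4 : C * h ≤ C := mul_le_of_le_one_right hC h1
      have h5 : 0 ≤ h * (d * (2 ^ k * |K| * S)) := by positivity
      nlinarith [mul_le_mul_of_nonneg_left h4 h5]

/-- Iterates of the chain. -/
noncomputable def it (z : ι → EuclideanSpace ℝ (Fin d)) (h : ℝ) (V u : EuclideanSpace ℝ (Fin d) → ℝ) :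
    ℕ → EuclideanSpace ℝ (Fin d) → ℝ
  | 0 => u
  | (k+1) => Av z h V (it z h V u k)

theorem it_smooth {V u : EuclideanSpace ℝ (Fin d) → ℝ} (hV : Sm V) (hu : Sm u) (h : ℝ)
    (z : ι → EuclideanSpace ℝ (Fin d)) (k : ℕ) : Sm (it z h V u k) := by
  induction k with
  | zero => exact hu
  | succ k ih => exact Av_smooth hV ih h z

theorem it_bounds [Nonempty ι] {V u : EuclideanSpace ℝ (Fin d) → ℝ} (h : ℝ)
    (z : ι → EuclideanSpace ℝ (Fin d)) {m M : ℝ} (hm : ∀ x, m ≤ u x) (hM : ∀ x, u x ≤ M) (k : ℕ) :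
    (∀ x, m ≤ it z h V u k x) ∧ ∀ x, it z h V u k x ≤ M := by
  induction k with
  | zero => exact ⟨hm, hM⟩
  | succ k ih =>
    constructor
    · intro x
      rw [← Av_const (V := V) h z m x]; exact Av_mono h z ih.1 x
    · intro x
      conv_rhs => rw [← Av_const (V := V) h z M x]
      exact Av_mono h z ih.2 x

theorem it_Bd [Nonempty ι] {V : EuclideanSpace ℝ (Fin d) → ℝ} (hV : Sm V)
    (hVB : ∀ k, ∃ S, ∀ i j, Bd k S (pd i (pd j V))) (l : ℕ) (u : EuclideanSpace ℝ (Fin d) → ℝ)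
    (hu : Sm u) (S : ℝ) (hS : Bd l S u) (t : ℝ) :
    ∃ S', ∀ (z : ι → EuclideanSpace ℝ (Fin d)) (h : ℝ), 0 ≤ h → h ≤ 1 → ∀ k : ℕ, k * h ≤ t →
      Bd l S' (it z h V u k) := by
  obtain ⟨C, hC, H⟩ := Av_Bd (ι := ι) hV hVB l
  refine ⟨Real.exp (C * t) * S, fun z h h0 h1 k hk => ?_⟩
  have : Bd l (Real.exp (C * (k * h)) * S) (it z h V u k) := by
    clear hk
    induction k with
    | zero => simpa [it] using hS
    | succ k ih =>
      have := H z h h0 h1 _ (it_smooth hV hu h z k) _ ih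
      refine this.mono ?_
      have h2 : 1 + C * h ≤ Real.exp (C * h) := by linarith [Real.add_one_le_exp (C * h)]
      have h3 : Real.exp (C * ((k+1 : ℕ) * h)) = Real.exp (C * h) * Real.exp (C * (k * h)) := by
        rw [← Real.exp_add]; congr 1; push_cast; ring
      rw [h3, ← mul_assoc]
      apply mul_le_mul_of_nonneg_right _ hS.nonneg
      exact mul_le_mul_of_nonneg_right h2 (Real.exp_pos _).le
  refine this.mono (mul_le_mul_of_nonneg_right ?_ hS.nonneg)
  exact Real.exp_le_exp.2 (mul_le_mul_of_nonneg_left hk hC)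

/-- Fisher information density. -/
noncomputable def fi (u : EuclideanSpace ℝ (Fin d) → ℝ) (x : EuclideanSpace ℝ (Fin d)) : ℝ :=
  (∑ i, pd i u x * pd i u x) * (u x)⁻¹

theorem fi_smooth {u : EuclideanSpace ℝ (Fin d) → ℝ} (hu : Sm u) (h : ∀ x, 0 < u x) : Sm (fi u) :=
  Sm.mul (Sm.sum fun i _ => (hu.pd i).mul (hu.pd i)) (hu.inv fun x => (h x).ne')

theorem fi_nonneg {u : EuclideanSpace ℝ (Fin d) → ℝ} (h : ∀ x, 0 < u x) (x) : 0 ≤ fi u x :=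
  mul_nonneg (Finset.sum_nonneg fun i _ => mul_self_nonneg _) (inv_pos.2 (h x)).le

theorem fi_Bd (k : ℕ) (S ε : ℝ) (hε : 0 < ε) : ∃ S', ∀ u : EuclideanSpace ℝ (Fin d) → ℝ,
    Sm u → (∀ x, ε ≤ u x) → Bd (k+1) S u → Bd k S' (fi u) := by
  obtain ⟨S1, h1⟩ := Bd.inv (d := d) k S ε hε
  refine ⟨2 ^ k * (∑ i : Fin d, 2 ^ k * S * S) * S1, fun u hu h hb => ?_⟩
  have hp : ∀ i, Sm (fun x => pd i u x * pd i u x) := fun i => (hu.pd i).mul (hu.pd i)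
  exact Bd.mul (Sm.sum fun i _ => hp i) (hu.inv fun x => (hε.trans_le (h x)).ne')
    (Bd.sum (fun i _ => hp i) (fun i _ => (hb.2 i).mul (hu.pd i) (hu.pd i) (hb.2 i)))
    (h1 u hu h hb.pred)

/-- Contraction of the Fisher information density along the chain. -/
theorem fi_Av_le [Nonempty ι] (hd : 0 < d) {V u : EuclideanSpace ℝ (Fin d) → ℝ} (hV : Sm V) (hu : Sm u)
    (hpos : ∀ x, 0 < u x) (h : ℝ) (h0 : 0 ≤ h) (z : ι → EuclideanSpace ℝ (Fin d)) (x) (q K : ℝ)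
    (hK : ∀ i j, |pd i (pd j V) x| ≤ K)
    (hq : ∀ v : Fin d → ℝ, q * ∑ i, v i * v i ≤ 2 * ∑ i, ∑ j, v i * pd i (pd j V) x * v j) :
    fi (Av z h V u) x ≤ (1 - h * q + h ^ 2 * (d ^ 2 * K ^ 2)) * Av z h V (fi u) x := by
  set w : Fin d → ℝ := fun i => Av z h V (pd i u) x with hw
  set H : Fin d → Fin d → ℝ := fun i j => pd i (pd j V) x with hH
  have hpd : ∀ i, pd i (Av z h V u) x = w i - h * ∑ j, H i j * w j := by
    intro i; rw [pd_Av hV hu]; simp only [hw, hH]; ring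
  -- norm of the transformed vector
  have hHw : ∀ i, (∑ j, H i j * w j) ^ 2 ≤ d * K ^ 2 * ∑ j, w j * w j := by
    intro i
    have h1 := Finset.sum_mul_sq_le_sq_mul_sq Finset.univ (fun j => H i j) w
    have h2 : ∑ j, H i j ^ 2 ≤ d * K ^ 2 := by
      have : ∑ j, H i j ^ 2 ≤ ∑ j : Fin d, K ^ 2 :=
        Finset.sum_le_sum fun j _ => sq_le_sq' (abs_le.1 (hK i j)).1 (abs_le.1 (hK i j)).2
      simpa using this
    have h3 : (∑ j, w j ^ 2) = ∑ j, w j * w j := by simp only [sq]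
    rw [← h3]
    exact h1.trans (mul_le_mul_of_nonneg_right h2 (Finset.sum_nonneg fun j _ => sq_nonneg _))
  have hww : 0 ≤ ∑ i, w i * w i := Finset.sum_nonneg fun i _ => mul_self_nonneg _
  have hsum : ∑ i, pd i (Av z h V u) x * pd i (Av z h V u) x ≤
      (1 - h * q + h ^ 2 * (d ^ 2 * K ^ 2)) * ∑ i, w i * w i := by
    have e1 : ∑ i, pd i (Av z h V u) x * pd i (Av z h V u) x =
        ∑ i, w i * w i - h * (2 * ∑ i, ∑ j, w i * H i j * w j) + h ^ 2 * ∑ i, (∑ j, H i j * w j) ^ 2 := by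
      have : ∀ i, pd i (Av z h V u) x * pd i (Av z h V u) x =
        w i * w i - h * (2 * ∑ j, w i * H i j * w j) + h ^ 2 * (∑ j, H i j * w j) ^ 2 := by
        intro i
        have : ∑ j, w i * H i j * w j = w i * ∑ j, H i j * w j := by
          rw [Finset.mul_sum]; exact Finset.sum_congr rfl fun j _ => by ring
        rw [hpd, this]; ring
      simp only [this, Finset.sum_add_distrib, Finset.sum_sub_distrib, ← Finset.mul_sum]
    have e2 : ∑ i, (∑ j, H i j * w j) ^ 2 ≤ d ^ 2 * K ^ 2 * ∑ j, w j * w j := by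
      refine (Finset.sum_le_sum fun i _ => hHw i).trans ?_
      simp only [Finset.sum_const, Finset.card_univ, Fintype.card_fin, nsmul_eq_mul]
      apply le_of_eq; ring
    have e3 := mul_le_mul_of_nonneg_left (hq w) h0
    have e4 := mul_le_mul_of_nonneg_left e2 (sq_nonneg h)
    rw [e1]
    simp only [hH] at e3 ⊢
    nlinarith
  -- Cauchy-Schwarz
  have hN : (0:ℝ) < Fintype.card ι := by exact_mod_cast Fintype.card_pos
  have hAvpos : 0 < Av z h V u x := by
    unfold Av
    exact mul_pos (inv_pos.2 hN) (Finset.sum_pos (fun p _ => hpos _) Finset.univ_nonempty)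
  have hCS : ∑ i, w i * w i ≤ Av z h V u x * Av z h V (fi u) x := by
    have hi : ∀ i, w i * w i ≤ Av z h V u x *
        ((Fintype.card ι : ℝ)⁻¹ * ∑ p, pd i u (Tm h V x + z p) * pd i u (Tm h V x + z p) *
          (u (Tm h V x + z p))⁻¹) := by
      intro i
      have := Finset.sum_sq_le_sum_mul_sum_of_sq_le_mul Finset.univ
        (r := fun p => pd i u (Tm h V x + z p)) (f := fun p => u (Tm h V x + z p))
        (g := fun p => pd i u (Tm h V x + z p) * pd i u (Tm h V x + z p) *
          (u (Tm h V x + z p))⁻¹) (fun p _ => (hpos _).le)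
        (fun p _ => mul_nonneg (mul_self_nonneg _) (inv_pos.2 (hpos _)).le)
        (fun p _ => by have := (hpos (Tm h V x + z p)).ne'; apply le_of_eq; field_simp)
      simp only [hw, Av]
      have hc : 0 ≤ (Fintype.card ι : ℝ)⁻¹ * (Fintype.card ι : ℝ)⁻¹ := by positivity
      have := mul_le_mul_of_nonneg_left this hc
      nlinarith
    refine (Finset.sum_le_sum fun i _ => hi i).trans (le_of_eq ?_)
    rw [← Finset.mul_sum, ← Finset.mul_sum, Finset.sum_comm]
    simp only [Av, fi, Finset.sum_mul]
  have hc : 0 ≤ (1 - h * q + h ^ 2 * (d ^ 2 * K ^ 2)) := by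
    have hqK : q ≤ 2 * K := by
      have := hq (Pi.single ⟨0, hd⟩ 1)
      simp [Pi.single_apply] at this
      linarith [(abs_le.1 (hK ⟨0, hd⟩ ⟨0, hd⟩)).2]
    have hd1 : (1:ℝ) ≤ d ^ 2 := one_le_pow₀ (by exact_mod_cast hd)
    have h5 : h ^ 2 * K ^ 2 ≤ h ^ 2 * (d ^ 2 * K ^ 2) :=
      mul_le_mul_of_nonneg_left (le_mul_of_one_le_left (sq_nonneg K) hd1) (sq_nonneg h)
    nlinarith [mul_le_mul_of_nonneg_left hqK h0, sq_nonneg (1 - h * K)]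
  change (∑ i, pd i (Av z h V u) x * pd i (Av z h V u) x) * (Av z h V u x)⁻¹ ≤ _
  rw [← div_eq_mul_inv, div_le_iff₀ hAvpos]
  refine hsum.trans ((mul_le_mul_of_nonneg_left hCS hc).trans (le_of_eq ?_))
  ring

end chain


section taylor
variable {d : ℕ}

/-- The sum of the absolute values of the coordinates. -/
noncomputable def nrm1 (v : EuclideanSpace ℝ (Fin d)) : ℝ := ∑ i, |v i|

theorem nrm1_nonneg (v : EuclideanSpace ℝ (Fin d)) : 0 ≤ nrm1 v :=
  Finset.sum_nonneg fun _ _ => abs_nonneg _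

theorem nrm1_smul (c : ℝ) (v : EuclideanSpace ℝ (Fin d)) : nrm1 (c • v) = |c| * nrm1 v := by
  simp [nrm1, abs_mul, Finset.mul_sum]

theorem abs_sum_mul_le (v : EuclideanSpace ℝ (Fin d)) (w : Fin d → ℝ) (S : ℝ)
    (h : ∀ i, |w i| ≤ S) : |∑ i, v i * w i| ≤ S * nrm1 v := by
  refine (Finset.abs_sum_le_sum_abs _ _).trans ?_
  rw [nrm1, Finset.mul_sum]
  refine Finset.sum_le_sum fun i _ => ?_
  rw [abs_mul, mul_comm]
  exact mul_le_mul_of_nonneg_right (h i) (abs_nonneg _)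

theorem hasDerivAt_line {u : EuclideanSpace ℝ (Fin d) → ℝ} (hu : Sm u)
    (x v : EuclideanSpace ℝ (Fin d)) (τ : ℝ) :
    HasDerivAt (fun τ : ℝ => u (x + τ • v)) (∑ i, v i * pd i u (x + τ • v)) τ := by
  have h1 : HasDerivAt (fun τ : ℝ => x + τ • v) v τ := by
    simpa using ((hasDerivAt_id τ).smul_const v).const_add x
  have := (hu.diff (x + τ • v)).hasFDerivAt.comp_hasDerivAt τ h1
  rw [fderiv_eq_sum] at this
  exact this

theorem taylor1 {u : EuclideanSpace ℝ (Fin d) → ℝ} (hu : Sm u) {S : ℝ} (hS : Bd 1 S u)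
    (x v : EuclideanSpace ℝ (Fin d)) : |u (x + v) - u x| ≤ S * nrm1 v := by
  have := norm_image_sub_le_of_norm_deriv_le_segment_01' (f := fun τ : ℝ => u (x + τ • v))
    (f' := fun τ => ∑ i, v i * pd i u (x + τ • v)) (C := S * nrm1 v)
    (fun τ _ => (hasDerivAt_line hu x v τ).hasDerivWithinAt)
    (fun τ _ => abs_sum_mul_le v _ S fun i => hS.2 i _)
  simpa using this

theorem taylor2 {u : EuclideanSpace ℝ (Fin d) → ℝ} (hu : Sm u) {S : ℝ} (hS : Bd 2 S u)
    (x v : EuclideanSpace ℝ (Fin d)) :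
    |u (x + v) - u x - ∑ i, v i * pd i u x| ≤ S * nrm1 v ^ 2 := by
  have hS0 := hS.nonneg
  have := norm_image_sub_le_of_norm_deriv_le_segment_01'
    (f := fun τ : ℝ => u (x + τ • v) - τ * ∑ i, v i * pd i u x)
    (f' := fun τ => ∑ i, v i * (pd i u (x + τ • v) - pd i u x)) (C := (S * nrm1 v) * nrm1 v)
    (fun τ _ => by
      have h1 := (hasDerivAt_line hu x v τ).sub
        ((hasDerivAt_id τ).mul_const (∑ i, v i * pd i u x))
      refine (h1.congr_deriv ?_).hasDerivWithinAt
      simp [mul_sub, Finset.sum_sub_distrib])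
    (fun τ hτ => abs_sum_mul_le v _ _ fun i => by
      refine (taylor1 (hu.pd i) (hS.2 i) x (τ • v)).trans ?_
      rw [nrm1_smul, abs_of_nonneg hτ.1]
      have := mul_nonneg hS0 (nrm1_nonneg v)
      nlinarith [hτ.2])
  simp at this
  rw [sq, ← mul_assoc]
  refine le_trans (le_of_eq ?_) this
  congr 1; ring

theorem taylor3 {u : EuclideanSpace ℝ (Fin d) → ℝ} (hu : Sm u) {S : ℝ} (hS : Bd 3 S u)
    (x v : EuclideanSpace ℝ (Fin d)) :
    |u (x + v) - u x - ∑ i, v i * pd i u x - (∑ i, v i * ∑ j, v j * pd j (pd i u) x) / 2|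
      ≤ S * nrm1 v ^ 3 := by
  have hS0 := hS.nonneg
  have := norm_image_sub_le_of_norm_deriv_le_segment_01'
    (f := fun τ : ℝ => u (x + τ • v) - τ * ∑ i, v i * pd i u x
      - τ ^ 2 * ((∑ i, v i * ∑ j, v j * pd j (pd i u) x) / 2))
    (f' := fun τ => ∑ i, v i * (pd i u (x + τ • v) - pd i u x -
      ∑ j, (τ • v) j * pd j (pd i u) x)) (C := (S * nrm1 v ^ 2) * nrm1 v)
    (fun τ _ => by
      have h1 := ((hasDerivAt_line hu x v τ).sub
        ((hasDerivAt_id τ).mul_const (∑ i, v i * pd i u x))).sub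
        (((hasDerivAt_id τ).pow 2).mul_const ((∑ i, v i * ∑ j, v j * pd j (pd i u) x) / 2))
      refine (h1.congr_deriv ?_).hasDerivWithinAt
      have e : ∀ i, ∑ j, (τ • v) j * pd j (pd i u) x = τ * ∑ j, v j * pd j (pd i u) x := by
        intro i; rw [Finset.mul_sum]; refine Finset.sum_congr rfl fun j _ => ?_
        simp [mul_assoc]
      simp only [e, mul_sub, Finset.sum_sub_distrib]
      have e2 : ∑ i, v i * (τ * ∑ j, v j * pd j (pd i u) x) =
        τ * ∑ i, v i * ∑ j, v j * pd j (pd i u) x := by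
        rw [Finset.mul_sum]; refine Finset.sum_congr rfl fun j _ => ?_
        ring
      rw [e2]
      simp
      ring)
    (fun τ hτ => abs_sum_mul_le v _ _ fun i => by
      refine (taylor2 (hu.pd i) (hS.2 i) x (τ • v)).trans ?_
      rw [nrm1_smul, abs_of_nonneg hτ.1]
      have h2 := mul_nonneg hS0 (sq_nonneg (nrm1 v))
      have h3 : τ ^ 2 ≤ 1 := pow_le_one₀ hτ.1 hτ.2.le
      nlinarith)
  simp at this
  rw [pow_succ, ← mul_assoc]
  refine le_trans (le_of_eq ?_) this
  congr 1; ring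

/-- Noise points of the chain. -/
noncomputable def nz (d : ℕ) (η : ℝ) (p : Fin d × Bool) : EuclideanSpace ℝ (Fin d) :=
  ((if p.2 then (1:ℝ) else -1) * (Real.sqrt (2 * d) * η)) • EuclideanSpace.single p.1 1

theorem nrm1_single (i : Fin d) : nrm1 (EuclideanSpace.single i (1:ℝ)) = 1 := by
  simp [nrm1, Pi.single_apply, apply_ite abs]

theorem nrm1_nz {η : ℝ} (h : 0 ≤ η) (p : Fin d × Bool) :
    nrm1 (nz d η p) = Real.sqrt (2 * d) * η := by
  rw [nz, nrm1_smul, nrm1_single, abs_mul, abs_of_nonneg (mul_nonneg (Real.sqrt_nonneg _) h)]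
  split_ifs <;> simp

/-- The quadratic weight controlling errors. -/
noncomputable def Wt (U : EuclideanSpace ℝ (Fin d) → ℝ) (x : EuclideanSpace ℝ (Fin d)) : ℝ :=
  1 + nrm1 (grd U x) ^ 2

set_option maxHeartbeats 1000000 in
theorem Av_taylor (hd : 0 < d) {U u : EuclideanSpace ℝ (Fin d) → ℝ} (hu : Sm u) {S : ℝ}
    (hS : Bd 3 S u) {η : ℝ} (h0 : 0 ≤ η) (h1 : η ≤ 1) (x) :
    |Av (nz d η) (η ^ 2) U u x - u x - η ^ 2 * diffOp U u x| ≤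
      (4 * d ^ 2 + 2 * d + 1) * S * η ^ 3 * Wt U x := by
  have hS0 := hS.nonneg
  set y := Tm (η ^ 2) U x with hy
  set s := Real.sqrt (2 * d) * η with hs
  set G := nrm1 (grd U x) with hG
  have hG0 : 0 ≤ G := nrm1_nonneg _
  have hdr : (1:ℝ) ≤ d := by exact_mod_cast hd
  have hs0 : 0 ≤ s := mul_nonneg (Real.sqrt_nonneg _) h0
  have hsq : s ^ 2 = 2 * d * η ^ 2 := by
    rw [hs, mul_pow, Real.sq_sqrt (by positivity)]
  have hsqrt : Real.sqrt (2 * d) ≤ 2 * d := by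
    rw [Real.sqrt_le_left (by positivity)]; nlinarith
  have hs3 : s ^ 3 ≤ 4 * d ^ 2 * η ^ 3 := by
    have : s ^ 3 = 2 * d * η ^ 3 * Real.sqrt (2 * d) := by
      calc s ^ 3 = s ^ 2 * s := by ring
        _ = _ := by rw [hsq, hs]; ring
    rw [this]
    have : 0 ≤ 2 * d * η ^ 3 := by positivity
    nlinarith
  -- noise part
  have hA : |Av (nz d η) (η ^ 2) U u x - u y - η ^ 2 * lap u y| ≤ S * s ^ 3 := by
    have hp : ∀ i : Fin d, |u (y + nz d η (i, true)) + u (y + nz d η (i, false)) - 2 * u y -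
        s ^ 2 * pd i (pd i u) y| ≤ 2 * (S * s ^ 3) := by
      intro i
      have a1 := taylor3 hu hS y (nz d η (i, true))
      have a2 := taylor3 hu hS y (nz d η (i, false))
      rw [nrm1_nz h0] at a1 a2
      have e : ∀ b : Bool, ∀ w : Fin d → ℝ, ∑ j, (nz d η (i, b)) j * w j =
          (if b then (1:ℝ) else -1) * s * w i := by
        intro b w
        unfold nz
        rw [← hs]
        generalize (if b then (1:ℝ) else -1) * s = c
        simp
      rw [← hs] at a1 a2
      simp only [e] at a1 a2
      simp only [if_true, Bool.false_eq_true, if_false] at a1 a2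
      rw [abs_le] at a1 a2 ⊢
      constructor <;> nlinarith [a1.1, a1.2, a2.1, a2.2]
    have hsum : Av (nz d η) (η ^ 2) U u x - u y - η ^ 2 * lap u y = (2 * d : ℝ)⁻¹ *
        ∑ i : Fin d, (u (y + nz d η (i, true)) + u (y + nz d η (i, false)) - 2 * u y -
        s ^ 2 * pd i (pd i u) y) := by
      simp only [Finset.sum_sub_distrib, Finset.sum_const, ← Finset.mul_sum, Av, lap,
        Finset.card_univ, Fintype.card_fin, nsmul_eq_mul, Fintype.card_prod, Fintype.card_bool,
        Fintype.sum_prod_type, Fintype.sum_bool, ← hy, hsq]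
      have : (d : ℝ) ≠ 0 := by positivity
      push_cast
      field_simp
    rw [hsum, abs_mul, abs_of_nonneg (by positivity : (0:ℝ) ≤ (2 * d : ℝ)⁻¹)]
    have : |∑ i : Fin d, (u (y + nz d η (i, true)) + u (y + nz d η (i, false)) - 2 * u y -
        s ^ 2 * pd i (pd i u) y)| ≤ 2 * d * (S * s ^ 3) := by
      refine (Finset.abs_sum_le_sum_abs _ _).trans ((Finset.sum_le_sum fun i _ => hp i).trans ?_)
      simp; apply le_of_eq; ring
    refine (mul_le_mul_of_nonneg_left this (by positivity)).trans (le_of_eq ?_)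
    have : (d : ℝ) ≠ 0 := by positivity
    field_simp
  -- drift part
  have hyx : y = x + (-η ^ 2) • grd U x := by rw [hy, Tm, neg_smul, sub_eq_add_neg]
  have hnv : nrm1 ((-η ^ 2) • grd U x) = η ^ 2 * G := by
    rw [nrm1_smul, abs_neg, abs_of_nonneg (sq_nonneg η)]
  have hB : |u y - u x + η ^ 2 * ∑ i, pd i U x * pd i u x| ≤ S * (η ^ 2 * G) ^ 2 := by
    have := taylor2 hu (hS.of_le (by norm_num)) x ((-η ^ 2) • grd U x)
    rw [hnv, ← hyx] at this
    have e : ∑ i, ((-η ^ 2) • grd U x) i * pd i u x = - (η ^ 2 * ∑ i, pd i U x * pd i u x) := by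
      rw [Finset.mul_sum, ← Finset.sum_neg_distrib]
      refine Finset.sum_congr rfl fun i _ => ?_
      simp [grd]; ring
    rw [e, sub_neg_eq_add] at this
    exact this
  have hC : |lap u y - lap u x| ≤ d * (S * (η ^ 2 * G)) := by
    have : ∀ i : Fin d, |pd i (pd i u) y - pd i (pd i u) x| ≤ S * (η ^ 2 * G) := by
      intro i
      have := taylor1 ((hu.pd i).pd i) ((hS.2 i).2 i) x ((-η ^ 2) • grd U x)
      rwa [hnv, ← hyx] at this
    unfold lap
    rw [← Finset.sum_sub_distrib]
    refine (Finset.abs_sum_le_sum_abs _ _).trans ((Finset.sum_le_sum fun i _ => this i).trans ?_)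
    simp
  have hL : Av (nz d η) (η ^ 2) U u x - u x - η ^ 2 * diffOp U u x =
      (Av (nz d η) (η ^ 2) U u x - u y - η ^ 2 * lap u y) +
      (u y - u x + η ^ 2 * ∑ i, pd i U x * pd i u x) + η ^ 2 * (lap u y - lap u x) := by
    unfold diffOp; ring
  rw [hL]
  refine (abs_add_le _ _).trans ((add_le_add (abs_add_le _ _) le_rfl).trans ?_)
  rw [abs_mul, abs_of_nonneg (sq_nonneg η)]
  have hη2 : 0 ≤ η ^ 2 := sq_nonneg η
  have b1 : S * s ^ 3 ≤ S * (4 * d ^ 2 * η ^ 3) := mul_le_mul_of_nonneg_left hs3 hS0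
  have hη43 : η ^ 4 ≤ η ^ 3 := pow_le_pow_of_le_one h0 h1 (by norm_num)
  have hη3 : 0 ≤ η ^ 3 := by positivity
  have b2 : S * (η ^ 2 * G) ^ 2 ≤ S * η ^ 3 * G ^ 2 := by
    have : S * (η ^ 2 * G) ^ 2 = S * G ^ 2 * η ^ 4 := by ring
    rw [this]
    have := mul_le_mul_of_nonneg_left hη43 (by positivity : 0 ≤ S * G ^ 2)
    nlinarith
  have b3 : η ^ 2 * |lap u y - lap u x| ≤ d * S * η ^ 3 * (2 * (1 + G ^ 2)) := by
    have c1 := mul_le_mul_of_nonneg_left hC hη2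
    have c2 : η ^ 2 * (d * (S * (η ^ 2 * G))) = d * S * G * η ^ 4 := by ring
    have c3 := mul_le_mul_of_nonneg_left hη43 (by positivity : 0 ≤ d * S * G)
    have c4 : G ≤ 2 * (1 + G ^ 2) := by nlinarith [sq_nonneg (G - 1)]
    have c5 := mul_le_mul_of_nonneg_left c4 (by positivity : 0 ≤ d * S * η ^ 3)
    nlinarith
  have b4 : 0 ≤ S * η ^ 3 := by positivity
  have b5 : 0 ≤ S * η ^ 3 * G ^ 2 * d ^ 2 := by positivity
  unfold Wt
  rw [← hG]
  nlinarith

theorem Av_taylor0 (hd : 0 < d) {U u : EuclideanSpace ℝ (Fin d) → ℝ} (hu : Sm u) {S : ℝ}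
    (hS : Bd 1 S u) {η : ℝ} (h0 : 0 ≤ η) (h1 : η ≤ 1) (x) :
    |Av (nz d η) (η ^ 2) U u x - u x| ≤ (2 * d + 1) * S * η * Wt U x := by
  have hS0 := hS.nonneg
  set y := Tm (η ^ 2) U x with hy
  set G := nrm1 (grd U x) with hG
  have hG0 : 0 ≤ G := nrm1_nonneg _
  have hdr : (1:ℝ) ≤ d := by exact_mod_cast hd
  have hsqrt : Real.sqrt (2 * d) ≤ 2 * d := by
    rw [Real.sqrt_le_left (by positivity)]; nlinarith
  have hyx : ∀ p, Tm (η ^ 2) U x + nz d η p = x + ((-η ^ 2) • grd U x + nz d η p) := by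
    intro p; rw [Tm, neg_smul]; abel
  have hp : ∀ p, |u (Tm (η ^ 2) U x + nz d η p) - u x| ≤ (2 * d + 1) * S * η * Wt U x := by
    intro p
    rw [hyx p]
    refine (taylor1 hu hS x _).trans ?_
    have htri : nrm1 ((-η ^ 2) • grd U x + nz d η p) ≤ η ^ 2 * G + Real.sqrt (2 * d) * η := by
      rw [← nrm1_nz h0 p]
      have : nrm1 ((-η ^ 2) • grd U x) = η ^ 2 * G := by
        rw [nrm1_smul, abs_neg, abs_of_nonneg (sq_nonneg η)]
      rw [← this, nrm1, nrm1, nrm1, ← Finset.sum_add_distrib]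
      exact Finset.sum_le_sum fun i _ => abs_add_le _ _
    refine (mul_le_mul_of_nonneg_left htri hS0).trans ?_
    have c4 : η ^ 2 * G ≤ η * (1 + G ^ 2) := by
      have : G ≤ 1 + G ^ 2 := by nlinarith [sq_nonneg (G - 1)]
      have h2 : η ^ 2 ≤ η := by nlinarith
      calc η ^ 2 * G ≤ η * G := mul_le_mul_of_nonneg_right h2 hG0
        _ ≤ _ := mul_le_mul_of_nonneg_left this h0
    have c5 : Real.sqrt (2 * d) * η ≤ 2 * d * η * (1 + G ^ 2) := by
      have := mul_le_mul_of_nonneg_right hsqrt h0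
      have h3 : 0 ≤ 2 * d * η * G ^ 2 := by positivity
      nlinarith
    have := mul_le_mul_of_nonneg_left (add_le_add c4 c5) hS0
    refine this.trans (le_of_eq ?_)
    unfold Wt; rw [← hG]; ring
  have : Nonempty (Fin d × Bool) := ⟨(⟨0, hd⟩, true)⟩
  have hN : (0:ℝ) < Fintype.card (Fin d × Bool) := by exact_mod_cast Fintype.card_pos
  have : Av (nz d η) (η ^ 2) U u x - u x = (Fintype.card (Fin d × Bool) : ℝ)⁻¹ *
      ∑ p, (u (Tm (η ^ 2) U x + nz d η p) - u x) := by
    rw [Finset.sum_sub_distrib, mul_sub]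
    congr 1
    simp
    have : (d:ℝ) ≠ 0 := by positivity
    field_simp
  rw [this, abs_mul, abs_of_pos (inv_pos.2 hN), inv_mul_le_iff₀ hN]
  refine (Finset.abs_sum_le_sum_abs _ _).trans ((Finset.sum_le_sum fun p _ => hp p).trans ?_)
  rw [Finset.sum_const, nsmul_eq_mul, Finset.card_univ]

end taylor


section ibp
variable {d : ℕ}

/-- Well-behaved potentials. -/
structure Nice (U : EuclideanSpace ℝ (Fin d) → ℝ) : Prop where
  sm : Sm U
  bd : ∀ k, ∃ S, ∀ i j, Bd k S (pd i (pd j U))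
  int : Integrable (fun x => Wt U x * Real.exp (-U x))

/-- Integral against the weight `exp (-U)`. -/
noncomputable def II (U ψ : EuclideanSpace ℝ (Fin d) → ℝ) : ℝ := ∫ x, ψ x * Real.exp (-U x)

theorem Wt_ge_one (U : EuclideanSpace ℝ (Fin d) → ℝ) (x) : 1 ≤ Wt U x := by
  unfold Wt; nlinarith [sq_nonneg (nrm1 (grd U x))]

/-- Functions dominated by the weight. -/
structure Dom (U ψ : EuclideanSpace ℝ (Fin d) → ℝ) (C : ℝ) : Prop where
  meas : Measurable ψ
  le : ∀ x, |ψ x| ≤ C * Wt U x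

theorem Dom.nonneg {U ψ : EuclideanSpace ℝ (Fin d) → ℝ} {C : ℝ} (h : Dom U ψ C) : 0 ≤ C := by
  have h1 := (abs_nonneg _).trans (h.le 0)
  have h2 := Wt_ge_one U 0
  by_contra h3
  push Not at h3
  nlinarith

theorem Dom.integrable {U ψ : EuclideanSpace ℝ (Fin d) → ℝ} {C : ℝ} (hU : Nice U)
    (h : Dom U ψ C) : Integrable (fun x => ψ x * Real.exp (-U x)) := by
  refine Integrable.mono' (hU.int.const_mul C) ?_ ?_
  · exact (h.meas.mul (Real.measurable_exp.comp hU.sm.cont.measurable.neg)).aestronglyMeasurable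
  · refine Filter.Eventually.of_forall fun x => ?_
    rw [Real.norm_eq_abs, abs_mul, abs_of_pos (Real.exp_pos _), ← mul_assoc]
    exact mul_le_mul_of_nonneg_right (h.le x) (Real.exp_pos _).le

theorem Dom.of_bdd {U ψ : EuclideanSpace ℝ (Fin d) → ℝ} {C : ℝ} (hm : Measurable ψ)
    (h : ∀ x, |ψ x| ≤ C) : Dom U ψ C := by
  refine ⟨hm, fun x => (h x).trans ?_⟩
  have h1 := (abs_nonneg _).trans (h x)
  exact le_mul_of_one_le_right h1 (Wt_ge_one U x)

theorem Dom.add {U ψ φ : EuclideanSpace ℝ (Fin d) → ℝ} {C D : ℝ} (h : Dom U ψ C) (h' : Dom U φ D) :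
    Dom U (fun x => ψ x + φ x) (C + D) :=
  ⟨h.meas.add h'.meas, fun x => by
    rw [add_mul]; exact (abs_add_le _ _).trans (add_le_add (h.le x) (h'.le x))⟩

theorem Dom.bmul {U ψ φ : EuclideanSpace ℝ (Fin d) → ℝ} {C D : ℝ} (hm : Measurable ψ)
    (hb : ∀ x, |ψ x| ≤ D) (h : Dom U φ C) : Dom U (fun x => ψ x * φ x) (D * C) :=
  ⟨hm.mul h.meas, fun x => by
    rw [abs_mul, mul_assoc]
    exact mul_le_mul (hb x) (h.le x) (abs_nonneg _) ((abs_nonneg _).trans (hb x))⟩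

theorem Dom.neg {U ψ : EuclideanSpace ℝ (Fin d) → ℝ} {C : ℝ} (h : Dom U ψ C) :
    Dom U (fun x => - ψ x) C := ⟨h.meas.neg, fun x => by rw [abs_neg]; exact h.le x⟩

theorem Dom.sub {U ψ φ : EuclideanSpace ℝ (Fin d) → ℝ} {C D : ℝ} (h : Dom U ψ C) (h' : Dom U φ D) :
    Dom U (fun x => ψ x - φ x) (C + D) := by
  simpa [sub_eq_add_neg] using h.add h'.neg

theorem Dom.sum {U : EuclideanSpace ℝ (Fin d) → ℝ} {ι : Type*} {s : Finset ι}
    {ψ : ι → EuclideanSpace ℝ (Fin d) → ℝ} {C : ι → ℝ}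
    (h : ∀ i ∈ s, Dom U (ψ i) (C i)) : Dom U (fun x => ∑ i ∈ s, ψ i x) (∑ i ∈ s, C i) := by
  refine ⟨Finset.measurable_sum _ fun i hi => (h i hi).meas, fun x => ?_⟩
  rw [Finset.sum_mul]
  exact (Finset.abs_sum_le_sum_abs _ _).trans (Finset.sum_le_sum fun i hi => (h i hi).le x)

theorem II_add {U ψ φ : EuclideanSpace ℝ (Fin d) → ℝ} {C D : ℝ} (hU : Nice U)
    (h : Dom U ψ C) (h' : Dom U φ D) : II U (fun x => ψ x + φ x) = II U ψ + II U φ := by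
  unfold II
  rw [← integral_add (h.integrable hU) (h'.integrable hU)]
  simp only [add_mul]

theorem II_neg {U ψ : EuclideanSpace ℝ (Fin d) → ℝ} : II U (fun x => - ψ x) = - II U ψ := by
  unfold II
  rw [← integral_neg]
  simp only [neg_mul]

theorem II_sub {U ψ φ : EuclideanSpace ℝ (Fin d) → ℝ} {C D : ℝ} (hU : Nice U)
    (h : Dom U ψ C) (h' : Dom U φ D) : II U (fun x => ψ x - φ x) = II U ψ - II U φ := by
  unfold II
  rw [← integral_sub (h.integrable hU) (h'.integrable hU)]
  simp only [sub_mul]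

theorem II_const_mul {U ψ : EuclideanSpace ℝ (Fin d) → ℝ} (c : ℝ) :
    II U (fun x => c * ψ x) = c * II U ψ := by
  unfold II
  rw [← integral_const_mul]
  simp only [mul_assoc]

theorem II_mono {U ψ φ : EuclideanSpace ℝ (Fin d) → ℝ} {C D : ℝ} (hU : Nice U)
    (h : Dom U ψ C) (h' : Dom U φ D) (hle : ∀ x, ψ x ≤ φ x) : II U ψ ≤ II U φ :=
  integral_mono (h.integrable hU) (h'.integrable hU)
    fun x => mul_le_mul_of_nonneg_right (hle x) (Real.exp_pos _).le

theorem II_abs_le {U ψ : EuclideanSpace ℝ (Fin d) → ℝ} {C : ℝ} (hU : Nice U)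
    (h : Dom U ψ C) : |II U ψ| ≤ C * II U (Wt U) := by
  unfold II
  rw [← Real.norm_eq_abs, ← integral_const_mul]
  refine norm_integral_le_of_norm_le (hU.int.const_mul C) (Filter.Eventually.of_forall fun x => ?_)
  rw [Real.norm_eq_abs, abs_mul, abs_of_pos (Real.exp_pos _), ← mul_assoc]
  exact mul_le_mul_of_nonneg_right (h.le x) (Real.exp_pos _).le

theorem II_Wt_nonneg {U : EuclideanSpace ℝ (Fin d) → ℝ} : 0 ≤ II U (Wt U) :=
  integral_nonneg fun x => mul_nonneg (zero_le_one.trans (Wt_ge_one U x)) (Real.exp_pos _).le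

theorem II_nonneg {U ψ : EuclideanSpace ℝ (Fin d) → ℝ} (h : ∀ x, 0 ≤ ψ x) : 0 ≤ II U ψ :=
  integral_nonneg fun x => mul_nonneg (h x) (Real.exp_pos _).le

theorem abs_pd_le_Wt (U : EuclideanSpace ℝ (Fin d) → ℝ) (i : Fin d) (x) : |pd i U x| ≤ Wt U x := by
  have : |pd i U x| ≤ nrm1 (grd U x) :=
    Finset.single_le_sum (f := fun i => |(grd U x) i|) (fun j _ => abs_nonneg _) (Finset.mem_univ i)
  unfold Wt
  nlinarith [sq_nonneg (nrm1 (grd U x) - 1)]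

theorem Dom.pd_mul {U u : EuclideanSpace ℝ (Fin d) → ℝ} (hU : Sm U) (hu : Measurable u) {S : ℝ}
    (hb : ∀ x, |u x| ≤ S) (i : Fin d) : Dom U (fun x => u x * pd i U x) S := by
  have : Dom U (pd i U) 1 := ⟨(hU.pd i).cont.measurable, fun x => by
    rw [one_mul]; exact abs_pd_le_Wt U i x⟩
  simpa using Dom.bmul hu hb this

theorem Dom.diffOp {U u : EuclideanSpace ℝ (Fin d) → ℝ} (hU : Sm U) (hu : Sm u) {S : ℝ}
    (hb : Bd 2 S u) : Dom U (diffOp U u) (d * S + d * S) := by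
  have h1 : Dom U (lap u) (d * S) := by
    have := Dom.sum (U := U) (s := Finset.univ) (ψ := fun i => pd i (pd i u)) (C := fun _ => S)
      (fun i _ => Dom.of_bdd ((hu.pd i).pd i).cont.measurable (fun x => (hb.2 i).2 i x))
    simp only [Finset.sum_const, Finset.card_univ, Fintype.card_fin, nsmul_eq_mul] at this
    exact this
  have h2 : Dom U (fun x => ∑ i, pd i U x * pd i u x) (d * S) := by
    have := Dom.sum (U := U) (s := Finset.univ) (ψ := fun i x => pd i u x * pd i U x)
      (C := fun _ => S)
      (fun i _ => Dom.pd_mul hU (hu.pd i).cont.measurable (fun x => (hb.2 i).zero x) i)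
    simpa [mul_comm] using this
  exact h1.sub h2

/-- Integration by parts. -/
theorem II_ibp {U ψ u : EuclideanSpace ℝ (Fin d) → ℝ} (hU : Nice U) (hψ : Sm ψ) (hu : Sm u)
    {S T : ℝ} (hbψ : Bd 1 T ψ) (hbu : Bd 2 S u) :
    II U (fun x => ψ x * diffOp U u x) = - II U (fun x => ∑ i, pd i ψ x * pd i u x) := by
  have mψ := hψ.cont.measurable
  have mpψ : ∀ i, Measurable (pd i ψ) := fun i => (hψ.pd i).cont.measurable
  have mpu : ∀ i, Measurable (pd i u) := fun i => (hu.pd i).cont.measurable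
  have mppu : ∀ i, Measurable (pd i (pd i u)) := fun i => ((hu.pd i).pd i).cont.measurable
  have d1 : ∀ i, Dom U (fun x => ψ x * pd i (pd i u) x) (T * S) := fun i =>
    Dom.bmul mψ hbψ.1 (Dom.of_bdd (mppu i) fun x => (hbu.2 i).2 i x)
  have d2 : ∀ i, Dom U (fun x => ψ x * (pd i u x * pd i U x)) (T * S) := fun i =>
    Dom.bmul mψ hbψ.1 (Dom.pd_mul hU.sm (mpu i) (fun x => (hbu.2 i).zero x) i)
  have d3 : ∀ i, Dom U (fun x => pd i ψ x * pd i u x) (T * S) := fun i =>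
    Dom.bmul (mpψ i) (hbψ.2 i) (Dom.of_bdd (mpu i) fun x => (hbu.2 i).zero x)
  have key : ∀ i, II U (fun x => ψ x * pd i (pd i u) x) - II U (fun x => ψ x * (pd i u x * pd i U x))
      = - II U (fun x => pd i ψ x * pd i u x) := by
    intro i
    have hE : Sm (fun x => Real.exp (-U x)) := Real.contDiff_exp.comp hU.sm.neg
    have hw : Sm (fun x => ψ x * Real.exp (-U x)) := hψ.mul hE
    have hpw : pd i (fun x => ψ x * Real.exp (-U x)) = fun x =>
        pd i ψ x * Real.exp (-U x) + ψ x * (-(pd i U x * Real.exp (-U x))) := by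
      rw [pd_mul hψ hE, pd_exp_neg hU.sm]
    have e1 : ∀ x, pd i (fun x => ψ x * Real.exp (-U x)) x * pd i u x =
        (pd i ψ x * pd i u x) * Real.exp (-U x) - (ψ x * (pd i u x * pd i U x)) * Real.exp (-U x) := by
      intro x; rw [hpw]; ring
    have := integral_mul_fderiv_eq_neg_fderiv_mul_of_integrable (μ := volume)
      (f := fun x => ψ x * Real.exp (-U x)) (g := pd i u) (v := EuclideanSpace.single i (1:ℝ))
      (by
        change Integrable (fun x => pd i (fun x => ψ x * Real.exp (-U x)) x * pd i u x)
        simp only [e1]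
        exact ((d3 i).integrable hU).sub ((d2 i).integrable hU))
      (by
        change Integrable (fun x => ψ x * Real.exp (-U x) * pd i (pd i u) x)
        refine ((d1 i).integrable hU).congr (Filter.Eventually.of_forall fun x => ?_)
        ring)
      (by
        have : Dom U (fun x => ψ x * pd i u x) (T * S) :=
          Dom.bmul mψ hbψ.1 (Dom.of_bdd (mpu i) fun x => (hbu.2 i).zero x)
        refine (this.integrable hU).congr (Filter.Eventually.of_forall fun x => ?_)
        ring)
      (fun x _ => hw.diff x) (fun x _ => (hu.pd i).diff x)
    change ∫ x, ψ x * Real.exp (-U x) * pd i (pd i u) x =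
      - ∫ x, pd i (fun x => ψ x * Real.exp (-U x)) x * pd i u x at this
    simp only [e1] at this
    rw [integral_sub ((d3 i).integrable hU) ((d2 i).integrable hU)] at this
    have e2 : II U (fun x => ψ x * pd i (pd i u) x) =
        ∫ x, ψ x * Real.exp (-U x) * pd i (pd i u) x := by
      unfold II; congr 1; funext x; ring
    rw [e2, this]; unfold II; ring
  have hsum : ∀ ψ : Fin d → EuclideanSpace ℝ (Fin d) → ℝ, ∀ C, (∀ i, Dom U (ψ i) C) →
      II U (fun x => ∑ i, ψ i x) = ∑ i, II U (ψ i) := by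
    intro ψ C h
    unfold II
    rw [← integral_finsetSum _ fun i _ => (h i).integrable hU]
    simp only [Finset.sum_mul]
  have e3 : (fun x => ψ x * diffOp U u x) = fun x => (∑ i, ψ x * pd i (pd i u) x) -
      ∑ i, ψ x * (pd i u x * pd i U x) := by
    funext x
    unfold diffOp lap
    rw [mul_sub, Finset.mul_sum, Finset.mul_sum]
    congr 1
    exact Finset.sum_congr rfl fun i _ => by ring
  rw [e3, II_sub hU (Dom.sum fun i _ => d1 i) (Dom.sum fun i _ => d2 i), hsum _ _ d1, hsum _ _ d2,
    hsum _ _ d3, ← Finset.sum_sub_distrib, ← Finset.sum_neg_distrib]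
  exact Finset.sum_congr rfl fun i _ => key i

theorem II_symm {U ψ u : EuclideanSpace ℝ (Fin d) → ℝ} (hU : Nice U) (hψ : Sm ψ) (hu : Sm u)
    {S T : ℝ} (hbψ : Bd 2 T ψ) (hbu : Bd 2 S u) :
    II U (fun x => ψ x * diffOp U u x) = II U (fun x => u x * diffOp U ψ x) := by
  rw [II_ibp hU hψ hu (hbψ.of_le (by norm_num)) hbu, II_ibp hU hu hψ (hbu.of_le (by norm_num)) hbψ]
  congr 2
  funext x
  exact Finset.sum_congr rfl fun i _ => by ring

theorem II_diffOp {U u : EuclideanSpace ℝ (Fin d) → ℝ} (hU : Nice U) (hu : Sm u)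
    {S : ℝ} (hbu : Bd 2 S u) : II U (diffOp U u) = 0 := by
  have := II_ibp hU (Sm.const 1) hu (Bd.const (k := 1) (S := 1) (c := 1) (by simp)) hbu
  simpa [pd_const, II] using this

end ibp


section steps
variable {d : ℕ}

/-- Dimensional constant. -/
noncomputable def cdim (d : ℕ) : ℝ := 4 * d ^ 2 + 2 * d + 1

theorem cdim_nonneg (d : ℕ) : 0 ≤ cdim d := by unfold cdim; positivity

theorem stepA (hd : 0 < d) {U u ψ : EuclideanSpace ℝ (Fin d) → ℝ} (hU : Nice U) (hu : Sm u) {S T : ℝ}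
    (hS : Bd 3 S u) (hψ : Measurable ψ) (hT : ∀ x, |ψ x| ≤ T) {η : ℝ} (h0 : 0 ≤ η) (h1 : η ≤ 1) :
    |II U (fun x => ψ x * Av (nz d η) (η ^ 2) U u x) - II U (fun x => ψ x * u x)
      - η ^ 2 * II U (fun x => ψ x * diffOp U u x)| ≤ T * (cdim d * S * η ^ 3) * II U (Wt U) := by
  have : Nonempty (Fin d × Bool) := ⟨(⟨0, hd⟩, true)⟩
  have mA := (Av_smooth hU.sm hu (η ^ 2) (nz d η)).cont.measurable
  have d1 : Dom U (fun x => ψ x * Av (nz d η) (η ^ 2) U u x) (T * S) :=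
    Dom.bmul hψ hT (Dom.of_bdd mA fun x => Av_abs_le _ _ (fun x => hS.zero x) x)
  have d2 : Dom U (fun x => ψ x * u x) (T * S) :=
    Dom.bmul hψ hT (Dom.of_bdd hu.cont.measurable fun x => hS.zero x)
  have dL := Dom.diffOp hU.sm hu (hS.of_le (by norm_num : 2 ≤ 3))
  have d3 : Dom U (fun x => η ^ 2 * (ψ x * diffOp U u x)) _ :=
    Dom.bmul measurable_const (fun x => le_rfl) (Dom.bmul hψ hT dL)
  have hr : Dom U (fun x => ψ x * (Av (nz d η) (η ^ 2) U u x - u x - η ^ 2 * diffOp U u x))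
      (T * (cdim d * S * η ^ 3)) := by
    refine Dom.bmul hψ hT ⟨?_, fun x => Av_taylor hd hu hS h0 h1 x⟩
    exact (mA.sub hu.cont.measurable).sub (dL.meas.const_mul _)
  rw [← II_const_mul, ← II_sub hU d1 d2, ← II_sub hU (d1.sub d2) d3]
  refine le_trans (le_of_eq ?_) (II_abs_le hU hr)
  congr 2; funext x; ring

theorem stepB (hd : 0 < d) {U u ψ : EuclideanSpace ℝ (Fin d) → ℝ} (hU : Nice U) (hu : Sm u) {S T : ℝ}
    (hS : Bd 1 S u) (hψ : Measurable ψ) (hT : ∀ x, |ψ x| ≤ T) {η : ℝ} (h0 : 0 ≤ η) (h1 : η ≤ 1) :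
    |II U (fun x => ψ x * Av (nz d η) (η ^ 2) U u x) - II U (fun x => ψ x * u x)|
      ≤ T * (cdim d * S * η) * II U (Wt U) := by
  have : Nonempty (Fin d × Bool) := ⟨(⟨0, hd⟩, true)⟩
  have mA := (Av_smooth hU.sm hu (η ^ 2) (nz d η)).cont.measurable
  have d1 : Dom U (fun x => ψ x * Av (nz d η) (η ^ 2) U u x) (T * S) :=
    Dom.bmul hψ hT (Dom.of_bdd mA fun x => Av_abs_le _ _ (fun x => hS.zero x) x)
  have d2 : Dom U (fun x => ψ x * u x) (T * S) :=
    Dom.bmul hψ hT (Dom.of_bdd hu.cont.measurable fun x => hS.zero x)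
  have hr : Dom U (fun x => ψ x * (Av (nz d η) (η ^ 2) U u x - u x))
      (T * (cdim d * S * η)) := by
    refine Dom.bmul hψ hT ⟨mA.sub hu.cont.measurable, fun x => ?_⟩
    refine (Av_taylor0 hd hu hS h0 h1 x).trans ?_
    have := hS.nonneg
    have h3 := Wt_ge_one U x
    unfold cdim
    have h4 : 0 ≤ 4 * (d:ℝ) ^ 2 * (S * η * Wt U x) := by positivity
    nlinarith
  rw [← II_sub hU d1 d2]
  refine le_trans (le_of_eq ?_) (II_abs_le hU hr)
  congr 2; funext x; ring

/-- Relative entropy density. -/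
noncomputable def Fe (m s : ℝ) : ℝ := s * Real.log s - s * Real.log m - s + m

theorem Fe_convex {m a b : ℝ} (ha : 0 < a) (hb : 0 < b) :
    Fe m a ≤ Fe m b + (Real.log a - Real.log m) * (a - b) := by
  have h := Real.log_le_sub_one_of_pos (div_pos ha hb)
  rw [Real.log_div ha.ne' hb.ne'] at h
  have h2 := mul_le_mul_of_nonneg_left h hb.le
  rw [mul_sub, mul_sub, mul_div_cancel₀ _ hb.ne'] at h2
  unfold Fe
  nlinarith

theorem Fe_le {m s : ℝ} (hm : 0 < m) (hs : 0 < s) : Fe m s ≤ (s - m) ^ 2 / m := by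
  have h := Real.log_le_sub_one_of_pos (div_pos hs hm)
  rw [Real.log_div hs.ne' hm.ne'] at h
  have h2 := mul_le_mul_of_nonneg_left h hs.le
  unfold Fe
  have e : (s - m) ^ 2 / m = s * (s / m - 1) - s + m := by field_simp; ring
  rw [e]
  nlinarith

theorem log_abs_le {ε M s : ℝ} (hε : 0 < ε) (h1 : ε ≤ s) (h2 : s ≤ M) :
    |Real.log s| ≤ |Real.log ε| + |Real.log M| := by
  have a1 := Real.log_le_log hε h1
  have a2 := Real.log_le_log (hε.trans_le h1) h2
  rw [abs_le]
  constructor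
  · linarith [neg_abs_le (Real.log ε), abs_nonneg (Real.log M)]
  · linarith [le_abs_self (Real.log M), abs_nonneg (Real.log ε)]

theorem Dom_Fe {U u : EuclideanSpace ℝ (Fin d) → ℝ} (hu : Measurable u) {ε M : ℝ} (m : ℝ)
    (hε : 0 < ε) (h1 : ∀ x, ε ≤ u x) (h2 : ∀ x, u x ≤ M) :
    ∃ C, Dom U (fun x => Fe m (u x)) C := by
  have hM : ∀ x, |u x| ≤ M := fun x => by
    rw [abs_of_pos (hε.trans_le (h1 x))]; exact h2 x
  have b0 : Dom U u M := Dom.of_bdd hu hM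
  have b1 : Dom U (fun x => u x * Real.log (u x)) (M * (|Real.log ε| + |Real.log M|)) :=
    Dom.bmul hu hM (Dom.of_bdd (Real.measurable_log.comp hu) fun x => log_abs_le hε (h1 x) (h2 x))
  have b2 : Dom U (fun x => u x * Real.log m) (M * |Real.log m|) :=
    Dom.bmul hu hM (Dom.of_bdd measurable_const fun x => le_rfl)
  have b3 : Dom U (fun _ => m) |m| := Dom.of_bdd measurable_const fun x => le_rfl
  exact ⟨_, ((b1.sub b2).sub b0).add b3⟩

theorem stepE1 (hd : 0 < d) {U u : EuclideanSpace ℝ (Fin d) → ℝ} (hU : Nice U) (hu : Sm u)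
    {S ε M m : ℝ} (hε : 0 < ε) (hu1 : ∀ x, ε ≤ u x) (hu2 : ∀ x, u x ≤ M)
    (hS : Bd 3 S u) {η : ℝ} (h0 : 0 ≤ η) (h1 : η ≤ 1) :
    II U (fun x => Fe m (u x)) ≤ II U (fun x => Fe m (Av (nz d η) (η ^ 2) U u x)) +
      η ^ 2 * II U (fi u) +
      (|Real.log ε| + |Real.log M| + |Real.log m|) * (cdim d * S * η ^ 3) * II U (Wt U) := by
  have : Nonempty (Fin d × Bool) := ⟨(⟨0, hd⟩, true)⟩
  have hS0 := hS.nonneg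
  have hpos : ∀ x, 0 < u x := fun x => hε.trans_le (hu1 x)
  have sA := Av_smooth hU.sm hu (η ^ 2) (nz d η)
  have mA := sA.cont.measurable
  have hA1 : ∀ x, ε ≤ Av (nz d η) (η ^ 2) U u x := fun x => by
    rw [← Av_const (V := U) (η ^ 2) (nz d η) ε x]; exact Av_mono _ _ hu1 x
  have hA2 : ∀ x, Av (nz d η) (η ^ 2) U u x ≤ M := fun x => by
    conv_rhs => rw [← Av_const (V := U) (η ^ 2) (nz d η) M x]
    exact Av_mono _ _ hu2 x
  have sψ : Sm (fun x => Real.log (u x) - Real.log m) :=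
    Sm.sub (ContDiff.log hu fun x => (hpos x).ne') (Sm.const _)
  have pψ : ∀ i, pd i (fun x => Real.log (u x) - Real.log m) = fun x => pd i u x * (u x)⁻¹ := by
    intro i
    rw [pd_sub (ContDiff.log hu fun x => (hpos x).ne') (Sm.const _), pd_const,
      pd_log hu fun x => (hpos x).ne']
    simp
  set T := |Real.log ε| + |Real.log M| + |Real.log m| with hTdef
  have bψ : ∀ x, |Real.log (u x) - Real.log m| ≤ T := fun x => by
    have := log_abs_le hε (hu1 x) (hu2 x)
    refine (abs_sub _ _).trans ?_
    linarith
  have hT0 : 0 ≤ T := (abs_nonneg _).trans (bψ 0)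
  have Bψ : Bd 1 (T + S * ε⁻¹) (fun x => Real.log (u x) - Real.log m) := by
    have hSe : 0 ≤ S * ε⁻¹ := mul_nonneg hS0 (inv_pos.2 hε).le
    refine ⟨fun x => (bψ x).trans (by linarith), fun i x => ?_⟩
    rw [pψ, abs_mul, abs_of_pos (inv_pos.2 (hpos x))]
    have : |pd i u x| * (u x)⁻¹ ≤ S * ε⁻¹ :=
      mul_le_mul ((hS.2 i).zero x) (inv_anti₀ hε (hu1 x)) (inv_pos.2 (hpos x)).le hS0
    linarith
  have hA := stepA hd hU hu hS sψ.cont.measurable bψ h0 h1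
  rw [II_ibp hU sψ hu Bψ (hS.of_le (by norm_num))] at hA
  have hfi : (fun x => ∑ i, pd i (fun x => Real.log (u x) - Real.log m) x * pd i u x) = fi u := by
    funext x
    simp only [pψ, fi, Finset.sum_mul]
    exact Finset.sum_congr rfl fun i _ => by ring
  rw [hfi] at hA
  obtain ⟨C1, D1⟩ := Dom_Fe (U := U) hu.cont.measurable m hε hu1 hu2
  obtain ⟨C2, D2⟩ := Dom_Fe (U := U) mA m hε hA1 hA2
  have D3 : Dom U (fun x => (Real.log (u x) - Real.log m) * u x) (T * S) :=
    Dom.bmul sψ.cont.measurable bψ (Dom.of_bdd hu.cont.measurable fun x => hS.zero x)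
  have D4 : Dom U (fun x => (Real.log (u x) - Real.log m) * Av (nz d η) (η ^ 2) U u x) (T * S) :=
    Dom.bmul sψ.cont.measurable bψ
      (Dom.of_bdd mA fun x => Av_abs_le _ _ (fun x => hS.zero x) x)
  have hle := II_mono hU D1 (D2.add (D3.sub D4)) fun x => by
    have := Fe_convex (m := m) (hpos x) (hε.trans_le (hA1 x))
    linarith
  rw [II_add hU D2 (D3.sub D4), II_sub hU D3 D4] at hle
  have := (abs_le.1 hA).1
  linarith

theorem stepE2 (hd : 0 < d) {U u B e : EuclideanSpace ℝ (Fin d) → ℝ} (hU : Nice U) (hu : Sm u)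
    (hpos : ∀ x, 0 < u x) {S S2 K κ c CE SL : ℝ}
    (hS : Bd 3 S (fi u)) (hB : Sm B) (hB2 : Bd 2 S2 B) (hBp : ∀ x, 0 < B x) (hBc : ∀ x, B x ≤ c)
    (he : Measurable e) (he0 : ∀ x, 0 ≤ e x) (heC : ∀ x, e x ≤ CE) (hκ : 0 ≤ κ)
    (hLB : ∀ x, |diffOp U B x| ≤ SL)
    (hK : ∀ i j x, |pd i (pd j U) x| ≤ K)
    (hq : ∀ x, ∀ v : Fin d → ℝ, (diffOp U B x / B x + κ - e x) * ∑ i, v i * v i ≤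
      2 * ∑ i, ∑ j, v i * pd i (pd j U) x * v j)
    {η : ℝ} (h0 : 0 ≤ η) (h1 : η ≤ 1)
    (hS' : Bd 0 S (fi (Av (nz d η) (η ^ 2) U u))) :
    II U (fun x => B x * fi (Av (nz d η) (η ^ 2) U u) x) ≤
      II U (fun x => B x * fi u x) - η ^ 2 * (κ * II U (fun x => B x * fi u x))
      + η ^ 2 * II U (fun x => e x * B x * fi u x)
      + ((c + (SL + κ * c + CE * c)) * cdim d * S + d ^ 2 * K ^ 2 * c * S) * II U (Wt U) * η ^ 3 := by
  have : Nonempty (Fin d × Bool) := ⟨(⟨0, hd⟩, true)⟩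
  have hS0 := hS.nonneg
  have sφ : Sm (fi u) := fi_smooth hu hpos
  have mφ := sφ.cont.measurable
  have mA := (Av_smooth hU.sm sφ (η ^ 2) (nz d η)).cont.measurable
  have mL := (Dom.diffOp hU.sm hB hB2).meas
  have mB := hB.cont.measurable
  have mf := (fi_smooth (Av_smooth hU.sm hu (η ^ 2) (nz d η)) (fun x => by
    unfold Av
    have hN : (0:ℝ) < Fintype.card (Fin d × Bool) := by exact_mod_cast Fintype.card_pos
    exact mul_pos (inv_pos.2 hN)
      (Finset.sum_pos (fun p _ => hpos _) Finset.univ_nonempty))).cont.measurable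
  have bB : ∀ x, |B x| ≤ c := fun x => by rw [abs_of_pos (hBp x)]; exact hBc x
  have hc0 : 0 ≤ c := (abs_nonneg _).trans (bB 0)
  have bA : ∀ x, |Av (nz d η) (η ^ 2) U (fi u) x| ≤ S := fun x =>
    Av_abs_le _ _ (fun x => hS.zero x) x
  set P : EuclideanSpace ℝ (Fin d) → ℝ := fun x => diffOp U B x + κ * B x - e x * B x with hP
  have mP : Measurable P := (mL.add (mB.const_mul κ)).sub (he.mul mB)
  have bP : ∀ x, |P x| ≤ SL + κ * c + CE * c := fun x => by
    have a1 := hLB x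
    have a2 : |κ * B x| ≤ κ * c := by
      rw [abs_mul, abs_of_nonneg hκ]; exact mul_le_mul_of_nonneg_left (bB x) hκ
    have a3 : |e x * B x| ≤ CE * c := by
      rw [abs_mul, abs_of_nonneg (he0 x)]
      exact mul_le_mul (heC x) (bB x) (abs_nonneg _) ((he0 x).trans (heC x))
    calc |P x| ≤ |diffOp U B x + κ * B x| + |e x * B x| := abs_sub _ _
      _ ≤ |diffOp U B x| + |κ * B x| + |e x * B x| := by linarith [abs_add_le (diffOp U B x) (κ * B x)]
      _ ≤ _ := by linarith
  -- pointwise contraction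
  have hpt : ∀ x, B x * fi (Av (nz d η) (η ^ 2) U u) x ≤
      B x * Av (nz d η) (η ^ 2) U (fi u) x - η ^ 2 * (P x * Av (nz d η) (η ^ 2) U (fi u) x) +
      η ^ 4 * (d ^ 2 * K ^ 2) * (B x * Av (nz d η) (η ^ 2) U (fi u) x) := by
    intro x
    have := fi_Av_le hd hU.sm hu hpos (η ^ 2) (sq_nonneg η) (nz d η) x
      (diffOp U B x / B x + κ - e x) K (fun i j => hK i j x) (hq x)
    refine (mul_le_mul_of_nonneg_left this (hBp x).le).trans (le_of_eq ?_)
    simp only [hP]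
    have := (hBp x).ne'
    field_simp
  have D0 : Dom U (fun x => B x * fi (Av (nz d η) (η ^ 2) U u) x) (c * S) :=
    Dom.bmul mB bB (Dom.of_bdd mf hS')
  have D1 : Dom U (fun x => B x * Av (nz d η) (η ^ 2) U (fi u) x) (c * S) :=
    Dom.bmul mB bB (Dom.of_bdd mA bA)
  have D2 : Dom U (fun x => P x * Av (nz d η) (η ^ 2) U (fi u) x) _ :=
    Dom.bmul mP bP (Dom.of_bdd mA bA)
  have D2' : Dom U (fun x => η ^ 2 * (P x * Av (nz d η) (η ^ 2) U (fi u) x)) _ :=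
    Dom.bmul measurable_const (fun x => le_rfl) D2
  have D3 : Dom U (fun x => η ^ 4 * (d ^ 2 * K ^ 2) * (B x * Av (nz d η) (η ^ 2) U (fi u) x)) _ :=
    Dom.bmul measurable_const (fun x => le_rfl) D1
  have hI := II_mono hU D0 ((D1.sub D2').add D3) hpt
  rw [II_add hU (D1.sub D2') D3, II_sub hU D1 D2', II_const_mul, II_const_mul] at hI
  have sA := stepA hd hU sφ hS mB bB h0 h1
  have sB := stepB hd hU sφ (hS.of_le (by norm_num)) mP bP h0 h1
  rw [II_symm hU hB sφ hB2 (hS.of_le (by norm_num))] at sA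
  -- split the potential term
  have Dφ : Dom U (fi u) S := Dom.of_bdd mφ fun x => hS.zero x
  have E1 : Dom U (fun x => fi u x * diffOp U B x) (S * SL) :=
    Dom.bmul mφ (fun x => hS.zero x) (Dom.of_bdd mL hLB)
  have E2 : Dom U (fun x => B x * fi u x) (c * S) := Dom.bmul mB bB Dφ
  have E2' : Dom U (fun x => κ * (B x * fi u x)) _ :=
    Dom.bmul measurable_const (fun x => le_rfl) E2
  have E3 : Dom U (fun x => e x * B x * fi u x) (CE * c * S) := by
    refine Dom.bmul (he.mul mB) (fun x => ?_) Dφ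
    rw [abs_mul, abs_of_nonneg (he0 x)]
    exact mul_le_mul (heC x) (bB x) (abs_nonneg _) ((he0 x).trans (heC x))
  have hsplit : II U (fun x => P x * fi u x) = II U (fun x => fi u x * diffOp U B x) +
      κ * II U (fun x => B x * fi u x) - II U (fun x => e x * B x * fi u x) := by
    rw [← II_const_mul, ← II_add hU E1 E2', ← II_sub hU (E1.add E2') E3]
    congr 1; funext x; simp only [hP]; ring
  rw [hsplit] at sB
  have b1 := (abs_le.1 sA).2
  have b2 := mul_le_mul_of_nonneg_left (abs_le.1 sB).1 (sq_nonneg η)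
  have b3 := (abs_le.1 (II_abs_le hU D1)).2
  have hW := II_Wt_nonneg (U := U)
  have b4 : η ^ 4 * (d ^ 2 * K ^ 2) * II U (fun x => B x * Av (nz d η) (η ^ 2) U (fi u) x) ≤
      η ^ 3 * (d ^ 2 * K ^ 2) * (c * S * II U (Wt U)) := by
    have c1 := mul_le_mul_of_nonneg_left b3 (by positivity : 0 ≤ η ^ 4 * (d ^ 2 * K ^ 2))
    have c2 : η ^ 4 ≤ η ^ 3 := pow_le_pow_of_le_one h0 h1 (by norm_num)
    refine c1.trans ?_
    refine mul_le_mul_of_nonneg_right (mul_le_mul_of_nonneg_right c2 (by positivity)) ?_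
    exact mul_nonneg (mul_nonneg hc0 hS0) hW
  nlinarith

end steps


section main
variable {d : ℕ}

theorem seq_lemma {n : ℕ} (hn : 0 < n) {a b F mm : ℕ → ℝ} {t η κ β c eT C1 C2 C3 : ℝ}
    (ht : 0 < t) (hη : 0 ≤ η) (hηt : n * η ^ 2 = t) (hκ : 0 < κ) (hβ : 0 < β)
    (hC1 : 0 ≤ C1) (hC3 : 0 ≤ C3)
    (ha : ∀ k, k ≤ n → 0 ≤ a k) (hab : ∀ k, k ≤ n → β * a k ≤ b k) (hb0 : b 0 ≤ c * a 0)
    (h1 : ∀ k, k < n → F k ≤ F (k+1) + η ^ 2 * a k + C1 * η ^ 3)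
    (h2 : ∀ k, k < n → b (k+1) ≤ b k - η ^ 2 * (κ * b k) + η ^ 2 * eT + C2 * η ^ 3)
    (h3 : ∀ k, k < n → |mm (k+1) - mm k| ≤ C3 * η ^ 3) :
    ∃ k, k ≤ n ∧ ∃ A, A ≤ (c * a 0 + t * eT + C2 * t * η) / (κ * β) ∧ a k ≤ A / t ∧
      F 0 ≤ F k + A + C1 * t * η ∧ |mm k - mm 0| ≤ C3 * t * η := by
  set A := η ^ 2 * ∑ j ∈ range n, a j with hA
  have hη2 : 0 ≤ η ^ 2 := sq_nonneg η
  have hnη : (n:ℝ) * η ^ 3 = t * η := by rw [← hηt]; ring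
  have hnpos : (0:ℝ) < n := by exact_mod_cast hn
  have hAle : A ≤ (c * a 0 + t * eT + C2 * t * η) / (κ * β) := by
    rw [le_div_iff₀ (mul_pos hκ hβ)]
    have hk : ∀ k ∈ range n, η ^ 2 * a k * (κ * β) ≤ b k - b (k+1) + (η ^ 2 * eT + C2 * η ^ 3) := by
      intro k hk
      have hk' := Finset.mem_range.1 hk
      have a1 := h2 k hk'
      have a2 := mul_le_mul_of_nonneg_left (hab k hk'.le) (mul_nonneg hη2 hκ.le)
      linarith
    have hs := Finset.sum_le_sum hk
    rw [Finset.sum_add_distrib, Finset.sum_range_sub', ← Finset.sum_mul, ← Finset.mul_sum,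
      Finset.sum_const, Finset.card_range, nsmul_eq_mul] at hs
    have hbn : 0 ≤ b n := (mul_nonneg hβ.le (ha n le_rfl)).trans (hab n le_rfl)
    have e : (n:ℝ) * (η ^ 2 * eT + C2 * η ^ 3) = t * eT + C2 * t * η := by
      rw [mul_add, ← mul_assoc, hηt]
      have : (n:ℝ) * (C2 * η ^ 3) = C2 * (n * η ^ 3) := by ring
      rw [this, hnη]; ring
    rw [e] at hs
    linarith
  obtain ⟨k, hkn, hk⟩ : ∃ k ∈ range n, a k ≤ A / t := by
    apply Finset.exists_le_of_sum_le (Finset.nonempty_range_iff.2 hn.ne')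
    rw [Finset.sum_const, Finset.card_range, nsmul_eq_mul, hA]
    apply le_of_eq
    have : η ^ 2 = t / n := by field_simp; linarith
    rw [this]; field_simp
  have hkn' := Finset.mem_range.1 hkn
  have hF : ∀ k, k ≤ n → F 0 ≤ F k + η ^ 2 * ∑ j ∈ range k, a j + k * (C1 * η ^ 3) := by
    intro k
    induction k with
    | zero => intro _; simp
    | succ k ih =>
      intro hk
      have i1 := ih (by omega)
      have i2 := h1 k (by omega)
      rw [Finset.sum_range_succ]; push_cast; linarith
  have hM : ∀ k, k ≤ n → |mm k - mm 0| ≤ k * (C3 * η ^ 3) := by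
    intro k
    induction k with
    | zero => intro _; simp
    | succ k ih =>
      intro hk
      have i1 := ih (by omega)
      have i2 := h3 k (by omega)
      have i3 := abs_sub_le (mm (k+1)) (mm k) (mm 0)
      push_cast; linarith
  have hkk : (k:ℝ) ≤ n := by exact_mod_cast hkn'.le
  have hη3 : 0 ≤ η ^ 3 := by positivity
  refine ⟨k, hkn'.le, A, hAle, hk, ?_, ?_⟩
  · refine (hF k hkn'.le).trans ?_
    have s1 : ∑ j ∈ range k, a j ≤ ∑ j ∈ range n, a j :=
      Finset.sum_le_sum_of_subset_of_nonneg (Finset.range_mono hkn'.le)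
        fun j hj _ => ha j (Finset.mem_range.1 hj).le
    have s2 := mul_le_mul_of_nonneg_left s1 hη2
    have s3 : (k:ℝ) * (C1 * η ^ 3) ≤ n * (C1 * η ^ 3) :=
      mul_le_mul_of_nonneg_right hkk (by positivity)
    have s4 : (n:ℝ) * (C1 * η ^ 3) = C1 * t * η := by
      have : (n:ℝ) * (C1 * η ^ 3) = C1 * (n * η ^ 3) := by ring
      rw [this, hnη]; ring
    linarith
  · refine (hM k hkn'.le).trans ?_
    have s3 : (k:ℝ) * (C3 * η ^ 3) ≤ n * (C3 * η ^ 3) :=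
      mul_le_mul_of_nonneg_right hkk (by positivity)
    have s4 : (n:ℝ) * (C3 * η ^ 3) = C3 * t * η := by
      have : (n:ℝ) * (C3 * η ^ 3) = C3 * (n * η ^ 3) := by ring
      rw [this, hnη]; ring
    linarith

theorem fi_it_le (hd : 0 < d) {U g : EuclideanSpace ℝ (Fin d) → ℝ} (hU : Nice U) (hg : Sm g)
    {ε M : ℝ} (hε : 0 < ε) (hg1 : ∀ x, ε ≤ g x) (hg2 : ∀ x, g x ≤ M) {ρ K Φ : ℝ}
    (hρ : 0 ≤ ρ) (hΦ : ∀ x, fi g x ≤ Φ)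
    (hK : ∀ i j x, |pd i (pd j U) x| ≤ K)
    (hH : ∀ x, ∀ v : Fin d → ℝ, (-(2 * ρ)) * ∑ i, v i * v i ≤
      2 * ∑ i, ∑ j, v i * pd i (pd j U) x * v j) {η : ℝ}
    (hKη : η ^ 2 * (d ^ 2 * K ^ 2) ≤ 1) (k : ℕ) (x) :
    fi (it (nz d η) (η ^ 2) U g k) x ≤ Real.exp ((2 * ρ + 1) * (k * η ^ 2)) * Φ := by
  have : Nonempty (Fin d × Bool) := ⟨(⟨0, hd⟩, true)⟩
  have hp : ∀ k x, 0 < it (nz d η) (η ^ 2) U g k x := fun k x =>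
    hε.trans_le ((it_bounds (V := U) (η ^ 2) (nz d η) hg1 hg2 k).1 x)
  induction k generalizing x with
  | zero => simpa [it] using hΦ x
  | succ k ih =>
    have h1 := fi_Av_le hd hU.sm (it_smooth hU.sm hg (η ^ 2) (nz d η) k) (hp k) (η ^ 2) (sq_nonneg η)
      (nz d η) x (-(2 * ρ)) K (fun i j => hK i j x) (hH x)
    have h2 : Av (nz d η) (η ^ 2) U (fi (it (nz d η) (η ^ 2) U g k)) x ≤
        Real.exp ((2 * ρ + 1) * (k * η ^ 2)) * Φ := by
      have := Av_mono (V := U) (η ^ 2) (nz d η) ih x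
      rwa [Av_const] at this
    have h3 : 0 ≤ Av (nz d η) (η ^ 2) U (fi (it (nz d η) (η ^ 2) U g k)) x := by
      rw [← Av_const (V := U) (η ^ 2) (nz d η) 0 x]; exact Av_mono _ _ (fi_nonneg (hp k)) x
    have h4 : 1 - η ^ 2 * (-(2 * ρ)) + (η ^ 2) ^ 2 * (d ^ 2 * K ^ 2) ≤
        Real.exp ((2 * ρ + 1) * η ^ 2) := by
      have := Real.add_one_le_exp ((2 * ρ + 1) * η ^ 2)
      nlinarith [mul_le_mul_of_nonneg_left hKη (sq_nonneg η)]
    refine h1.trans ((mul_le_mul_of_nonneg_right h4 h3).trans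
      ((mul_le_mul_of_nonneg_left h2 (Real.exp_pos _).le).trans (le_of_eq ?_)))
    rw [← mul_assoc, ← Real.exp_add]
    congr 2; push_cast; ring

set_option maxHeartbeats 1000000 in
theorem chain_main (hd : 0 < d) {U g B e : EuclideanSpace ℝ (Fin d) → ℝ} (hU : Nice U) (hg : Sm g)
    {S ε M ρ Φ κ β c S2 SL CE t P δ : ℝ} (hS : Bd 4 S g) (hε : 0 < ε) (hg1 : ∀ x, ε ≤ g x)
    (hg2 : ∀ x, g x ≤ M) (hρ : 0 ≤ ρ) (hΦ : ∀ x, fi g x ≤ Φ)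
    (hH : ∀ x, ∀ v : Fin d → ℝ, (-(2 * ρ)) * ∑ i, v i * v i ≤
      2 * ∑ i, ∑ j, v i * pd i (pd j U) x * v j)
    (hB : Sm B) (hB2 : Bd 2 S2 B) (hβ : 0 < β) (hBp : ∀ x, β ≤ B x) (hBc : ∀ x, B x ≤ c)
    (he : Measurable e) (he0 : ∀ x, 0 ≤ e x) (heC : ∀ x, e x ≤ CE) (hκ : 0 < κ)
    (hLB : ∀ x, |diffOp U B x| ≤ SL)
    (hq : ∀ x, ∀ v : Fin d → ℝ, (diffOp U B x / B x + κ - e x) * ∑ i, v i * v i ≤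
      2 * ∑ i, ∑ j, v i * pd i (pd j U) x * v j)
    (ht : 0 < t) (hP0 : 0 ≤ P) (hδ : 0 ≤ δ)
    (hZ : 0 < II U (fun _ => 1))
    (hP : ∀ u : EuclideanSpace ℝ (Fin d) → ℝ, Sm u → (∃ S, Bd 1 S u) → (∀ x, ε ≤ u x) →
      (∀ x, u x ≤ M) →
      II U (fun _ => 1) * II U (fun x => u x ^ 2) - (II U u) ^ 2 ≤ P * II U (fi u) + δ)
    (Sb : ℝ) (hSb : Sb = (c * II U (fi g) +
      t * (c * (Real.exp ((2 * ρ + 1) * t) * Φ) * II U e)) / (κ * β)) :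
    II U (fun x => Fe (II U g / II U (fun _ => 1)) (g x)) ≤
      Sb + (P * (Sb / t) + δ) / (ε * II U (fun _ => 1)) := by
  have : Nonempty (Fin d × Bool) := ⟨(⟨0, hd⟩, true)⟩
  set Z := II U (fun _ => (1:ℝ)) with hZdef
  set m := II U g / Z with hm
  set W := II U (Wt U) with hW
  have hW0 : 0 ≤ W := II_Wt_nonneg
  obtain ⟨K0, hK0⟩ := hU.bd 0
  set K := |K0| with hKdef
  have hK : ∀ i j x, |pd i (pd j U) x| ≤ K := fun i j x => (hK0 i j x).trans (le_abs_self _)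
  obtain ⟨S', hS'⟩ := it_Bd (ι := Fin d × Bool) hU.sm hU.bd 4 g hg S hS t
  obtain ⟨S'', hS''⟩ := fi_Bd (d := d) 3 S' ε hε
  have hgpos : ∀ x, 0 < g x := fun x => hε.trans_le (hg1 x)
  have hΦ0 : 0 ≤ Φ := (fi_nonneg hgpos 0).trans (hΦ 0)
  have hBpos : ∀ x, 0 < B x := fun x => hβ.trans_le (hBp x)
  have hc0 : 0 < c := (hBpos 0).trans_le (hBc 0)
  have hCE : 0 ≤ CE := (he0 0).trans (heC 0)
  have bB : ∀ x, |B x| ≤ c := fun x => by rw [abs_of_pos (hBpos x)]; exact hBc x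
  have hSL : 0 ≤ SL := (abs_nonneg _).trans (hLB 0)
  have mB := hB.cont.measurable
  have be : ∀ x, |e x| ≤ CE := fun x => by rw [abs_of_nonneg (he0 x)]; exact heC x
  set C1 := (|Real.log ε| + |Real.log M| + |Real.log m|) * (cdim d * |S'|) * W with hC1
  set C2 := ((c + (SL + κ * c + CE * c)) * cdim d * S'' + d ^ 2 * K ^ 2 * c * S'') * W with hC2
  set C3 := cdim d * |S'| * W with hC3
  have hcd := cdim_nonneg d
  have hC10 : 0 ≤ C1 := by positivity
  have hC30 : 0 ≤ C3 := by positivity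
  set eT := c * (Real.exp ((2 * ρ + 1) * t) * Φ) * II U e with heT
  have hεZ : 0 < ε * Z := mul_pos hε hZ
  have Dg : Dom U g M := Dom.of_bdd hg.cont.measurable fun x => by
    rw [abs_of_pos (hgpos x)]; exact hg2 x
  have D1 : Dom U (fun _ => (1:ℝ)) 1 := Dom.of_bdd measurable_const fun x => by simp
  have hIg : ε * Z ≤ II U g := by
    have : II U (fun _ => ε * 1) ≤ II U g :=
      II_mono hU (Dom.of_bdd measurable_const fun x => le_rfl) Dg (fun x => by simpa using hg1 x)
    rwa [II_const_mul] at this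
  have hmpos : 0 < m := div_pos (hεZ.trans_le hIg) hZ
  have hmZ : m * Z = II U g := by rw [hm]; field_simp
  -- the estimate for a given step size
  have key : ∀ n : ℕ, 0 < n → ∀ η : ℝ, 0 ≤ η → η ≤ 1 → n * η ^ 2 = t →
      η ^ 2 * (d ^ 2 * K ^ 2) ≤ 1 →
      II U (fun x => Fe m (g x)) ≤ Sb + (P * (Sb / t) + δ) / (ε * Z) +
        (C2 * t / (κ * β) + C1 * t + (P * (C2 * t / (κ * β) / t) + (C3 * t) ^ 2) / (ε * Z)) * η := by
    intro n hn η h0 h1 hnη hKη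
    set u : ℕ → EuclideanSpace ℝ (Fin d) → ℝ := fun k => it (nz d η) (η ^ 2) U g k with hu
    have hη2 : η ^ 2 ≤ 1 := pow_le_one₀ h0 h1
    have usm : ∀ k, Sm (u k) := fun k => it_smooth hU.sm hg _ _ k
    have u1 : ∀ k x, ε ≤ u k x := fun k => (it_bounds (V := U) (η ^ 2) (nz d η) hg1 hg2 k).1
    have u2 : ∀ k x, u k x ≤ M := fun k => (it_bounds (V := U) (η ^ 2) (nz d η) hg1 hg2 k).2
    have upos : ∀ k x, 0 < u k x := fun k x => hε.trans_le (u1 k x)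
    have hkt : ∀ k : ℕ, k ≤ n → k * η ^ 2 ≤ t := by
      intro k hk
      rw [← hnη]
      exact mul_le_mul_of_nonneg_right (by exact_mod_cast hk) (sq_nonneg η)
    have uB : ∀ k, k ≤ n → Bd 4 S' (u k) := fun k hk =>
      hS' (nz d η) (η ^ 2) (sq_nonneg η) hη2 k (hkt k hk)
    have fB : ∀ k, k ≤ n → Bd 3 S'' (fi (u k)) := fun k hk =>
      hS'' (u k) (usm k) (u1 k) (uB k hk)
    have mf : ∀ k, Measurable (fi (u k)) := fun k => (fi_smooth (usm k) (upos k)).cont.measurable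
    have Df : ∀ k, k ≤ n → Dom U (fi (u k)) S'' := fun k hk => Dom.of_bdd (mf k) fun x => (fB k hk).zero x
    have DBf : ∀ k, k ≤ n → Dom U (fun x => B x * fi (u k) x) (c * S'') := fun k hk =>
      Dom.bmul mB bB (Df k hk)
    obtain ⟨k, hkn, A, hA, hak, hF, hmm⟩ := seq_lemma hn (a := fun k => II U (fi (u k)))
      (b := fun k => II U (fun x => B x * fi (u k) x)) (F := fun k => II U (fun x => Fe m (u k x)))
      (mm := fun k => II U (u k)) (t := t) (η := η) (κ := κ) (β := β) (c := c) (eT := eT)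
      (C1 := C1) (C2 := C2) (C3 := C3) ht h0 hnη hκ hβ hC10 hC30
      (fun k hk => II_nonneg (fi_nonneg (upos k)))
      (fun k hk => by
        rw [← II_const_mul]
        exact II_mono hU (Dom.bmul measurable_const (fun x => le_rfl) (Df k hk)) (DBf k hk)
          fun x => mul_le_mul_of_nonneg_right (hBp x) (fi_nonneg (upos k) x))
      (by
        rw [← II_const_mul]
        exact II_mono hU (DBf 0 (Nat.zero_le _))
          (Dom.bmul measurable_const (fun x => le_rfl) (Df 0 (Nat.zero_le _)))
          fun x => mul_le_mul_of_nonneg_right (hBc x) (fi_nonneg (upos 0) x))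
      (fun k hk => by
        have := stepE1 hd hU (usm k) (m := m) hε (u1 k) (u2 k)
          (((uB k hk.le).of_le (by norm_num : 3 ≤ 4)).mono (le_abs_self S')) h0 h1
        refine this.trans (le_of_eq ?_)
        congr 1
        rw [hC1]; ring)
      (fun k hk => by
        have := stepE2 hd hU (usm k) (upos k) (fB k hk.le) hB hB2 hBpos hBc he he0 heC hκ.le hLB hK hq
          h0 h1 ((fB (k+1) hk).of_le (Nat.zero_le _))
        refine this.trans ?_
        have hE : II U (fun x => e x * B x * fi (u k) x) ≤ eT := by
          rw [heT, ← II_const_mul]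
          refine II_mono hU (Dom.bmul (ψ := fun x => e x * B x) (D := CE * c) (he.mul mB)
            (fun x => ?_) (Df k hk.le)) (Dom.bmul measurable_const (fun x => le_rfl)
            (Dom.of_bdd he be)) fun x => ?_
          · rw [abs_mul]; exact mul_le_mul (be x) (bB x) (abs_nonneg _) hCE
          · have f1 := fi_it_le hd hU hg hε hg1 hg2 hρ hΦ hK hH hKη k x
            have f2 : Real.exp ((2 * ρ + 1) * (k * η ^ 2)) * Φ ≤ Real.exp ((2 * ρ + 1) * t) * Φ := by
              refine mul_le_mul_of_nonneg_right (Real.exp_le_exp.2 ?_) hΦ0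
              exact mul_le_mul_of_nonneg_left (hkt k hk.le) (by linarith)
            have f3 : B x * fi (u k) x ≤ c * (Real.exp ((2 * ρ + 1) * t) * Φ) :=
              mul_le_mul (hBc x) (f1.trans f2) (fi_nonneg (upos k) x) hc0.le
            have := mul_le_mul_of_nonneg_left f3 (he0 x)
            linarith
        have := mul_le_mul_of_nonneg_left hE (sq_nonneg η)
        rw [hC2]
        linarith)
      (fun k hk => by
        have := stepA hd hU (usm k) (ψ := fun _ => 1) (T := 1)
          (((uB k hk.le).of_le (by norm_num : 3 ≤ 4)).mono (le_abs_self S')) measurable_const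
          (fun x => by simp) h0 h1
        simp only [one_mul] at this
        rw [show II U (fun x => diffOp U (u k) x) = 0 from
          II_diffOp hU (usm k) ((uB k hk.le).of_le (by norm_num : 2 ≤ 4)), mul_zero, sub_zero] at this
        refine this.trans (le_of_eq ?_)
        rw [hC3]; ring)
    have hA' : A ≤ Sb + C2 * t / (κ * β) * η := by
      refine hA.trans (le_of_eq ?_)
      rw [hSb]
      simp only [hu, it]
      rw [add_div (c * II U (fi g) + t * eT)]
      congr 1; ring
    -- final entropy
    have hFk : II U (fun x => Fe m (u k x)) ≤
        (P * II U (fi (u k)) + δ + (II U (u k) - II U g) ^ 2) / (ε * Z) := by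
      have Du : Dom U (u k) M := Dom.of_bdd (usm k).cont.measurable fun x => by
        rw [abs_of_pos (upos k x)]; exact u2 k x
      have bu : ∀ x, |u k x| ≤ M := fun x => by rw [abs_of_pos (upos k x)]; exact u2 k x
      have Du2 : Dom U (fun x => u k x ^ 2) (M * M) := by
        simpa [sq] using Dom.bmul (usm k).cont.measurable bu Du
      obtain ⟨CF, DF⟩ := Dom_Fe (U := U) (usm k).cont.measurable m hε (u1 k) (u2 k)
      have Dl : Dom U (fun x => (2 * m) * u k x) _ :=
        Dom.bmul measurable_const (fun x => le_rfl) Du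
      have Dc : Dom U (fun _ => m ^ 2 * (1:ℝ)) _ :=
        Dom.bmul measurable_const (fun x => le_rfl) D1
      have Dq : Dom U (fun x => m⁻¹ * (u k x ^ 2 - (2 * m) * u k x + m ^ 2 * 1)) _ :=
        Dom.bmul measurable_const (fun x => le_rfl) ((Du2.sub Dl).add Dc)
      have h5 := II_mono hU DF Dq fun x => by
        refine (Fe_le hmpos (upos k x)).trans (le_of_eq ?_)
        field_simp; ring
      rw [II_const_mul, II_add hU (Du2.sub Dl) Dc, II_sub hU Du2 Dl, II_const_mul, II_const_mul] at h5
      have h6 := hP (u k) (usm k) ⟨S', (uB k hkn).of_le (by norm_num)⟩ (u1 k) (u2 k)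
      have h7 : m⁻¹ * (II U (fun x => u k x ^ 2) - 2 * m * II U (u k) + m ^ 2 * Z) =
          (Z * II U (fun x => u k x ^ 2) - II U (u k) ^ 2 + (II U (u k) - II U g) ^ 2) / (m * Z) := by
        rw [← hmZ]; field_simp; ring
      rw [h7] at h5
      refine h5.trans ?_
      have h8 : 0 ≤ P * II U (fi (u k)) + δ + (II U (u k) - II U g) ^ 2 := by
        have : 0 ≤ II U (fi (u k)) := II_nonneg (fi_nonneg (upos k))
        positivity
      rw [hmZ]
      exact div_le_div₀ h8 (by linarith) hεZ hIg
    have hmm2 : (II U (u k) - II U g) ^ 2 ≤ (C3 * t) ^ 2 * η := by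
      have h9 : |II U (u k) - II U g| ≤ C3 * t * η := hmm
      have h10 := sq_le_sq' (by linarith [(abs_le.1 h9).1]) (abs_le.1 h9).2
      refine h10.trans ?_
      rw [mul_pow]
      exact mul_le_mul_of_nonneg_left (by nlinarith) (sq_nonneg _)
    have hF' : II U (fun x => Fe m (g x)) ≤ II U (fun x => Fe m (u k x)) + A + C1 * t * η := hF
    have hak' : II U (fi (u k)) ≤ (Sb + C2 * t / (κ * β) * η) / t :=
      hak.trans (div_le_div_of_nonneg_right hA' ht.le)
    have h11 : (P * II U (fi (u k)) + δ + (II U (u k) - II U g) ^ 2) / (ε * Z) ≤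
        (P * ((Sb + C2 * t / (κ * β) * η) / t) + δ + (C3 * t) ^ 2 * η) / (ε * Z) := by
      refine div_le_div_of_nonneg_right ?_ hεZ.le
      have := mul_le_mul_of_nonneg_left hak' hP0
      linarith
    have h12 : (P * ((Sb + C2 * t / (κ * β) * η) / t) + δ + (C3 * t) ^ 2 * η) / (ε * Z) =
      (P * (Sb / t) + δ) / (ε * Z) + (P * (C2 * t / (κ * β) / t) + (C3 * t) ^ 2) / (ε * Z) * η := by
      ring
    linarith
  -- pass to the limit
  set X := C2 * t / (κ * β) + C1 * t + (P * (C2 * t / (κ * β) / t) + (C3 * t) ^ 2) / (ε * Z) with hX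
  have hlim0 : Filter.Tendsto (fun n : ℕ => Real.sqrt (t / n)) Filter.atTop (nhds 0) := by
    have := (tendsto_const_div_atTop_nhds_zero_nat t).sqrt
    simpa using this
  have hlim : Filter.Tendsto (fun n : ℕ => Sb + (P * (Sb / t) + δ) / (ε * Z) + X * Real.sqrt (t / n))
      Filter.atTop (nhds (Sb + (P * (Sb / t) + δ) / (ε * Z))) := by
    have := (hlim0.const_mul X).const_add (Sb + (P * (Sb / t) + δ) / (ε * Z))
    simpa using this
  refine ge_of_tendsto hlim ?_
  have hev1 : ∀ᶠ n : ℕ in Filter.atTop, Real.sqrt (t / n) ≤ 1 :=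
    (hlim0.eventually_lt_const (by norm_num : (0:ℝ) < 1)).mono fun n h => h.le
  have hev2 : ∀ᶠ n : ℕ in Filter.atTop, Real.sqrt (t / n) ^ 2 * (d ^ 2 * K ^ 2) ≤ 1 := by
    have := ((hlim0.pow 2).mul_const ((d:ℝ) ^ 2 * K ^ 2))
    simp only [ne_eq, OfNat.ofNat_ne_zero, not_false_eq_true, zero_pow, zero_mul] at this
    exact (this.eventually_lt_const (by norm_num : (0:ℝ) < 1)).mono fun n h => h.le
  filter_upwards [hev1, hev2, Filter.eventually_gt_atTop 0] with n e1 e2 e3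
  refine key n e3 _ (Real.sqrt_nonneg _) e1 ?_ e2
  rw [Real.sq_sqrt (by positivity)]
  have : (n:ℝ) ≠ 0 := by exact_mod_cast e3.ne'
  field_simp

end main


section poincare
variable {d : ℕ}

/-- Squared gradient. -/
noncomputable def G2 (u : EuclideanSpace ℝ (Fin d) → ℝ) (x : EuclideanSpace ℝ (Fin d)) : ℝ :=
  ∑ i, pd i u x * pd i u x

theorem G2_nonneg (u : EuclideanSpace ℝ (Fin d) → ℝ) (x) : 0 ≤ G2 u x :=
  Finset.sum_nonneg fun _ _ => mul_self_nonneg _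

theorem G2_smooth {u : EuclideanSpace ℝ (Fin d) → ℝ} (hu : Sm u) : Sm (G2 u) :=
  Sm.sum fun i _ => (hu.pd i).mul (hu.pd i)

theorem half_seg {u : EuclideanSpace ℝ (Fin d) → ℝ} (hu : Sm u) (x y : EuclideanSpace ℝ (Fin d)) :
    (u x - u ((1/2 : ℝ) • x + (1/2 : ℝ) • y)) ^ 2 ≤
      ‖x - y‖ ^ 2 * ∫ s in (1/2 : ℝ)..1, G2 u (s • x + (1 - s) • y) := by
  set v := x - y with hv
  have hline : ∀ s : ℝ, y + s • v = s • x + (1 - s) • y := by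
    intro s; rw [hv, smul_sub, sub_smul, one_smul]; abel
  set f : ℝ → ℝ := fun s => ∑ i, v i * pd i u (y + s • v) with hf
  have hder : ∀ s, HasDerivAt (fun s : ℝ => u (y + s • v)) (f s) s := fun s => hasDerivAt_line hu y v s
  have cl : Continuous (fun s : ℝ => y + s • v) := by fun_prop
  have hfc : Continuous f := continuous_finsetSum _ fun i _ =>
    continuous_const.mul ((hu.pd i).cont.comp cl)
  have hGc : Continuous (fun s : ℝ => G2 u (y + s • v)) := (G2_smooth hu).cont.comp cl
  have hI : ∫ s in (1/2 : ℝ)..1, f s = u x - u ((1/2 : ℝ) • x + (1/2 : ℝ) • y) := by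
    rw [intervalIntegral.integral_eq_sub_of_hasDerivAt (fun s _ => hder s)
      (hfc.intervalIntegrable _ _), hline, hline]
    norm_num
  set J := ∫ s in (1/2 : ℝ)..1, f s with hJ
  have hcs : 2 * J ^ 2 ≤ ∫ s in (1/2 : ℝ)..1, f s ^ 2 := by
    have h0 : 0 ≤ ∫ s in (1/2 : ℝ)..1, (f s - 2 * J) ^ 2 :=
      intervalIntegral.integral_nonneg (by norm_num) fun s _ => sq_nonneg _
    have e : ∀ s, (f s - 2 * J) ^ 2 = f s ^ 2 - (4 * J) * f s + 4 * J ^ 2 := by intro s; ring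
    simp only [e] at h0
    rw [intervalIntegral.integral_add, intervalIntegral.integral_sub,
      intervalIntegral.integral_const_mul, intervalIntegral.integral_const, ← hJ] at h0
    · norm_num at h0; nlinarith
    all_goals exact Continuous.intervalIntegrable (by fun_prop) _ _
  have hpt : ∀ s, f s ^ 2 ≤ ‖v‖ ^ 2 * G2 u (y + s • v) := by
    intro s
    have := Finset.sum_mul_sq_le_sq_mul_sq Finset.univ (fun i => v i) (fun i => pd i u (y + s • v))
    rw [EuclideanSpace.norm_sq_eq]
    simp only [Real.norm_eq_abs, sq_abs]
    refine this.trans (le_of_eq ?_)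
    simp only [G2, sq]
  have h2 : ∫ s in (1/2 : ℝ)..1, f s ^ 2 ≤ ∫ s in (1/2 : ℝ)..1, ‖v‖ ^ 2 * G2 u (y + s • v) := by
    refine intervalIntegral.integral_mono_on (by norm_num) ?_ ?_ fun s _ => hpt s
    · exact Continuous.intervalIntegrable (by fun_prop) _ _
    · exact Continuous.intervalIntegrable (by fun_prop) _ _
  rw [intervalIntegral.integral_const_mul] at h2
  simp only [hline] at h2
  rw [← hI]
  nlinarith [sq_nonneg J]

/-- Change of variables bound. -/
theorem scale_bound (g : EuclideanSpace ℝ (Fin d) → ENNReal) (hg : Measurable g) (r : ℝ)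
    (y : EuclideanSpace ℝ (Fin d)) (hy : y ∈ Metric.closedBall (0 : EuclideanSpace ℝ (Fin d)) r)
    (s : ℝ) (hs : s ∈ Set.Icc (1/2 : ℝ) 1) :
    ∫⁻ x in Metric.closedBall (0 : EuclideanSpace ℝ (Fin d)) r, g (s • x + (1 - s) • y) ≤
      ENNReal.ofReal (2 ^ d) * ∫⁻ x in Metric.closedBall (0 : EuclideanSpace ℝ (Fin d)) r, g x := by
  set B := Metric.closedBall (0 : EuclideanSpace ℝ (Fin d)) r with hB
  have hBm : MeasurableSet B := Metric.isClosed_closedBall.measurableSet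
  have hs0 : 0 < s := by linarith [hs.1]
  rw [← lintegral_indicator hBm, ← lintegral_indicator hBm]
  have h1 : ∀ x, B.indicator (fun x => g (s • x + (1 - s) • y)) x ≤
      (fun z => B.indicator g (z + (1 - s) • y)) (s • x) := by
    intro x
    by_cases hx : x ∈ B
    · have hz : s • x + (1 - s) • y ∈ B :=
        (convex_closedBall (0 : EuclideanSpace ℝ (Fin d)) r) hx hy hs0.le (by linarith [hs.2]) (by ring)
      simp only [Set.indicator_of_mem hx]
      rw [Set.indicator_of_mem hz]
    · simp [Set.indicator_of_notMem hx]
  refine (lintegral_mono h1).trans ?_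
  have hm : Measurable (fun z => B.indicator g (z + (1 - s) • y)) :=
    (hg.indicator hBm).comp (measurable_add_const _)
  have h2 : ∫⁻ x, (fun z => B.indicator g (z + (1 - s) • y)) (s • x) =
      ∫⁻ z, B.indicator g (z + (1 - s) • y) ∂(Measure.map (fun x => s • x) volume) := by
    rw [lintegral_map hm (measurable_const_smul s)]
  rw [h2, Measure.map_addHaar_smul _ hs0.ne', lintegral_smul_measure,
    lintegral_add_right_eq_self (fun z => B.indicator g z), smul_eq_mul]
  refine mul_le_mul_left ?_ _
  apply ENNReal.ofReal_le_ofReal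
  rw [abs_of_pos (by positivity)]
  simp only [finrank_euclideanSpace, Fintype.card_fin]
  rw [← inv_pow]
  refine pow_le_pow_left₀ (by positivity) ?_ d
  rw [inv_le_comm₀ hs0 (by norm_num)]
  linarith [hs.1]

theorem poincare_ball {r : ℝ} (hr : 0 < r) : ∃ C : ℝ, 0 ≤ C ∧
    ∀ u : EuclideanSpace ℝ (Fin d) → ℝ, Sm u →
    ∃ y ∈ Metric.closedBall (0 : EuclideanSpace ℝ (Fin d)) r,
      ∫⁻ x in Metric.closedBall (0 : EuclideanSpace ℝ (Fin d)) r, ENNReal.ofReal ((u x - u y) ^ 2) ≤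
      ENNReal.ofReal C *
        ∫⁻ x in Metric.closedBall (0 : EuclideanSpace ℝ (Fin d)) r, ENNReal.ofReal (G2 u x) := by
  set B := Metric.closedBall (0 : EuclideanSpace ℝ (Fin d)) r with hB
  have hBm : MeasurableSet B := Metric.isClosed_closedBall.measurableSet
  have hB0 : volume B ≠ 0 := (Metric.measure_closedBall_pos volume _ hr).ne'
  have hB1 : volume B ≠ ⊤ := (isCompact_closedBall _ _).measure_lt_top.ne
  refine ⟨4 * ((2 * r) ^ 2 * 2 ^ d), by positivity, fun u hu => ?_⟩
  set μ := volume.restrict B with hμ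
  set ν := volume.restrict (Set.Ioc (1/2 : ℝ) 1) with hν
  set g : EuclideanSpace ℝ (Fin d) → ENNReal := fun x => ENNReal.ofReal (G2 u x) with hg
  have cG := (G2_smooth hu).cont
  have mg : Measurable g := cG.measurable.ennreal_ofReal
  have mem : ∀ᵐ x ∂μ, x ∈ B := ae_restrict_mem hBm
  set D : EuclideanSpace ℝ (Fin d) → EuclideanSpace ℝ (Fin d) → ENNReal := fun x y =>
    ENNReal.ofReal ((u x - u ((1/2 : ℝ) • x + (1/2 : ℝ) • y)) ^ 2) with hD
  have cu := hu.cont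
  have mD : Measurable (Function.uncurry D) := by
    apply Measurable.ennreal_ofReal
    apply Continuous.measurable
    fun_prop
  have hDle : ∀ x ∈ B, ∀ y ∈ B, D x y ≤ ENNReal.ofReal ((2 * r) ^ 2) *
      ∫⁻ s, g (s • x + (1 - s) • y) ∂ν := by
    intro x hx y hy
    have h1 := half_seg hu x y
    have cl : Continuous (fun s : ℝ => G2 u (s • x + (1 - s) • y)) := by fun_prop
    have h2 : ∫ s in (1/2 : ℝ)..1, G2 u (s • x + (1 - s) • y) =
        ∫ s, G2 u (s • x + (1 - s) • y) ∂ν := by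
      rw [intervalIntegral.integral_of_le (by norm_num)]
    have hn : ‖x - y‖ ≤ 2 * r := by
      have a1 : ‖x‖ ≤ r := by simpa [hB] using hx
      have a2 : ‖y‖ ≤ r := by simpa [hB] using hy
      linarith [norm_sub_le x y]
    have hnn : 0 ≤ ∫ s, G2 u (s • x + (1 - s) • y) ∂ν := integral_nonneg fun s => G2_nonneg u _
    rw [h2] at h1
    have h3 : (u x - u ((1/2 : ℝ) • x + (1/2 : ℝ) • y)) ^ 2 ≤
        (2 * r) ^ 2 * ∫ s, G2 u (s • x + (1 - s) • y) ∂ν :=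
      h1.trans (mul_le_mul_of_nonneg_right (pow_le_pow_left₀ (norm_nonneg _) hn 2) hnn)
    refine (ENNReal.ofReal_le_ofReal h3).trans ?_
    rw [ENNReal.ofReal_mul (by positivity), ofReal_integral_eq_lintegral_ofReal]
    · exact (cl.integrableOn_Icc (a := 1/2) (b := 1)).mono_set Set.Ioc_subset_Icc_self
    · exact Filter.Eventually.of_forall fun s => G2_nonneg u _
  have hDint : ∫⁻ y, ∫⁻ x, D x y ∂μ ∂μ ≤
      ENNReal.ofReal ((2 * r) ^ 2 * 2 ^ d) * (∫⁻ x, g x ∂μ) * volume B := by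
    have st : ∀ y ∈ B, ∫⁻ x, D x y ∂μ ≤ ENNReal.ofReal ((2 * r) ^ 2 * 2 ^ d) * (∫⁻ x, g x ∂μ) := by
      intro y hy
      have mg2 : Measurable (Function.uncurry fun (x : EuclideanSpace ℝ (Fin d)) (s : ℝ) =>
          g (s • x + (1 - s) • y)) := by
        refine mg.comp (Continuous.measurable ?_)
        fun_prop
      calc ∫⁻ x, D x y ∂μ ≤ ∫⁻ x, ENNReal.ofReal ((2 * r) ^ 2) *
            ∫⁻ s, g (s • x + (1 - s) • y) ∂ν ∂μ := by
            refine lintegral_mono_ae ?_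
            filter_upwards [mem] with x hx using hDle x hx y hy
        _ = ENNReal.ofReal ((2 * r) ^ 2) * ∫⁻ s, ∫⁻ x, g (s • x + (1 - s) • y) ∂μ ∂ν := by
            rw [lintegral_const_mul' _ _ ENNReal.ofReal_ne_top,
              lintegral_lintegral_swap mg2.aemeasurable]
        _ ≤ ENNReal.ofReal ((2 * r) ^ 2) * ∫⁻ s, ENNReal.ofReal (2 ^ d) * ∫⁻ x, g x ∂μ ∂ν := by
            gcongr 1
            refine lintegral_mono_ae ?_
            filter_upwards [ae_restrict_mem measurableSet_Ioc] with s hs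
            exact scale_bound g mg r y hy s ⟨hs.1.le, hs.2⟩
        _ ≤ _ := by
            rw [lintegral_const, ENNReal.ofReal_mul (by positivity)]
            have : ν Set.univ ≤ 1 := by
              rw [hν, Measure.restrict_apply_univ, Real.volume_Ioc]
              rw [← ENNReal.ofReal_one]
              exact ENNReal.ofReal_le_ofReal (by norm_num)
            calc _ ≤ ENNReal.ofReal ((2 * r) ^ 2) * (ENNReal.ofReal (2 ^ d) * (∫⁻ x, g x ∂μ) * 1) := by
                  gcongr
              _ = _ := by rw [mul_one, mul_assoc]
    calc ∫⁻ y, ∫⁻ x, D x y ∂μ ∂μ ≤ ∫⁻ y, ENNReal.ofReal ((2 * r) ^ 2 * 2 ^ d) * (∫⁻ x, g x ∂μ) ∂μ := by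
          refine lintegral_mono_ae ?_
          filter_upwards [mem] with y hy using st y hy
      _ = _ := by rw [lintegral_const, hμ, Measure.restrict_apply_univ]
  -- full difference
  set Fq : EuclideanSpace ℝ (Fin d) → ENNReal := fun y =>
    ∫⁻ x, ENNReal.ofReal ((u x - u y) ^ 2) ∂μ with hFq
  have mFq : Measurable Fq := by
    have hm : Measurable (Function.uncurry fun (x y : EuclideanSpace ℝ (Fin d)) =>
        ENNReal.ofReal ((u x - u y) ^ 2)) := by
      apply Measurable.ennreal_ofReal
      apply Continuous.measurable
      fun_prop
    exact hm.lintegral_prod_left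
  have hFint : ∫⁻ y, Fq y ∂μ ≤
      ENNReal.ofReal (4 * ((2 * r) ^ 2 * 2 ^ d)) * (∫⁻ x, g x ∂μ) * volume B := by
    have hpt : ∀ x y, ENNReal.ofReal ((u x - u y) ^ 2) ≤ 2 * D x y + 2 * D y x := by
      intro x y
      have hsym : (1/2 : ℝ) • y + (1/2 : ℝ) • x = (1/2 : ℝ) • x + (1/2 : ℝ) • y := add_comm _ _
      simp only [hD, hsym]
      generalize u ((1/2 : ℝ) • x + (1/2 : ℝ) • y) = q
      generalize u x = p1
      generalize u y = p2
      have h2 : (2 : ENNReal) = ENNReal.ofReal 2 := by simp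
      rw [h2, ← ENNReal.ofReal_mul (by norm_num),
        ← ENNReal.ofReal_mul (by norm_num), ← ENNReal.ofReal_add (by positivity) (by positivity)]
      apply ENNReal.ofReal_le_ofReal
      nlinarith [sq_nonneg (p1 - q + (p2 - q))]
    have mDs : Measurable (Function.uncurry fun x y => D y x) := mD.comp measurable_swap
    have mDx : ∀ y, Measurable (fun x => D x y) := fun y => mD.comp (measurable_id.prodMk measurable_const)
    have mDy : ∀ y, Measurable (fun x => D y x) := fun y => mD.comp (measurable_const.prodMk measurable_id)
    have mI1 : Measurable fun y => ∫⁻ x, D x y ∂μ := mD.lintegral_prod_left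
    calc ∫⁻ y, Fq y ∂μ ≤ ∫⁻ y, ∫⁻ x, (2 * D x y + 2 * D y x) ∂μ ∂μ :=
          lintegral_mono fun y => lintegral_mono fun x => hpt x y
      _ = ∫⁻ y, (2 * ∫⁻ x, D x y ∂μ + 2 * ∫⁻ x, D y x ∂μ) ∂μ := by
          congr 1; funext y
          rw [lintegral_add_left ((mDx y).const_mul 2), lintegral_const_mul _ (mDx y),
            lintegral_const_mul _ (mDy y)]
      _ = 2 * ∫⁻ y, ∫⁻ x, D x y ∂μ ∂μ + 2 * ∫⁻ y, ∫⁻ x, D y x ∂μ ∂μ := by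
          rw [lintegral_add_left (mI1.const_mul 2), lintegral_const_mul _ mI1,
            lintegral_const_mul' _ _ (by simp)]
      _ = 4 * ∫⁻ y, ∫⁻ x, D x y ∂μ ∂μ := by
          rw [lintegral_lintegral_swap (f := fun y x => D y x) mD.aemeasurable, ← add_mul]
          norm_num
      _ ≤ 4 * (ENNReal.ofReal ((2 * r) ^ 2 * 2 ^ d) * (∫⁻ x, g x ∂μ) * volume B) := by gcongr
      _ = _ := by
          rw [ENNReal.ofReal_mul (by norm_num : (0:ℝ) ≤ 4)]
          simp only [ENNReal.ofReal_ofNat, mul_assoc]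
  obtain ⟨y, hy, hle⟩ := exists_le_setLAverage hB0 hB1 (mFq.aemeasurable (μ := volume.restrict B))
  refine ⟨y, hy, hle.trans ?_⟩
  rw [setLAverage_eq]
  exact ENNReal.div_le_of_le_mul hFint

/-- Weighted local Poincare inequality with a tail term. -/
theorem poincare_weighted {V : EuclideanSpace ℝ (Fin d) → ℝ} (hV : Continuous V) {r M : ℝ}
    (hr : 0 < r) (hM : 0 ≤ M) : ∃ P : ℝ, 0 ≤ P ∧ ∀ U : EuclideanSpace ℝ (Fin d) → ℝ, Nice U →
    (∀ x ∈ Metric.closedBall (0 : EuclideanSpace ℝ (Fin d)) r, U x = V x) →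
    ∀ u : EuclideanSpace ℝ (Fin d) → ℝ, Sm u → (∃ S, Bd 1 S u) → (∃ ε, 0 < ε ∧ ∀ x, ε ≤ u x) →
      (∀ x, u x ≤ M) →
      II U (fun _ => 1) * II U (fun x => u x ^ 2) - (II U u) ^ 2 ≤
        II U (fun _ => 1) * P * II U (fi u) + II U (fun _ => 1) * (M ^ 2 *
          II U ((Metric.closedBall (0 : EuclideanSpace ℝ (Fin d)) r)ᶜ.indicator fun _ => 1)) := by
  set B := Metric.closedBall (0 : EuclideanSpace ℝ (Fin d)) r with hB
  have hBm : MeasurableSet B := Metric.isClosed_closedBall.measurableSet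
  have hBc : IsCompact B := isCompact_closedBall _ _
  obtain ⟨C, hC0, hC⟩ := poincare_ball (d := d) hr
  obtain ⟨A, hA⟩ := hBc.exists_bound_of_continuousOn (f := V) hV.continuousOn
  have hA' : ∀ x ∈ B, |V x| ≤ A := hA
  refine ⟨Real.exp A * C * (M * Real.exp A), by positivity, ?_⟩
  rintro U hU hUV u hu ⟨S, hS⟩ ⟨ε, hε, hu1⟩ hu2
  have hpos : ∀ x, 0 < u x := fun x => hε.trans_le (hu1 x)
  have bu : ∀ x, |u x| ≤ M := fun x => by rw [abs_of_pos (hpos x)]; exact hu2 x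
  have mu := hu.cont.measurable
  have Du : Dom U u M := Dom.of_bdd mu bu
  have Du2 : Dom U (fun x => u x ^ 2) (M * M) := by
    simpa [sq] using Dom.bmul mu bu Du
  have D1 : Dom U (fun _ => (1:ℝ)) 1 := Dom.of_bdd measurable_const fun x => by simp
  obtain ⟨S', hS'⟩ := fi_Bd (d := d) 0 S ε hε
  have Df : Dom U (fi u) S' :=
    Dom.of_bdd (fi_smooth hu hpos).cont.measurable (hS' u hu hu1 hS)
  obtain ⟨y, hyB, hy⟩ := hC u hu
  set Z := II U (fun _ => (1:ℝ)) with hZ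
  have hZ0 : 0 ≤ Z := II_nonneg fun _ => zero_le_one
  set m := u y with hm
  have Dl : Dom U (fun x => (2 * m) * u x) _ := Dom.bmul measurable_const (fun x => le_rfl) Du
  have Dc : Dom U (fun _ => m ^ 2 * (1:ℝ)) _ := Dom.bmul measurable_const (fun x => le_rfl) D1
  -- variance is minimal
  have hvar : Z * II U (fun x => u x ^ 2) - II U u ^ 2 ≤ Z * II U (fun x => (u x - m) ^ 2) := by
    have e : II U (fun x => (u x - m) ^ 2) =
        II U (fun x => u x ^ 2) - 2 * m * II U u + m ^ 2 * Z := by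
      rw [hZ, ← II_const_mul, ← II_const_mul, ← II_sub hU Du2 Dl, ← II_add hU (Du2.sub Dl) Dc]
      congr 1; funext x; ring
    rw [e]
    nlinarith [sq_nonneg (II U u - m * Z)]
  -- real version of the local inequality
  have cG := (G2_smooth hu).cont
  have iu : IntegrableOn (fun x => (u x - m) ^ 2) B :=
    ContinuousOn.integrableOn_compact hBc (by have := hu.cont; fun_prop)
  have iG : IntegrableOn (G2 u) B := cG.continuousOn.integrableOn_compact hBc
  have hreal : ∫ x in B, (u x - m) ^ 2 ≤ C * ∫ x in B, G2 u x := by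
    rw [← ENNReal.ofReal_le_ofReal_iff (mul_nonneg hC0 (integral_nonneg fun x => G2_nonneg u x)),
      ENNReal.ofReal_mul hC0, ofReal_integral_eq_lintegral_ofReal iu
        (Filter.Eventually.of_forall fun x => sq_nonneg _),
      ofReal_integral_eq_lintegral_ofReal iG (Filter.Eventually.of_forall fun x => G2_nonneg u x)]
    exact hy
  -- comparison with the weight
  have w1 : ∀ x ∈ B, Real.exp (-U x) ≤ Real.exp A := fun x hx => by
    rw [hUV x hx]; exact Real.exp_le_exp.2 (by linarith [(abs_le.1 (hA' x hx)).1])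
  have w2 : ∀ x ∈ B, 1 ≤ Real.exp A * Real.exp (-U x) := fun x hx => by
    rw [hUV x hx, ← Real.exp_add]; exact Real.one_le_exp (by linarith [(abs_le.1 (hA' x hx)).2])
  have hGle : ∫ x in B, G2 u x ≤ M * Real.exp A * II U (fi u) := by
    have i2 : Integrable (fun x => M * Real.exp A * (fi u x * Real.exp (-U x))) :=
      (Df.integrable hU).const_mul _
    calc ∫ x in B, G2 u x ≤ ∫ x in B, M * Real.exp A * (fi u x * Real.exp (-U x)) := by
          refine setIntegral_mono_on iG i2.integrableOn hBm fun x hx => ?_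
          have e1 : G2 u x = u x * fi u x := by
            unfold fi G2; have := (hpos x).ne'; field_simp
          rw [e1]
          have f0 := fi_nonneg hpos x
          calc u x * fi u x ≤ M * fi u x := mul_le_mul_of_nonneg_right (hu2 x) f0
            _ ≤ M * fi u x * (Real.exp A * Real.exp (-U x)) :=
              le_mul_of_one_le_right (mul_nonneg hM f0) (w2 x hx)
            _ = _ := by ring
      _ ≤ ∫ x, M * Real.exp A * (fi u x * Real.exp (-U x)) :=
          setIntegral_le_integral i2 (Filter.Eventually.of_forall fun x =>
            mul_nonneg (mul_nonneg hM (Real.exp_pos _).le)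
              (mul_nonneg (fi_nonneg hpos x) (Real.exp_pos _).le))
      _ = _ := by rw [integral_const_mul]; rfl
  have hind : II U (fun x => (u x - m) ^ 2) ≤
      Real.exp A * (∫ x in B, (u x - m) ^ 2) + M ^ 2 * II U (Bᶜ.indicator fun _ => 1) := by
    have Dm : Dom U (fun x => (u x - m) ^ 2) (M * M) := by
      refine Dom.of_bdd (by fun_prop) fun x => ?_
      have a1 := hu2 x; have a2 := hu2 y; have a3 := hpos x; have a4 := hpos y
      rw [abs_of_nonneg (sq_nonneg _)]
      rw [← hm] at a2 a4
      nlinarith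
    have j1 := Dm.integrable hU
    have j3 : Integrable (fun x => Bᶜ.indicator (fun _ => (1:ℝ)) x * Real.exp (-U x)) := by
      refine Dom.integrable (C := 1) hU (Dom.of_bdd (measurable_const.indicator hBm.compl) fun x => ?_)
      by_cases hx : x ∈ Bᶜ <;> simp [hx]
    have j2 : Integrable (B.indicator fun x => (u x - m) ^ 2) := iu.integrable_indicator hBm
    unfold II
    rw [← integral_indicator hBm, ← integral_const_mul, ← integral_const_mul,
      ← integral_add (j2.const_mul _) (j3.const_mul _)]
    refine integral_mono j1 ((j2.const_mul _).add (j3.const_mul _)) fun x => ?_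
    by_cases hx : x ∈ B
    · have hx' : x ∉ Bᶜ := fun h => h hx
      simp only [Set.indicator_of_mem hx, Set.indicator_of_notMem hx', zero_mul, mul_zero, add_zero]
      rw [mul_comm]
      exact mul_le_mul_of_nonneg_right (w1 x hx) (sq_nonneg _)
    · have hx' : x ∈ Bᶜ := hx
      simp only [Set.indicator_of_mem hx', Set.indicator_of_notMem hx, mul_zero, zero_add, one_mul]
      refine mul_le_mul_of_nonneg_right ?_ (Real.exp_pos _).le
      have a1 := hu2 x; have a2 := hu2 y; have a3 := hpos x; have a4 := hpos y
      rw [← hm] at a2 a4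
      nlinarith
  refine hvar.trans ?_
  have hf : II U (fun x => (u x - m) ^ 2) ≤ Real.exp A * C * (M * Real.exp A) * II U (fi u) +
      M ^ 2 * II U (Bᶜ.indicator fun _ => 1) := by
    have k1 := mul_le_mul_of_nonneg_left hGle hC0
    have k2 := mul_le_mul_of_nonneg_left (hreal.trans k1) (Real.exp_pos A).le
    refine hind.trans ?_
    linarith
  have := mul_le_mul_of_nonneg_left hf hZ0
  linarith

end poincare


section radial
variable {d : ℕ}

/-- Squared norm, in coordinates. -/
noncomputable def nsq (x : EuclideanSpace ℝ (Fin d)) : ℝ := ∑ i, x i * x i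

theorem nsq_eq (x : EuclideanSpace ℝ (Fin d)) : nsq x = ‖x‖ ^ 2 := by
  rw [EuclideanSpace.norm_sq_eq]; unfold nsq
  refine Finset.sum_congr rfl fun i _ => ?_
  rw [Real.norm_eq_abs, sq_abs]; ring

theorem nsq_nonneg (x : EuclideanSpace ℝ (Fin d)) : 0 ≤ nsq x := by rw [nsq_eq]; positivity

theorem abs_coord_le (x : EuclideanSpace ℝ (Fin d)) (i : Fin d) : |x i| ≤ ‖x‖ := by
  simpa using PiLp.norm_apply_le x i

theorem crd_sm (i : Fin d) : Sm (fun x : EuclideanSpace ℝ (Fin d) => x i) :=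
  (EuclideanSpace.proj (𝕜 := ℝ) i).contDiff

theorem pd_crd (i j : Fin d) :
    pd i (fun x : EuclideanSpace ℝ (Fin d) => x j) = fun _ => if i = j then 1 else 0 := by
  funext x
  unfold pd
  have h : fderiv ℝ (fun x : EuclideanSpace ℝ (Fin d) => x j) x = EuclideanSpace.proj (𝕜 := ℝ) j :=
    (EuclideanSpace.proj (𝕜 := ℝ) j).hasFDerivAt.fderiv
  rw [h]
  simp [Pi.single_apply, eq_comm]

theorem nsq_sm : Sm (nsq (d := d)) := by
  unfold nsq
  exact Sm.sum fun i _ => (crd_sm i).mul (crd_sm i)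

theorem pd_nsq (i : Fin d) : pd i (nsq (d := d)) = fun x => 2 * x i := by
  have h : (nsq (d := d)) = fun x => ∑ j, x j * x j := rfl
  rw [h, pd_sum (fun j _ => (crd_sm j).mul (crd_sm j))]
  funext x
  have : ∀ j ∈ (Finset.univ : Finset (Fin d)), pd i (fun x : EuclideanSpace ℝ (Fin d) => x j * x j) x
      = if i = j then 2 * x j else 0 := by
    intro j _
    rw [pd_mul (crd_sm j) (crd_sm j), pd_crd]
    split_ifs <;> ring
  rw [Finset.sum_congr rfl this]
  simp

theorem radial_sm {φ : ℝ → ℝ} (hφ : ContDiff ℝ (⊤ : ℕ∞) φ) :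
    Sm (fun x : EuclideanSpace ℝ (Fin d) => φ (nsq x)) := by
  have h : ContDiff ℝ (⊤ : ℕ∞) (nsq (d := d)) := nsq_sm
  exact hφ.comp h

theorem deriv_cd {φ : ℝ → ℝ} (hφ : ContDiff ℝ (⊤ : ℕ∞) φ) : ContDiff ℝ (⊤ : ℕ∞) (deriv φ) :=
  (contDiff_infty_iff_deriv.1 hφ).2

theorem radial_pd {φ : ℝ → ℝ} (hφ : ContDiff ℝ (⊤ : ℕ∞) φ) (i : Fin d) :
    pd i (fun x : EuclideanSpace ℝ (Fin d) => φ (nsq x)) = fun x => deriv φ (nsq x) * (2 * x i) := by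
  funext x
  rw [pd_comp nsq_sm i φ x ((hφ.differentiable (by simp)) _).hasDerivAt, pd_nsq]

theorem radial_pd2 {φ : ℝ → ℝ} (hφ : ContDiff ℝ (⊤ : ℕ∞) φ) (i j : Fin d) :
    pd i (pd j (fun x : EuclideanSpace ℝ (Fin d) => φ (nsq x))) = fun x =>
      deriv (deriv φ) (nsq x) * (4 * (x i * x j)) + if i = j then 2 * deriv φ (nsq x) else 0 := by
  rw [radial_pd hφ j, pd_mul (radial_sm (deriv_cd hφ)) ((Sm.const 2).mul (crd_sm j)),
    radial_pd (deriv_cd hφ), pd_const_mul (crd_sm j), pd_crd]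
  funext x
  split_ifs <;> ring

theorem radial_hess_form {φ : ℝ → ℝ} (hφ : ContDiff ℝ (⊤ : ℕ∞) φ) (x v : EuclideanSpace ℝ (Fin d)) :
    ∑ i, ∑ j, v i * pd i (pd j (fun x : EuclideanSpace ℝ (Fin d) => φ (nsq x))) x * v j
     = 4 * deriv (deriv φ) (nsq x) * (∑ i, x i * v i) ^ 2 + 2 * deriv φ (nsq x) * ∑ i, v i * v i := by
  have h : ∀ i j : Fin d, v i * pd i (pd j (fun x : EuclideanSpace ℝ (Fin d) => φ (nsq x))) x * v j =
      4 * deriv (deriv φ) (nsq x) * ((x i * v i) * (x j * v j)) +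
        2 * deriv φ (nsq x) * (if i = j then v i * v j else 0) := by
    intro i j
    rw [radial_pd2 hφ]
    split_ifs <;> ring
  simp only [h, Finset.sum_add_distrib, ← Finset.mul_sum, sq, Finset.sum_mul_sum]
  simp

theorem radial_lap {φ : ℝ → ℝ} (hφ : ContDiff ℝ (⊤ : ℕ∞) φ) (x : EuclideanSpace ℝ (Fin d)) :
    lap (fun x : EuclideanSpace ℝ (Fin d) => φ (nsq x)) x
     = 4 * deriv (deriv φ) (nsq x) * nsq x + 2 * d * deriv φ (nsq x) := by
  unfold lap
  have h : ∀ i : Fin d, pd i (fun y => pd i (fun x : EuclideanSpace ℝ (Fin d) => φ (nsq x)) y) x =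
      4 * deriv (deriv φ) (nsq x) * (x i * x i) + 2 * deriv φ (nsq x) := by
    intro i
    have := congrFun (radial_pd2 hφ i i) x
    rw [this]; simp; ring
  simp only [h, Finset.sum_add_distrib, ← Finset.mul_sum]
  simp [nsq]; ring

theorem integrable_gauss {b : ℝ} (hb : 0 < b) :
    Integrable (fun x : EuclideanSpace ℝ (Fin d) => Real.exp (-(b * nsq x))) := by
  have h := GaussianFourier.integrable_cexp_neg_mul_sq_norm_add_of_euclideanSpace (ι := Fin d)
    (b := (b : ℂ)) (by simpa using hb) 0 0
  have h2 := h.norm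
  refine h2.congr (Filter.Eventually.of_forall fun x => ?_)
  simp only [Complex.norm_exp]
  congr 1
  rw [nsq_eq]
  simp [← Complex.ofReal_pow]

/-- The convex profile used to confine the potential. -/
noncomputable def wpr (T s : ℝ) : ℝ := ∫ τ in T..s, Real.smoothTransition (τ - T)

theorem wpr_deriv (T s : ℝ) : HasDerivAt (wpr T) (Real.smoothTransition (s - T)) s := by
  have hc : Continuous fun τ : ℝ => Real.smoothTransition (τ - T) :=
    Real.smoothTransition.continuous.comp (by fun_prop)
  exact intervalIntegral.integral_hasDerivAt_right (hc.intervalIntegrable _ _)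
    (hc.stronglyMeasurableAtFilter _ _) hc.continuousAt

theorem wpr_deriv_eq (T : ℝ) : deriv (wpr T) = fun s => Real.smoothTransition (s - T) :=
  funext fun s => (wpr_deriv T s).deriv

theorem st_shift_cd (T : ℝ) : ContDiff ℝ (⊤ : ℕ∞) fun s => Real.smoothTransition (s - T) :=
  Real.smoothTransition.contDiff.comp (contDiff_id.sub contDiff_const)

theorem wpr_cd (T : ℝ) : ContDiff ℝ (⊤ : ℕ∞) (wpr T) := by
  refine contDiff_infty_iff_deriv.2 ⟨fun s => (wpr_deriv T s).differentiableAt, ?_⟩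
  rw [wpr_deriv_eq]; exact st_shift_cd T

theorem wpr_deriv2_nonneg (T s : ℝ) : 0 ≤ deriv (deriv (wpr T)) s := by
  rw [wpr_deriv_eq]
  have : Monotone fun s => Real.smoothTransition (s - T) :=
    fun a b h => Real.smoothTransition.monotone (by linarith)
  exact this.deriv_nonneg

theorem wpr_zero {T s : ℝ} (h : s ≤ T) : wpr T s = 0 := by
  unfold wpr
  rw [intervalIntegral.integral_symm]
  have : ∫ τ in s..T, Real.smoothTransition (τ - T) = ∫ τ in s..T, (0 : ℝ) := by
    refine intervalIntegral.integral_congr fun τ hτ => ?_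
    rw [Set.uIcc_of_le h] at hτ
    exact Real.smoothTransition.zero_of_nonpos (by linarith [hτ.2])
  rw [this]; simp

theorem wpr_nonneg (T s : ℝ) : 0 ≤ wpr T s := by
  rcases le_total s T with h | h
  · rw [wpr_zero h]
  · exact intervalIntegral.integral_nonneg h fun τ _ => Real.smoothTransition.nonneg _

theorem wpr_large {T s : ℝ} (h : T + 1 ≤ s) : wpr T s = wpr T (T + 1) + (s - (T + 1)) := by
  have hc : Continuous fun τ : ℝ => Real.smoothTransition (τ - T) :=
    Real.smoothTransition.continuous.comp (by fun_prop)
  unfold wpr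
  rw [← intervalIntegral.integral_add_adjacent_intervals (b := T + 1) (hc.intervalIntegrable _ _)
    (hc.intervalIntegrable _ _)]
  congr 1
  have : ∫ τ in (T+1)..s, Real.smoothTransition (τ - T) = ∫ τ in (T+1)..s, (1 : ℝ) := by
    refine intervalIntegral.integral_congr fun τ hτ => ?_
    rw [Set.uIcc_of_le h] at hτ
    exact Real.smoothTransition.one_of_one_le (by linarith [hτ.1])
  rw [this]; simp

end radial


section nicepot
variable {d : ℕ}

theorem abs_form_le {H : Fin d → Fin d → ℝ} {K : ℝ} (hK : ∀ i j, |H i j| ≤ K)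
    (v : EuclideanSpace ℝ (Fin d)) :
    |∑ i, ∑ j, v i * H i j * v j| ≤ d * K * ∑ i, v i * v i := by
  calc |∑ i, ∑ j, v i * H i j * v j| ≤ ∑ i, ∑ j, |v i * H i j * v j| :=
        (Finset.abs_sum_le_sum_abs _ _).trans
          (Finset.sum_le_sum fun i _ => Finset.abs_sum_le_sum_abs _ _)
    _ ≤ ∑ i, ∑ j : Fin d, K * ((v i * v i + v j * v j) / 2) := by
        refine Finset.sum_le_sum fun i _ => Finset.sum_le_sum fun j _ => ?_
        rw [abs_mul, abs_mul]
        have h1 : |v i| * |v j| ≤ (v i * v i + v j * v j) / 2 := by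
          have := sq_nonneg (|v i| - |v j|)
          have e1 := abs_mul_abs_self (v i)
          have e2 := abs_mul_abs_self (v j)
          nlinarith
        calc |v i| * |H i j| * |v j| = |H i j| * (|v i| * |v j|) := by ring
          _ ≤ K * ((v i * v i + v j * v j) / 2) :=
            mul_le_mul (hK i j) h1 (by positivity) ((abs_nonneg _).trans (hK i j))
    _ = d * K * ∑ i, v i * v i := by
        simp only [← Finset.mul_sum, add_div, Finset.sum_add_distrib]
        simp only [Finset.sum_const, Finset.card_univ, Fintype.card_fin, nsmul_eq_mul,
          ← Finset.sum_div, ← Finset.mul_sum]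
        ring

theorem hess_form_add {u w : EuclideanSpace ℝ (Fin d) → ℝ} (hu : Sm u) (hw : Sm w)
    (x v : EuclideanSpace ℝ (Fin d)) :
    ∑ i, ∑ j, v i * pd i (pd j (fun x => u x + w x)) x * v j =
      ∑ i, ∑ j, v i * pd i (pd j u) x * v j + ∑ i, ∑ j, v i * pd i (pd j w) x * v j := by
  rw [← Finset.sum_add_distrib]
  refine Finset.sum_congr rfl fun i _ => ?_
  rw [← Finset.sum_add_distrib]
  refine Finset.sum_congr rfl fun j _ => ?_
  rw [pd_add hu hw, pd_add (hu.pd j) (hw.pd j)]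
  ring

theorem hess_form_smul {u : EuclideanSpace ℝ (Fin d) → ℝ} (hu : Sm u) (A : ℝ)
    (x v : EuclideanSpace ℝ (Fin d)) :
    ∑ i, ∑ j, v i * pd i (pd j (fun x => A * u x)) x * v j =
      A * ∑ i, ∑ j, v i * pd i (pd j u) x * v j := by
  rw [Finset.mul_sum]
  refine Finset.sum_congr rfl fun i _ => ?_
  rw [Finset.mul_sum]
  refine Finset.sum_congr rfl fun j _ => ?_
  rw [pd_const_mul hu, pd_const_mul (hu.pd j)]
  ring

theorem hess_form_congr {u w : EuclideanSpace ℝ (Fin d) → ℝ} {x : EuclideanSpace ℝ (Fin d)}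
    (h : u =ᶠ[nhds x] w) (v : EuclideanSpace ℝ (Fin d)) :
    ∑ i, ∑ j, v i * pd i (pd j u) x * v j = ∑ i, ∑ j, v i * pd i (pd j w) x * v j := by
  refine Finset.sum_congr rfl fun i _ => Finset.sum_congr rfl fun j _ => ?_
  rw [pd_congr_nhds (pd_congr_nhds' h j) i]

theorem bd_hess_of_const_outside {Q : EuclideanSpace ℝ (Fin d) → ℝ} {c r : ℝ} (hQ : Sm Q)
    (h : ∀ x, r < ‖x‖ → Q x = c) (k : ℕ) : ∃ S, ∀ i j, Bd k S (pd i (pd j Q)) := by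
  obtain ⟨S, hS⟩ := Bd.of_const_outside (k+2) hQ h
  exact ⟨S, fun i j => (hS.2 j).2 i⟩

/-- A quadratic potential perturbed inside a ball is well behaved. -/
theorem nice_of_quadratic {Q : EuclideanSpace ℝ (Fin d) → ℝ} {c r A : ℝ} (hA : 1 ≤ A) (hQ : Sm Q)
    (h : ∀ x, r < ‖x‖ → Q x = c) : Nice (fun x => Q x + A * nsq x) := by
  have hAN : Sm (fun x : EuclideanSpace ℝ (Fin d) => A * nsq x) := (Sm.const A).mul nsq_sm
  have hp : ∀ i, pd i (fun x => Q x + A * nsq x) = fun x => pd i Q x + A * (2 * x i) := by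
    intro i
    rw [pd_add hQ hAN, pd_const_mul nsq_sm, pd_nsq]
  refine ⟨hQ.add hAN, fun k => ?_, ?_⟩
  · obtain ⟨S, hS⟩ := bd_hess_of_const_outside hQ h k
    refine ⟨S + |A * 2|, fun i j => ?_⟩
    have h2 : Sm (fun x : EuclideanSpace ℝ (Fin d) => 2 * x j) := (Sm.const 2).mul (crd_sm j)
    rw [hp, pd_add (hQ.pd j) ((Sm.const A).mul h2), pd_const_mul h2, pd_const_mul (crd_sm j), pd_crd]
    refine Bd.add ((hQ.pd j).pd i) (Sm.const _) (hS i j) (Bd.const ?_)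
    split_ifs <;> simp
  · obtain ⟨S, hS⟩ := Bd.of_const_outside 1 hQ h
    have hS0 := hS.nonneg
    have hg : Integrable (fun x : EuclideanSpace ℝ (Fin d) => Real.exp (-((1/2) * nsq x))) :=
      integrable_gauss (by norm_num)
    set D : ℝ := 1 + d ^ 2 * (2 * S ^ 2 + 8 * A ^ 2) with hD
    have hcont : Continuous (fun x => Wt (fun x => Q x + A * nsq x) x * Real.exp (-(Q x + A * nsq x))) := by
      have h1 := (hQ.add hAN).cont
      have h2 : ∀ i, Continuous (pd i (fun x => Q x + A * nsq x)) := fun i => ((hQ.add hAN).pd i).cont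
      have h3 : Continuous (Wt (fun x => Q x + A * nsq x)) := by
        unfold Wt nrm1 grd
        simp only
        exact continuous_const.add ((continuous_finsetSum _ fun i _ => (h2 i).abs).pow 2)
      exact h3.mul (Real.continuous_exp.comp h1.neg)
    refine Integrable.mono' (hg.const_mul (2 * D * Real.exp S)) hcont.aestronglyMeasurable
      (Filter.Eventually.of_forall fun x => ?_)
    have hN := nsq_nonneg x
    have hW : Wt (fun x => Q x + A * nsq x) x ≤ D * (1 + nsq x) := by
      have h1 : nrm1 (grd (fun x => Q x + A * nsq x) x) ≤ d * (S + 2 * A * ‖x‖) := by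
        unfold nrm1 grd
        calc ∑ i, |pd i (fun x => Q x + A * nsq x) x| ≤ ∑ _i : Fin d, (S + 2 * A * ‖x‖) := by
              refine Finset.sum_le_sum fun i _ => ?_
              rw [hp]
              refine (abs_add_le _ _).trans (add_le_add ((hS.2 i) x) ?_)
              rw [abs_mul, abs_mul, abs_of_nonneg (by linarith : (0:ℝ) ≤ A), abs_two]
              have := abs_coord_le x i
              nlinarith
          _ = _ := by simp [mul_add]
      have h2 : nrm1 (grd (fun x => Q x + A * nsq x) x) ^ 2 ≤ (d * (S + 2 * A * ‖x‖)) ^ 2 :=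
        pow_le_pow_left₀ (nrm1_nonneg _) h1 2
      have h3 : (S + 2 * A * ‖x‖) ^ 2 ≤ 2 * S ^ 2 + 8 * A ^ 2 * nsq x := by
        rw [nsq_eq]; nlinarith [sq_nonneg (S - 2 * A * ‖x‖)]
      have h4 : (S + 2 * A * ‖x‖) ^ 2 ≤ (2 * S ^ 2 + 8 * A ^ 2) * (1 + nsq x) := by
        nlinarith [mul_nonneg (sq_nonneg S) hN, sq_nonneg A]
      unfold Wt
      calc 1 + nrm1 (grd (fun x => Q x + A * nsq x) x) ^ 2 ≤ 1 + d ^ 2 * (S + 2 * A * ‖x‖) ^ 2 := by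
            rw [← mul_pow]; linarith
        _ ≤ 1 + d ^ 2 * ((2 * S ^ 2 + 8 * A ^ 2) * (1 + nsq x)) := by gcongr
        _ ≤ D * (1 + nsq x) := by rw [hD]; nlinarith
    have hE : Real.exp (-(Q x + A * nsq x)) ≤ Real.exp S * Real.exp (-nsq x) := by
      rw [← Real.exp_add]
      apply Real.exp_le_exp.2
      have := (abs_le.1 (hS.1 x)).1
      nlinarith
    have hF : (1 + nsq x) * Real.exp (-nsq x) ≤ 2 * Real.exp (-((1/2) * nsq x)) := by
      have h1 := Real.add_one_le_exp ((1/2) * nsq x)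
      have h2 : Real.exp (-nsq x) = Real.exp (-((1/2) * nsq x)) * Real.exp (-((1/2) * nsq x)) := by
        rw [← Real.exp_add]; ring_nf
      have h3 : Real.exp ((1/2) * nsq x) * Real.exp (-((1/2) * nsq x)) = 1 := by
        rw [← Real.exp_add]; simp
      have h4 := Real.exp_pos (-((1/2) * nsq x))
      calc (1 + nsq x) * Real.exp (-nsq x) ≤ (2 * Real.exp ((1/2) * nsq x)) * Real.exp (-nsq x) := by
            apply mul_le_mul_of_nonneg_right _ (Real.exp_pos _).le
            linarith
        _ = 2 * (Real.exp ((1/2) * nsq x) * Real.exp (-((1/2) * nsq x))) * Real.exp (-((1/2) * nsq x)) := by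
            rw [h2]; ring
        _ = _ := by rw [h3]; ring
    have hD0 : 0 ≤ D := by rw [hD]; positivity
    have hW0 : 0 ≤ Wt (fun x => Q x + A * nsq x) x := zero_le_one.trans (Wt_ge_one _ x)
    rw [Real.norm_eq_abs, abs_of_nonneg (mul_nonneg hW0 (Real.exp_pos _).le)]
    calc _ ≤ (D * (1 + nsq x)) * (Real.exp S * Real.exp (-nsq x)) :=
          mul_le_mul hW hE (Real.exp_pos _).le (by positivity)
      _ = D * Real.exp S * ((1 + nsq x) * Real.exp (-nsq x)) := by ring
      _ ≤ D * Real.exp S * (2 * Real.exp (-((1/2) * nsq x))) := by gcongr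
      _ = _ := by ring

theorem exists_nice {V : EuclideanSpace ℝ (Fin d) → ℝ} (hV : Sm V) {ρ : ℝ} (hρ : 0 ≤ ρ)
    (hH : ∀ x v : EuclideanSpace ℝ (Fin d), (-ρ) * ∑ i, v i * v i ≤
      ∑ i, ∑ j, v i * pd i (pd j V) x * v j) {T : ℝ} (hT : 0 ≤ T) :
    ∃ U : EuclideanSpace ℝ (Fin d) → ℝ, Nice U ∧ (∀ x, nsq x ≤ T → U x = V x) ∧
      (∀ x v : EuclideanSpace ℝ (Fin d), (-ρ) * ∑ i, v i * v i ≤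
        ∑ i, ∑ j, v i * pd i (pd j U) x * v j) ∧
      (∀ x, Real.exp (-U x) ≤ Real.exp (-V x) + Real.exp (-nsq x)) := by
  set φ : ℝ → ℝ := fun s => 1 - Real.smoothTransition (s - (T + 2)) with hφ
  have hφs : ContDiff ℝ (⊤ : ℕ∞) φ := contDiff_const.sub (st_shift_cd (T + 2))
  set P : EuclideanSpace ℝ (Fin d) → ℝ := fun x => φ (nsq x) * V x with hP
  have hPs : Sm P := (radial_sm hφs).mul hV
  have hP1 : ∀ x, nsq x ≤ T + 2 → P x = V x := by
    intro x hx
    simp [hP, hφ, Real.smoothTransition.zero_of_nonpos (show nsq x - (T + 2) ≤ 0 by linarith)]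
  have hrad : ∀ x : EuclideanSpace ℝ (Fin d), T + 3 < ‖x‖ → T + 3 ≤ nsq x := by
    intro x hx; rw [nsq_eq]; nlinarith
  have hP0 : ∀ x, T + 3 < ‖x‖ → P x = 0 := by
    intro x hx
    have := hrad x hx
    simp [hP, hφ, Real.smoothTransition.one_of_one_le (show 1 ≤ nsq x - (T + 2) by linarith)]
  obtain ⟨K, hK⟩ := Bd.of_const_outside 2 hPs hP0
  have hK0 := hK.nonneg
  set A : ℝ := 1 + d * K + (1 + K) * (T + 2) with hA
  have hA1 : 1 ≤ A := by
    have : 0 ≤ d * K := by positivity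
    have : 0 ≤ (1 + K) * (T + 2) := by positivity
    linarith
  have hws : Sm (fun x : EuclideanSpace ℝ (Fin d) => wpr T (nsq x)) := radial_sm (wpr_cd T)
  set U : EuclideanSpace ℝ (Fin d) → ℝ := fun x => P x + A * wpr T (nsq x) with hU
  set Q : EuclideanSpace ℝ (Fin d) → ℝ := fun x => P x + A * (wpr T (nsq x) - nsq x) with hQ
  have hQs : Sm Q := hPs.add ((Sm.const A).mul (hws.sub nsq_sm))
  have hUQ : U = fun x => Q x + A * nsq x := by
    funext x; simp only [hU, hQ]; ring
  have hwf : ∀ x v : EuclideanSpace ℝ (Fin d), 0 ≤ deriv (wpr T) (nsq x) ∧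
      2 * deriv (wpr T) (nsq x) * ∑ i, v i * v i ≤
        ∑ i, ∑ j, v i * pd i (pd j (fun x : EuclideanSpace ℝ (Fin d) => wpr T (nsq x))) x * v j := by
    intro x v
    rw [radial_hess_form (wpr_cd T)]
    have h1 := wpr_deriv2_nonneg T (nsq x)
    refine ⟨?_, ?_⟩
    · rw [wpr_deriv_eq]; exact Real.smoothTransition.nonneg _
    · have := mul_nonneg h1 (sq_nonneg (∑ i, x i * v i))
      linarith
  have hvv : ∀ v : EuclideanSpace ℝ (Fin d), 0 ≤ ∑ i, v i * v i :=
    fun v => Finset.sum_nonneg fun i _ => mul_self_nonneg _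
  refine ⟨U, ?_, ?_, ?_, ?_⟩
  · rw [hUQ]
    refine nice_of_quadratic (c := A * (wpr T (T + 1) - (T + 1))) (r := T + 3) hA1 hQs fun x hx => ?_
    have := hrad x hx
    simp only [hQ]
    rw [hP0 x hx, wpr_large (by linarith : T + 1 ≤ nsq x)]
    ring
  · intro x hx
    simp only [hU]
    rw [hP1 x (by linarith), wpr_zero hx]; ring
  · intro x v
    have hAw : Sm (fun x : EuclideanSpace ℝ (Fin d) => A * wpr T (nsq x)) := (Sm.const A).mul hws
    simp only [hU]
    rw [hess_form_add hPs hAw, hess_form_smul hws]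
    obtain ⟨h0, h1⟩ := hwf x v
    have hv := hvv v
    by_cases hx : nsq x < T + 2
    · have hc : P =ᶠ[nhds x] V := by
        filter_upwards [(isOpen_lt nsq_sm.cont continuous_const).mem_nhds hx] with y hy
          using hP1 y (le_of_lt hy)
      rw [hess_form_congr hc]
      have h2 := hH x v
      have h3 : 0 ≤ ∑ i, ∑ j, v i * pd i (pd j (fun x : EuclideanSpace ℝ (Fin d) => wpr T (nsq x))) x * v j :=
        le_trans (by positivity) h1
      have h4 := mul_nonneg (by linarith : 0 ≤ A) h3
      linarith
    · push Not at hx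
      have h2 : deriv (wpr T) (nsq x) = 1 := by
        rw [wpr_deriv_eq]; exact Real.smoothTransition.one_of_one_le (by linarith)
      rw [h2] at h1
      have h3 := (abs_le.1 (abs_form_le (fun i j => ((hK.2 j).2 i) x) v)).1
      have h4 := mul_le_mul_of_nonneg_left h1 (by linarith : 0 ≤ A)
      have h5 : d * K * ∑ i, v i * v i ≤ A * (2 * 1 * ∑ i, v i * v i) := by
        have : d * K ≤ A * 2 := by
          have : 0 ≤ d * K := by positivity
          have : 0 ≤ (1 + K) * (T + 2) := by positivity
          linarith
        nlinarith
      have h6 : 0 ≤ ρ * ∑ i, v i * v i := mul_nonneg hρ hv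
      linarith
  · intro x
    by_cases hx : nsq x < T + 2
    · have h1 : U x = V x + A * wpr T (nsq x) := by
        simp only [hU]; rw [hP1 x hx.le]
      have h2 := mul_nonneg (by linarith : 0 ≤ A) (wpr_nonneg T (nsq x))
      have h3 : Real.exp (-U x) ≤ Real.exp (-V x) := Real.exp_le_exp.2 (by rw [h1]; linarith)
      have := Real.exp_pos (-nsq x)
      linarith
    · push Not at hx
      have h1 : wpr T (nsq x) ≥ nsq x - (T + 1) := by
        rw [wpr_large (by linarith : T + 1 ≤ nsq x)]
        have := wpr_nonneg T (T + 1)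
        linarith
      have h2 := (abs_le.1 (hK.1 x)).1
      have h3 : nsq x ≤ U x := by
        simp only [hU]
        have hAA : (1 + K) * (T + 2) ≤ A := by
          have : 0 ≤ d * K := by positivity
          linarith
        have h4 : A * (nsq x - (T + 1)) ≤ A * wpr T (nsq x) := by gcongr
        have h5 : (1 + K) * (T + 2) * (nsq x - (T + 1)) ≤ A * (nsq x - (T + 1)) :=
          mul_le_mul_of_nonneg_right hAA (by linarith)
        have h6 : nsq x ≤ (T + 2) * (nsq x - (T + 1)) := by nlinarith
        have h7 : (1 + K) * nsq x ≤ (1 + K) * ((T + 2) * (nsq x - (T + 1))) := by gcongr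
        nlinarith
      have h4 : Real.exp (-U x) ≤ Real.exp (-nsq x) := Real.exp_le_exp.2 (by linarith)
      have := Real.exp_pos (-V x)
      linarith

end nicepot


section weight
variable {d : ℕ}

theorem psd_form {H : Matrix (Fin d) (Fin d) ℝ} {r : ℝ} (h : (H - r • 1).PosSemidef)
    (v : EuclideanSpace ℝ (Fin d)) :
    r * ∑ i, v i * v i ≤ ∑ i, ∑ j, v i * H i j * v j := by
  have h1 := h.dotProduct_mulVec_nonneg (fun i => v i)
  have h2 : star (fun i => v i) ⬝ᵥ ((H - r • 1) *ᵥ (fun i => v i)) =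
      ∑ i, ∑ j, v i * H i j * v j - r * ∑ i, v i * v i := by
    rw [Matrix.sub_mulVec, dotProduct_sub]
    congr 1
    · simp only [dotProduct, mulVec, Finset.mul_sum, Pi.star_apply, star_trivial]
      exact Finset.sum_congr rfl fun i _ => Finset.sum_congr rfl fun j _ => by ring
    · rw [Matrix.smul_mulVec, Matrix.one_mulVec]
      simp only [dotProduct, Finset.mul_sum, Pi.star_apply, star_trivial, Pi.smul_apply, smul_eq_mul]
      exact Finset.sum_congr rfl fun i _ => by ring
  rw [h2] at h1
  linarith

theorem minEig_form {H : Matrix (Fin d) (Fin d) ℝ} (hH : H.IsHermitian)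
    (v : EuclideanSpace ℝ (Fin d)) :
    minEig H * ∑ i, v i * v i ≤ ∑ i, ∑ j, v i * H i j * v j := by
  apply psd_form
  have h1 : (H - minEig H • (1 : Matrix (Fin d) (Fin d) ℝ)).IsHermitian :=
    hH.sub (by simp [Matrix.IsHermitian])
  rw [h1.posSemidef_iff_eigenvalues_nonneg]
  intro i
  have h2 : h1.eigenvalues i ∈ spectrum ℝ (H - minEig H • (1 : Matrix (Fin d) (Fin d) ℝ)) := by
    rw [h1.spectrum_real_eq_range_eigenvalues]; exact ⟨i, rfl⟩
  generalize h1.eigenvalues i = l at h2 ⊢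
  have h3 : l + minEig H ∈ spectrum ℝ H := by
    rw [← Algebra.algebraMap_eq_smul_one] at h2
    rw [spectrum.add_mem_iff (R := ℝ) (a := H) (r := l) (s := minEig H)]
    convert h2 using 2
    abel
  have hfin : (spectrum ℝ H).Finite := by
    rw [hH.spectrum_real_eq_range_eigenvalues]; exact Set.finite_range _
  have h4 : minEig H ≤ l + minEig H := csInf_le hfin.bddBelow h3
  simp only [Pi.zero_apply]
  linarith

theorem grad_radial_lower {V : EuclideanSpace ℝ (Fin d) → ℝ} (hV : Sm V) {ρ : ℝ}
    (hH : ∀ x v : EuclideanSpace ℝ (Fin d), (-ρ) * ∑ i, v i * v i ≤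
      ∑ i, ∑ j, v i * pd i (pd j V) x * v j) (x : EuclideanSpace ℝ (Fin d)) :
    -(ρ * nsq x + (∑ i, |pd i V 0|) * ‖x‖) ≤ ∑ i, x i * pd i V x := by
  set F : ℝ → ℝ := fun τ => ∑ j, x j * pd j V (0 + τ • x) + ρ * nsq x * τ with hF
  have hd : ∀ τ, HasDerivAt F (∑ j, x j * (∑ i, x i * pd i (pd j V) (0 + τ • x)) + ρ * nsq x) τ := by
    intro τ
    refine HasDerivAt.add ?_ ?_
    · refine HasDerivAt.fun_sum fun j _ => ?_
      exact (hasDerivAt_line (hV.pd j) 0 x τ).const_mul _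
    · simpa using (hasDerivAt_id τ).const_mul (ρ * nsq x)
  have hmono : Monotone F := by
    apply monotone_of_deriv_nonneg (fun τ => (hd τ).differentiableAt)
    intro τ
    rw [(hd τ).deriv]
    have h1 := hH (0 + τ • x) x
    have h2 : ∑ j, x j * (∑ i, x i * pd i (pd j V) (0 + τ • x)) =
        ∑ i, ∑ j, x i * pd i (pd j V) (0 + τ • x) * x j := by
      rw [Finset.sum_comm]
      refine Finset.sum_congr rfl fun j _ => ?_
      rw [Finset.mul_sum]
      exact Finset.sum_congr rfl fun i _ => by ring
    rw [h2]
    have h3 : (-ρ) * ∑ i, x i * x i = - (ρ * nsq x) := by unfold nsq; ring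
    linarith
  have h01 := hmono (zero_le_one)
  simp only [hF, zero_smul, one_smul, zero_add, mul_zero, add_zero, mul_one] at h01
  have h0 : -((∑ i, |pd i V 0|) * ‖x‖) ≤ ∑ i, x i * pd i V 0 := by
    rw [Finset.sum_mul, ← Finset.sum_neg_distrib]
    refine Finset.sum_le_sum fun i _ => ?_
    have h1 : |x i * pd i V 0| ≤ |pd i V 0| * ‖x‖ := by
      rw [abs_mul, mul_comm]
      exact mul_le_mul_of_nonneg_left (abs_coord_le x i) (abs_nonneg _)
    exact (abs_le.1 h1).1
  linarith

/-- One-dimensional cutoff profile. -/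
noncomputable def eta (s : ℝ) : ℝ := 1 - Real.smoothTransition ((s - 1) / 3)

theorem eta_cd : ContDiff ℝ (⊤ : ℕ∞) eta :=
  contDiff_const.sub (Real.smoothTransition.contDiff.comp
    ((contDiff_id.sub contDiff_const).div_const 3))

theorem eta_one {s : ℝ} (h : s ≤ 1) : eta s = 1 := by
  unfold eta; rw [Real.smoothTransition.zero_of_nonpos (by linarith)]; ring

theorem eta_zero {s : ℝ} (h : 4 ≤ s) : eta s = 0 := by
  unfold eta; rw [Real.smoothTransition.one_of_one_le (by linarith)]; ring

theorem eta_nonneg (s : ℝ) : 0 ≤ eta s := by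
  unfold eta; linarith [Real.smoothTransition.le_one ((s - 1) / 3)]

theorem eta_le_one (s : ℝ) : eta s ≤ 1 := by
  unfold eta; linarith [Real.smoothTransition.nonneg ((s - 1) / 3)]

theorem eta_deriv_nonpos (s : ℝ) : deriv eta s ≤ 0 := by
  have : Antitone eta := fun a b h => by
    unfold eta
    have := Real.smoothTransition.monotone (show (a - 1) / 3 ≤ (b - 1) / 3 by linarith)
    linarith
  exact this.deriv_nonpos

theorem eta_bound : ∃ K : ℝ, 0 ≤ K ∧ ∀ s, 0 ≤ s → s ≤ 4 → |deriv eta s| ≤ K ∧ |deriv (deriv eta) s| ≤ K := by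
  obtain ⟨K1, h1⟩ := (isCompact_Icc (a := (0:ℝ)) (b := 4)).exists_bound_of_continuousOn
    (f := deriv eta) (deriv_cd eta_cd).continuous.continuousOn
  obtain ⟨K2, h2⟩ := (isCompact_Icc (a := (0:ℝ)) (b := 4)).exists_bound_of_continuousOn
    (f := deriv (deriv eta)) (deriv_cd (deriv_cd eta_cd)).continuous.continuousOn
  refine ⟨max 0 (max K1 K2), le_max_left _ _, fun s hs hs' => ⟨?_, ?_⟩⟩
  · exact (h1 s ⟨hs, hs'⟩).trans ((le_max_left _ _).trans (le_max_right _ _))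
  · exact (h2 s ⟨hs, hs'⟩).trans ((le_max_right _ _).trans (le_max_right _ _))

theorem scaled_deriv {φ : ℝ → ℝ} (hφ : ContDiff ℝ (⊤ : ℕ∞) φ) (m : ℝ) :
    deriv (fun s => φ (m * s)) = fun s => m * deriv φ (m * s) := by
  funext s
  have h1 : HasDerivAt (fun s : ℝ => m * s) m s := by simpa using (hasDerivAt_id s).const_mul m
  have h2 := ((hφ.differentiable (by simp)) (m * s)).hasDerivAt.comp s h1
  rw [mul_comm]
  exact h2.deriv

/-- Bounds on the cutoff, uniform in the radius. -/
theorem cutoff_bounds {V b : EuclideanSpace ℝ (Fin d) → ℝ} (hV : Sm V) {ρ c β G : ℝ} (hρ : 0 ≤ ρ)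
    (hH : ∀ x v : EuclideanSpace ℝ (Fin d), (-ρ) * ∑ i, v i * v i ≤
      ∑ i, ∑ j, v i * pd i (pd j V) x * v j) (hβ : 0 < β) (hb1 : ∀ x, β ≤ b x) (hb2 : ∀ x, b x ≤ c)
    (hG : ∀ i x, |pd i b x| ≤ G) :
    ∃ C1 : ℝ, 0 ≤ C1 ∧ ∀ R : ℝ, 1 ≤ R → ∀ x : EuclideanSpace ℝ (Fin d), ‖x‖ ≤ 2 * R →
      2 * (∑ i, pd i (fun y => eta ((R^2)⁻¹ * nsq y)) x * pd i b x) +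
        (b x - c) * diffOp V (fun y => eta ((R^2)⁻¹ * nsq y)) x ≤ C1 := by
  obtain ⟨K, hK0, hK⟩ := eta_bound
  set g0 := ∑ i, |pd i V 0| with hg0
  have hg00 : 0 ≤ g0 := Finset.sum_nonneg fun i _ => abs_nonneg _
  have hc0 : 0 ≤ c := by linarith [hb1 0, hb2 0]
  have hGd : ∃ G' : ℝ, 0 ≤ G' ∧ ∀ i x, |pd i b x| ≤ G' :=
    ⟨max 0 G, le_max_left _ _, fun i x => (hG i x).trans (le_max_right _ _)⟩
  obtain ⟨G', hG'0, hG'⟩ := hGd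
  refine ⟨2 * (d * (4 * K * G')) + c * (K * (16 + 2 * d) + K * (8 * ρ + 4 * g0)), by positivity, ?_⟩
  intro R hR x hx
  set m := (R^2)⁻¹ with hm
  have hR0 : 0 < R := by linarith
  have hm0 : 0 < m := by positivity
  have hm1 : m ≤ 1 := by
    rw [hm]; exact inv_le_one_of_one_le₀ (by nlinarith)
  have hmR : m * R ^ 2 = 1 := by rw [hm]; field_simp
  have hmR1 : m * R ≤ 1 := by nlinarith
  have hN0 := nsq_nonneg x
  have hN : nsq x ≤ 4 * R ^ 2 := by
    rw [nsq_eq]; nlinarith [norm_nonneg x]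
  have hmN : m * nsq x ≤ 4 := by nlinarith
  have hφs : ContDiff ℝ (⊤ : ℕ∞) (fun s => eta (m * s)) :=
    eta_cd.comp (contDiff_const.mul contDiff_id)
  have hd1 := scaled_deriv eta_cd m
  have hd2 : deriv (deriv (fun s => eta (m * s))) = fun s => m * (m * deriv (deriv eta) (m * s)) := by
    rw [hd1]
    funext s
    rw [deriv_const_mul_field, scaled_deriv (deriv_cd eta_cd) m]
  set p := deriv eta (m * nsq x) with hp
  set q := deriv (deriv eta) (m * nsq x) with hq
  obtain ⟨hpK, hqK⟩ := hK (m * nsq x) (by positivity) hmN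
  rw [← hp] at hpK
  rw [← hq] at hqK
  have hp0 : p ≤ 0 := eta_deriv_nonpos _
  have hpd : ∀ i, pd i (fun y => eta (m * nsq y)) x = m * p * (2 * x i) := by
    intro i
    rw [radial_pd hφs i, hd1]
  have hlap : lap (fun y : EuclideanSpace ℝ (Fin d) => eta (m * nsq y)) x =
      4 * (m * (m * q)) * nsq x + 2 * d * (m * p) := by
    rw [radial_lap hφs x, hd2, hd1]
  have hdiff : diffOp V (fun y => eta (m * nsq y)) x =
      4 * (m * (m * q)) * nsq x + 2 * d * (m * p) - 2 * (m * p) * ∑ i, x i * pd i V x := by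
    unfold diffOp
    rw [hlap, Finset.mul_sum]
    congr 1
    exact Finset.sum_congr rfl fun i _ => by rw [hpd]; ring
  -- first term
  have t1 : ∑ i, pd i (fun y => eta (m * nsq y)) x * pd i b x ≤ d * (4 * K * G') := by
    calc _ ≤ ∑ _i : Fin d, 4 * K * G' := by
          refine Finset.sum_le_sum fun i _ => ?_
          refine (le_abs_self _).trans ?_
          rw [abs_mul]
          refine mul_le_mul ?_ (hG' i x) (abs_nonneg _) (by positivity)
          rw [hpd, abs_mul, abs_mul, abs_mul, abs_two, abs_of_pos hm0]
          have h1 := (abs_coord_le x i).trans hx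
          calc m * |p| * (2 * |x i|) ≤ m * K * (2 * (2 * R)) := by gcongr
            _ = 4 * K * (m * R) := by ring
            _ ≤ 4 * K * 1 := by gcongr
            _ = 4 * K := by ring
      _ = _ := by simp
  -- second term
  have hx0 := grad_radial_lower hV hH x
  rw [← hg0] at hx0
  have t2 : - diffOp V (fun y => eta (m * nsq y)) x ≤ K * (16 + 2 * d) + K * (8 * ρ + 4 * g0) := by
    rw [hdiff]
    have h1 : -(4 * (m * (m * q)) * nsq x) ≤ 16 * K := by
      have : |4 * (m * (m * q)) * nsq x| ≤ 16 * K := by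
        rw [abs_mul, abs_mul, abs_mul, abs_mul, abs_of_pos hm0, abs_of_nonneg hN0,
          abs_of_pos (by norm_num : (0:ℝ) < 4)]
        calc 4 * (m * (m * |q|)) * nsq x = 4 * m * |q| * (m * nsq x) := by ring
          _ ≤ 4 * 1 * K * 4 := by gcongr
          _ = _ := by ring
      linarith [(abs_le.1 this).1]
    have h2 : -(2 * d * (m * p)) ≤ 2 * d * K := by
      have : -p ≤ K := by linarith [(abs_le.1 hpK).1]
      have h3 : m * (-p) ≤ 1 * K := mul_le_mul hm1 this (by linarith) (by norm_num)
      calc -(2 * d * (m * p)) = 2 * d * (m * (-p)) := by ring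
        _ ≤ 2 * d * (1 * K) := by gcongr
        _ = _ := by ring
    have h3 : 2 * (m * p) * ∑ i, x i * pd i V x ≤ K * (8 * ρ + 4 * g0) := by
      have h4 : (-p) * (-(∑ i, x i * pd i V x)) ≤ (-p) * (ρ * nsq x + g0 * ‖x‖) :=
        mul_le_mul_of_nonneg_left (by linarith) (by linarith)
      have h5 : -p ≤ K := by linarith [(abs_le.1 hpK).1]
      have h6 : m * (ρ * nsq x + g0 * ‖x‖) ≤ 4 * ρ + 2 * g0 := by
        have e1 : ρ * (m * nsq x) ≤ ρ * 4 := by gcongr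
        have e2 : g0 * (m * ‖x‖) ≤ g0 * 2 := by
          have : m * ‖x‖ ≤ m * (2 * R) := by gcongr
          have : m * ‖x‖ ≤ 2 := by linarith
          gcongr
        linarith
      have h7 : 0 ≤ m * (ρ * nsq x + g0 * ‖x‖) := by positivity
      calc 2 * (m * p) * ∑ i, x i * pd i V x = 2 * m * ((-p) * (-(∑ i, x i * pd i V x))) := by ring
        _ ≤ 2 * m * ((-p) * (ρ * nsq x + g0 * ‖x‖)) := by gcongr
        _ = 2 * ((-p) * (m * (ρ * nsq x + g0 * ‖x‖))) := by ring
        _ ≤ 2 * (K * (4 * ρ + 2 * g0)) := by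
            have := mul_le_mul h5 h6 h7 hK0
            linarith
        _ = _ := by ring
    linarith
  have hcb : 0 ≤ c - b x := by linarith [hb2 x]
  have hcb2 : c - b x ≤ c := by linarith [hb1 x]
  have t3 : (b x - c) * diffOp V (fun y => eta (m * nsq y)) x ≤
      c * (K * (16 + 2 * d) + K * (8 * ρ + 4 * g0)) := by
    calc (b x - c) * diffOp V (fun y => eta (m * nsq y)) x
        = (c - b x) * (- diffOp V (fun y => eta (m * nsq y)) x) := by ring
      _ ≤ (c - b x) * (K * (16 + 2 * d) + K * (8 * ρ + 4 * g0)) :=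
          mul_le_mul_of_nonneg_left t2 hcb
      _ ≤ _ := mul_le_mul_of_nonneg_right hcb2 (by positivity)
  linarith

end weight


section weight2
variable {d : ℕ}

theorem diffOp_congr {U V u w : EuclideanSpace ℝ (Fin d) → ℝ} {x : EuclideanSpace ℝ (Fin d)}
    (h1 : U =ᶠ[nhds x] V) (h2 : u =ᶠ[nhds x] w) : diffOp U u x = diffOp V w x := by
  unfold diffOp lap
  congr 1
  · exact Finset.sum_congr rfl fun i _ => pd_congr_nhds (pd_congr_nhds' h2 i) i
  · exact Finset.sum_congr rfl fun i _ => by rw [pd_congr_nhds h1, pd_congr_nhds h2]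

theorem diffOp_const (U : EuclideanSpace ℝ (Fin d) → ℝ) (c : ℝ) (x : EuclideanSpace ℝ (Fin d)) :
    diffOp U (fun _ => c) x = 0 := by
  unfold diffOp lap
  simp [pd_const]

theorem diffOp_weight {V b χ : EuclideanSpace ℝ (Fin d) → ℝ} (hb : Sm b) (hχ : Sm χ) (c : ℝ)
    (x : EuclideanSpace ℝ (Fin d)) :
    diffOp V (fun x => c + χ x * (b x - c)) x = χ x * diffOp V b x +
      (2 * (∑ i, pd i χ x * pd i b x) + (b x - c) * diffOp V χ x) := by
  have hbc : Sm (fun x => b x - c) := hb.sub (Sm.const c)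
  have h1 : ∀ i, pd i (fun x => c + χ x * (b x - c)) = fun x => pd i χ x * (b x - c) + χ x * pd i b x := by
    intro i
    rw [pd_add (Sm.const c) (hχ.mul hbc), pd_const, pd_mul hχ hbc, pd_sub hb (Sm.const c), pd_const]
    funext x; ring
  have h2 : ∀ i, pd i (pd i (fun x => c + χ x * (b x - c))) x = pd i (pd i χ) x * (b x - c) +
      2 * (pd i χ x * pd i b x) + χ x * pd i (pd i b) x := by
    intro i
    rw [h1, pd_add ((hχ.pd i).mul hbc) (hχ.mul (hb.pd i)), pd_mul (hχ.pd i) hbc, pd_mul hχ (hb.pd i),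
      pd_sub hb (Sm.const c), pd_const]
    ring
  unfold diffOp lap
  have e1 : ∀ i, pd i (fun y => pd i (fun x => c + χ x * (b x - c)) y) x = pd i (pd i χ) x * (b x - c) +
      2 * (pd i χ x * pd i b x) + χ x * pd i (pd i b) x := h2
  simp only [e1]
  simp only [h1]
  have e2 : ∀ i, (fun y => pd i χ y) = pd i χ := fun i => rfl
  have e3 : ∀ i, (fun y => pd i b y) = pd i b := fun i => rfl
  simp only [e2, e3]
  simp only [mul_sub, Finset.mul_sum]
  simp only [← Finset.sum_add_distrib, ← Finset.sum_sub_distrib]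
  exact Finset.sum_congr rfl fun i _ => by ring

theorem exists_weight {V b : EuclideanSpace ℝ (Fin d) → ℝ} (hV : Sm V) (hb : Sm b)
    {ρ c β G κ : ℝ} (hρ : 0 ≤ ρ) (hκ : 0 < κ)
    (hH : ∀ x v : EuclideanSpace ℝ (Fin d), (-ρ) * ∑ i, v i * v i ≤
      ∑ i, ∑ j, v i * pd i (pd j V) x * v j) (hβ : 0 < β) (hb1 : ∀ x, β ≤ b x) (hb2 : ∀ x, b x ≤ c)
    (hG : ∀ i x, |pd i b x| ≤ G)
    (hq : ∀ x v : EuclideanSpace ℝ (Fin d), (diffOp V b x / b x + κ) * ∑ i, v i * v i ≤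
      2 * ∑ i, ∑ j, v i * pd i (pd j V) x * v j) :
    ∃ CE : ℝ, 0 ≤ CE ∧ ∀ R : ℝ, 1 ≤ R → ∃ B : EuclideanSpace ℝ (Fin d) → ℝ, Sm B ∧
      (∀ x, β ≤ B x) ∧ (∀ x, B x ≤ c) ∧ (∀ x, 2 * R < ‖x‖ → B x = c) ∧
      ∀ U : EuclideanSpace ℝ (Fin d) → ℝ, (∀ x, ‖x‖ < 3 * R → U x = V x) →
        (∀ x v : EuclideanSpace ℝ (Fin d), (-ρ) * ∑ i, v i * v i ≤
          ∑ i, ∑ j, v i * pd i (pd j U) x * v j) →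
        ∀ x v : EuclideanSpace ℝ (Fin d),
          (diffOp U B x / B x + κ - {x : EuclideanSpace ℝ (Fin d) | R ≤ ‖x‖}.indicator (fun _ => CE) x)
            * ∑ i, v i * v i ≤ 2 * ∑ i, ∑ j, v i * pd i (pd j U) x * v j := by
  obtain ⟨C1, hC10, hC1⟩ := cutoff_bounds hV hρ hH hβ hb1 hb2 hG
  have hc0 : 0 < c := by linarith [hb1 0, hb2 0]
  refine ⟨2 * ρ + C1 / β + κ, by positivity, fun R hR => ?_⟩
  have hR0 : 0 < R := by linarith
  set χ : EuclideanSpace ℝ (Fin d) → ℝ := fun y => eta ((R^2)⁻¹ * nsq y) with hχ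
  have hχs : Sm χ := radial_sm (φ := fun s => eta ((R^2)⁻¹ * s))
    (eta_cd.comp (contDiff_const.mul contDiff_id))
  have hχ0 : ∀ x, 0 ≤ χ x := fun x => eta_nonneg _
  have hχ1 : ∀ x, χ x ≤ 1 := fun x => eta_le_one _
  have hχin : ∀ x, ‖x‖ ≤ R → χ x = 1 := by
    intro x hx
    refine eta_one ?_
    rw [nsq_eq, inv_mul_le_iff₀ (by positivity), mul_one]
    exact pow_le_pow_left₀ (norm_nonneg _) hx 2
  have hχout : ∀ x, 2 * R < ‖x‖ → χ x = 0 := by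
    intro x hx
    refine eta_zero ?_
    rw [nsq_eq, le_inv_mul_iff₀ (by positivity)]
    nlinarith
  set B : EuclideanSpace ℝ (Fin d) → ℝ := fun x => c + χ x * (b x - c) with hB
  have hBβ : ∀ x, β ≤ B x := by
    intro x
    have h1 := hb1 x; have h2 := hb2 x; have h3 := hχ0 x; have h4 := hχ1 x
    simp only [hB]
    nlinarith
  have hBout : ∀ x, 2 * R < ‖x‖ → B x = c := by
    intro x hx; simp only [hB]; rw [hχout x hx]; ring
  refine ⟨B, (Sm.const c).add (hχs.mul (hb.sub (Sm.const c))), hBβ, ?_, hBout, ?_⟩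
  · intro x
    have h2 := hb2 x; have h3 := hχ0 x
    simp only [hB]
    nlinarith
  intro U hUV hHU x v
  set n := ∑ i, v i * v i with hn
  have hn0 : 0 ≤ n := Finset.sum_nonneg fun i _ => mul_self_nonneg _
  have hUx := hHU x v
  have hopen3 : ∀ r : ℝ, ‖x‖ < r → ∀ᶠ y in nhds x, ‖y‖ < r := fun r hr =>
    (isOpen_lt continuous_norm continuous_const).mem_nhds hr
  have hBpos : 0 < B x := hβ.trans_le (hBβ x)
  have hCβ : 0 ≤ C1 / β := by positivity
  rcases lt_or_ge ‖x‖ R with hx | hx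
  · have hU : U =ᶠ[nhds x] V := by
      filter_upwards [hopen3 (3 * R) (by linarith)] with y hy using hUV y hy
    have hBb : B =ᶠ[nhds x] b := by
      filter_upwards [hopen3 R hx] with y hy
      simp only [hB]; rw [hχin y hy.le]; ring
    rw [Set.indicator_of_notMem (by simpa using hx), diffOp_congr hU hBb, hBb.eq_of_nhds,
      hess_form_congr hU]
    have := hq x v
    simpa using this
  · rw [Set.indicator_of_mem (by simpa using hx)]
    rcases le_or_gt ‖x‖ (2 * R) with hx2 | hx2
    · have hU : U =ᶠ[nhds x] V := by
        filter_upwards [hopen3 (3 * R) (by linarith)] with y hy using hUV y hy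
      rw [hess_form_congr hU] at hUx ⊢
      set h := ∑ i, ∑ j, v i * pd i (pd j V) x * v j with hh
      have hdw := diffOp_weight (V := V) hb hχs c x
      rw [← hB] at hdw
      rw [diffOp_congr hU (Filter.EventuallyEq.refl _ B), hdw]
      have hT := hC1 R hR x hx2
      rw [← hχ] at hT
      set T := 2 * (∑ i, pd i χ x * pd i b x) + (b x - c) * diffOp V χ x with hTd
      have hqx := hq x v
      rw [← hn, ← hh] at hqx
      have hbpos : 0 < b x := hβ.trans_le (hb1 x)
      have hBx : (c + χ x * (b x - c)) = B x := rfl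
      set l := diffOp V b x with hl
      set θ := χ x * b x / B x with hθ
      have hθ0 : 0 ≤ θ := div_nonneg (mul_nonneg (hχ0 x) hbpos.le) hBpos.le
      have hθ1 : θ ≤ 1 := by
        rw [hθ, div_le_one hBpos]
        have h3 := hχ1 x
        rw [← hBx]; nlinarith
      have e1 : (χ x * l + T) / B x = θ * (l / b x) + T / B x := by
        rw [hθ]; field_simp
      have e2 : T / B x ≤ C1 / β := by
        calc T / B x ≤ C1 / B x := by gcongr
          _ ≤ C1 / β := div_le_div_of_nonneg_left hC10 hβ (hBβ x)
      rw [e1]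
      have e3 : θ * ((l / b x + κ) * n) ≤ θ * (2 * h) := mul_le_mul_of_nonneg_left hqx hθ0
      have e4 : T / B x * n ≤ C1 / β * n := mul_le_mul_of_nonneg_right e2 hn0
      have e5 : (1 - θ) * ((-ρ) * n) ≤ (1 - θ) * h := mul_le_mul_of_nonneg_left hUx (by linarith)
      have e6 : 0 ≤ θ * (ρ * n) := by positivity
      have e7 : 0 ≤ θ * (κ * n) := by positivity
      nlinarith
    · have hBc : B =ᶠ[nhds x] fun _ => c := by
        filter_upwards [(isOpen_lt continuous_const continuous_norm).mem_nhds hx2] with y hy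
          using hBout y hy
      rw [diffOp_congr (Filter.EventuallyEq.refl _ U) hBc, diffOp_const]
      have e0 : 0 ≤ C1 / β * n := by positivity
      rw [zero_div]
      nlinarith

end weight2


section limits
variable {d : ℕ}

theorem int_bdd {U ψ : EuclideanSpace ℝ (Fin d) → ℝ} {C : ℝ}
    (hU : Integrable (fun x => Real.exp (-U x))) (hm : Measurable ψ) (hb : ∀ x, |ψ x| ≤ C) :
    Integrable (fun x => ψ x * Real.exp (-U x)) := by
  refine Integrable.mono' (hU.const_mul C) (hm.aestronglyMeasurable.mul hU.aestronglyMeasurable) ?_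
  refine Filter.Eventually.of_forall fun x => ?_
  rw [Real.norm_eq_abs, abs_mul, abs_of_pos (Real.exp_pos _)]
  exact mul_le_mul_of_nonneg_right (hb x) (Real.exp_pos _).le

theorem tendsto_II {V : EuclideanSpace ℝ (Fin d) → ℝ} {Un : ℕ → EuclideanSpace ℝ (Fin d) → ℝ}
    (hV : Integrable (fun x => Real.exp (-V x)))
    (h1 : ∀ x, ∀ᶠ n in Filter.atTop, Un n x = V x)
    (h2 : ∀ n x, Real.exp (-Un n x) ≤ Real.exp (-V x) + Real.exp (-nsq x))
    (h3 : ∀ n, Continuous (Un n)) {ψn : ℕ → EuclideanSpace ℝ (Fin d) → ℝ}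
    {ψ : EuclideanSpace ℝ (Fin d) → ℝ} {C : ℝ} (hm : ∀ n, Measurable (ψn n))
    (hb : ∀ n x, |ψn n x| ≤ C)
    (hl : ∀ x, Filter.Tendsto (fun n => ψn n x) Filter.atTop (nhds (ψ x))) :
    Filter.Tendsto (fun n => II (Un n) (ψn n)) Filter.atTop (nhds (II V ψ)) := by
  have hg : Integrable (fun x : EuclideanSpace ℝ (Fin d) => Real.exp (-nsq x)) := by
    simpa using integrable_gauss (d := d) (b := 1) one_pos
  unfold II
  refine tendsto_integral_of_dominated_convergence
    (fun x => C * (Real.exp (-V x) + Real.exp (-nsq x))) ?_ ((hV.add hg).const_mul C) ?_ ?_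
  · intro n
    exact ((hm n).mul (Real.continuous_exp.comp (h3 n).neg).measurable).aestronglyMeasurable
  · intro n
    refine Filter.Eventually.of_forall fun x => ?_
    rw [Real.norm_eq_abs, abs_mul, abs_of_pos (Real.exp_pos _)]
    exact mul_le_mul (hb n x) (h2 n x) (Real.exp_pos _).le ((abs_nonneg _).trans (hb n x))
  · refine Filter.Eventually.of_forall fun x => ?_
    refine (hl x).mul (tendsto_const_nhds.congr' ?_)
    filter_upwards [h1 x] with n hn
    rw [hn]

/-- Unnormalised entropy. -/
noncomputable def Lam (U g : EuclideanSpace ℝ (Fin d) → ℝ) : ℝ :=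
  II U (fun x => g x * Real.log (g x)) - Real.log (II U g / II U (fun _ => 1)) * II U g

theorem mul_log_bdd {g : EuclideanSpace ℝ (Fin d) → ℝ} {M : ℝ} (h0 : ∀ x, 0 ≤ g x)
    (h1 : ∀ x, g x ≤ M) : ∃ C, ∀ x, |g x * Real.log (g x)| ≤ C := by
  obtain ⟨C, hC⟩ := (isCompact_Icc (a := (0:ℝ)) (b := M)).exists_bound_of_continuousOn
    (f := fun s => s * Real.log s) Real.continuous_mul_log.continuousOn
  exact ⟨C, fun x => hC (g x) ⟨h0 x, h1 x⟩⟩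

theorem II_pos {U : EuclideanSpace ℝ (Fin d) → ℝ}
    (hU : Integrable (fun x => Real.exp (-U x))) : 0 < II U (fun _ => 1) := by
  unfold II
  simp only [one_mul]
  exact integral_exp_pos hU

theorem II_Fe_eq {U g : EuclideanSpace ℝ (Fin d) → ℝ} {ε M : ℝ}
    (hU : Integrable (fun x => Real.exp (-U x))) (hg : Continuous g) (hε : 0 < ε)
    (hg1 : ∀ x, ε ≤ g x) (hg2 : ∀ x, g x ≤ M) :
    II U (fun x => Fe (II U g / II U (fun _ => 1)) (g x)) = Lam U g := by
  have hZ := II_pos hU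
  set m := II U g / II U (fun _ => 1) with hm
  obtain ⟨C, hC⟩ := mul_log_bdd (fun x => hε.le.trans (hg1 x)) hg2
  have i1 : Integrable (fun x => (g x * Real.log (g x)) * Real.exp (-U x)) :=
    int_bdd hU (Real.continuous_mul_log.comp hg).measurable hC
  have i2 : Integrable (fun x => g x * Real.exp (-U x)) :=
    int_bdd hU hg.measurable (C := M) (fun x => abs_le.2 ⟨by linarith [hg1 x, hg2 x], hg2 x⟩)
  have i3 : Integrable (fun x => (1:ℝ) * Real.exp (-U x)) := by simpa using hU
  have e : II U (fun x => Fe m (g x)) = II U (fun x => g x * Real.log (g x)) -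
      (Real.log m + 1) * II U g + m * II U (fun _ => 1) := by
    have j1 : Integrable (fun x => (g x * Real.log (g x)) * Real.exp (-U x) -
        (Real.log m + 1) * (g x * Real.exp (-U x))) := i1.sub (i2.const_mul _)
    have j2 : Integrable (fun x => m * ((1:ℝ) * Real.exp (-U x))) := i3.const_mul m
    have e1 : II U (fun x => g x * Real.log (g x)) - (Real.log m + 1) * II U g =
        ∫ x, ((g x * Real.log (g x)) * Real.exp (-U x) -
        (Real.log m + 1) * (g x * Real.exp (-U x))) := by
      rw [integral_sub i1 (i2.const_mul _), integral_const_mul]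
      rfl
    have e2 : m * II U (fun _ => 1) = ∫ x, m * ((1:ℝ) * Real.exp (-U x)) := by
      rw [integral_const_mul]
      rfl
    rw [e1, e2, ← integral_add j1 j2]
    unfold II
    refine integral_congr_ae (Filter.Eventually.of_forall fun x => ?_)
    simp only [Fe]
    ring
  rw [e]
  have : m * II U (fun _ => 1) = II U g := by rw [hm]; field_simp
  rw [this]
  unfold Lam
  rw [← hm]
  ring

/-- The estimate for one truncation radius. -/
theorem trunc_step (hd : 0 < d) {V b g : EuclideanSpace ℝ (Fin d) → ℝ} (hV : Sm V)
    {ρ c β κ CE : ℝ} (hρ : 0 ≤ ρ) (hκ : 0 < κ) (hβ : 0 < β) (hCE : 0 ≤ CE)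
    (hH : ∀ x v : EuclideanSpace ℝ (Fin d), (-ρ) * ∑ i, v i * v i ≤
      ∑ i, ∑ j, v i * pd i (pd j V) x * v j)
    (hw : ∀ R : ℝ, 1 ≤ R → ∃ B : EuclideanSpace ℝ (Fin d) → ℝ, Sm B ∧
      (∀ x, β ≤ B x) ∧ (∀ x, B x ≤ c) ∧ (∀ x, 2 * R < ‖x‖ → B x = c) ∧
      ∀ U : EuclideanSpace ℝ (Fin d) → ℝ, (∀ x, ‖x‖ < 3 * R → U x = V x) →
        (∀ x v : EuclideanSpace ℝ (Fin d), (-ρ) * ∑ i, v i * v i ≤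
          ∑ i, ∑ j, v i * pd i (pd j U) x * v j) →
        ∀ x v : EuclideanSpace ℝ (Fin d),
          (diffOp U B x / B x + κ - {x : EuclideanSpace ℝ (Fin d) | R ≤ ‖x‖}.indicator (fun _ => CE) x)
            * ∑ i, v i * v i ≤ 2 * ∑ i, ∑ j, v i * pd i (pd j U) x * v j)
    {S ε M Φ r P : ℝ} (hg : Sm g) (hS : Bd 4 S g) (hε : 0 < ε) (hg1 : ∀ x, ε ≤ g x)
    (hg2 : ∀ x, g x ≤ M) (hΦ : ∀ x, fi g x ≤ Φ) (hr : 0 < r) (hP0 : 0 ≤ P)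
    (hP : ∀ U : EuclideanSpace ℝ (Fin d) → ℝ, Nice U →
      (∀ x ∈ Metric.closedBall (0 : EuclideanSpace ℝ (Fin d)) r, U x = V x) →
      ∀ u : EuclideanSpace ℝ (Fin d) → ℝ, Sm u → (∃ S, Bd 1 S u) → (∃ ε, 0 < ε ∧ ∀ x, ε ≤ u x) →
        (∀ x, u x ≤ M) →
        II U (fun _ => 1) * II U (fun x => u x ^ 2) - (II U u) ^ 2 ≤
          II U (fun _ => 1) * P * II U (fi u) + II U (fun _ => 1) * (M ^ 2 *
            II U ((Metric.closedBall (0 : EuclideanSpace ℝ (Fin d)) r)ᶜ.indicator fun _ => 1)))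
    {R : ℝ} (hR : 1 ≤ R) (hRr : r ≤ 3 * R) :
    ∃ U : EuclideanSpace ℝ (Fin d) → ℝ, Integrable (fun x => Real.exp (-U x)) ∧ Continuous U ∧
      (∀ x, ‖x‖ ≤ 3 * R → U x = V x) ∧
      (∀ x, Real.exp (-U x) ≤ Real.exp (-V x) + Real.exp (-nsq x)) ∧
      ∀ t : ℝ, 0 < t → ∀ Sb : ℝ, Sb = (c * II U (fi g) + t * (c * (Real.exp ((2 * ρ + 1) * t) * Φ) *
        II U ({x : EuclideanSpace ℝ (Fin d) | R ≤ ‖x‖}.indicator (fun _ => CE)))) / (κ * β) →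
        Lam U g ≤ Sb + (P * (Sb / t) + M ^ 2 *
          II U ((Metric.closedBall (0 : EuclideanSpace ℝ (Fin d)) r)ᶜ.indicator fun _ => 1)) / ε := by
  obtain ⟨U, hU, hUV, hHU, hUe⟩ := exists_nice hV hρ hH (T := (3 * R) ^ 2) (by positivity)
  have hUV' : ∀ x, ‖x‖ ≤ 3 * R → U x = V x := fun x hx =>
    hUV x (by rw [nsq_eq]; exact pow_le_pow_left₀ (norm_nonneg _) hx 2)
  obtain ⟨B, hB, hBβ, hBc, hBout, hq⟩ := hw R hR
  have hUi : Integrable (fun x => Real.exp (-U x)) := by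
    have := Dom.integrable hU (Dom.of_bdd (U := U) (ψ := fun _ => 1) (C := 1) measurable_const (by simp))
    simpa using this
  have hZ := II_pos hUi
  obtain ⟨S2, hS2⟩ := Bd.of_const_outside 2 hB hBout
  have hLs : Sm (diffOp U B) := by
    have e : diffOp U B = fun x => (∑ i, pd i (pd i B) x) - ∑ i, pd i U x * pd i B x := rfl
    rw [e]
    exact (Sm.sum fun i _ => (hB.pd i).pd i).sub (Sm.sum fun i _ => (hU.sm.pd i).mul (hB.pd i))
  obtain ⟨SL, hSL⟩ := Bd.of_const_outside 0 (c := 0) (r := 2 * R) hLs (fun x hx => by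
    have hBc : B =ᶠ[nhds x] fun _ => c := by
      filter_upwards [(isOpen_lt continuous_const continuous_norm).mem_nhds hx] with y hy
        using hBout y hy
    rw [diffOp_congr (Filter.EventuallyEq.refl _ U) hBc, diffOp_const])
  refine ⟨U, hUi, hU.sm.cont, hUV', hUe, fun t ht Sb hSb => ?_⟩
  have hmeas : MeasurableSet {x : EuclideanSpace ℝ (Fin d) | R ≤ ‖x‖} :=
    measurableSet_le measurable_const measurable_norm
  have htail : 0 ≤ II U ((Metric.closedBall (0 : EuclideanSpace ℝ (Fin d)) r)ᶜ.indicator fun _ => 1) := by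
    unfold II
    refine integral_nonneg fun x => mul_nonneg (Set.indicator_nonneg (fun _ _ => zero_le_one) x)
      (Real.exp_pos _).le
  have hmain := chain_main hd hU hg (S := S) (ε := ε) (M := M) (ρ := ρ) (Φ := Φ) (κ := κ) (β := β) (c := c)
    (S2 := S2) (SL := SL) (CE := CE) (t := t) (P := II U (fun _ => 1) * P)
    (δ := II U (fun _ => 1) * (M ^ 2 *
            II U ((Metric.closedBall (0 : EuclideanSpace ℝ (Fin d)) r)ᶜ.indicator fun _ => 1)))
    (e := {x : EuclideanSpace ℝ (Fin d) | R ≤ ‖x‖}.indicator (fun _ => CE)) (B := B)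
    hS hε hg1 hg2 hρ hΦ (fun x v => by have := hHU x (WithLp.toLp 2 v); simp only at this; linarith) hB hS2 hβ hBβ hBc
    (measurable_const.indicator hmeas) (fun x => Set.indicator_nonneg (fun _ _ => hCE) x)
    (fun x => Set.indicator_le_self' (fun _ _ => hCE) x) hκ hSL
    (fun x v => hq U (fun x hx => hUV' x hx.le) hHU x (WithLp.toLp 2 v)) ht (by positivity) (by positivity) hZ
    (fun u hu hbu h1 h2 => hP U hU (fun x hx => hUV' x (by
      have : ‖x‖ ≤ r := by simpa using hx
      linarith)) u hu hbu ⟨ε, hε, h1⟩ h2) Sb hSb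
  rw [II_Fe_eq hUi hg.cont hε hg1 hg2] at hmain
  refine hmain.trans (le_of_eq ?_)
  field_simp

theorem entropy_core (hd : 0 < d) {V b g : EuclideanSpace ℝ (Fin d) → ℝ} (hV : Sm V) (hb : Sm b)
    (hVi : Integrable (fun x => Real.exp (-V x)))
    {ρ c β G κ : ℝ} (hρ : 0 ≤ ρ) (hκ : 0 < κ)
    (hH : ∀ x v : EuclideanSpace ℝ (Fin d), (-ρ) * ∑ i, v i * v i ≤
      ∑ i, ∑ j, v i * pd i (pd j V) x * v j) (hβ : 0 < β) (hb1 : ∀ x, β ≤ b x) (hb2 : ∀ x, b x ≤ c)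
    (hG : ∀ i x, |pd i b x| ≤ G)
    (hq : ∀ x v : EuclideanSpace ℝ (Fin d), (diffOp V b x / b x + κ) * ∑ i, v i * v i ≤
      2 * ∑ i, ∑ j, v i * pd i (pd j V) x * v j)
    {ε r0 : ℝ} (hg : Sm g) (hε : 0 < ε) (hg1 : ∀ x, ε ≤ g x) (hgo : ∀ x, r0 < ‖x‖ → g x = ε) :
    Lam V g ≤ c * II V (fi g) / (κ * β) := by
  obtain ⟨S, hS⟩ := Bd.of_const_outside 4 hg hgo
  have hg2 : ∀ x, g x ≤ S := fun x => (le_abs_self _).trans (hS.zero x)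
  have hS0 := hS.nonneg
  have hfis : Sm (fi g) := fi_smooth hg fun x => hε.trans_le (hg1 x)
  have hfin : ∀ x, 0 ≤ fi g x := by
    intro x
    unfold fi
    exact mul_nonneg (Finset.sum_nonneg fun i _ => mul_self_nonneg _)
      (inv_nonneg.2 (hε.le.trans (hg1 x)))
  obtain ⟨Φ, hΦ⟩ := Bd.of_const_outside 0 (c := 0) (r := r0) hfis (fun x hx => by
    have : g =ᶠ[nhds x] fun _ => ε := by
      filter_upwards [(isOpen_lt continuous_const continuous_norm).mem_nhds hx] with y hy
        using hgo y hy
    unfold fi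
    have h0 : ∀ i, pd i g x = 0 := fun i => by rw [pd_congr_nhds this, pd_const]
    simp [h0])
  have hΦ' : ∀ x, |fi g x| ≤ Φ := hΦ
  obtain ⟨CE, hCE, hw⟩ := exists_weight hV hb hρ hκ hH hβ hb1 hb2 hG hq
  have hZ := II_pos hVi
  -- fixed radius, fixed time
  have step1 : ∀ r : ℝ, 0 < r → ∃ P : ℝ, 0 ≤ P ∧ ∀ t : ℝ, 0 < t →
      Lam V g ≤ c * II V (fi g) / (κ * β) + (P * (c * II V (fi g) / (κ * β) / t) + S ^ 2 *
          II V ((Metric.closedBall (0 : EuclideanSpace ℝ (Fin d)) r)ᶜ.indicator fun _ => 1)) / ε := by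
    intro r hr
    obtain ⟨P, hP0, hP⟩ := poincare_weighted hV.cont hr hS0
    refine ⟨P, hP0, fun t ht => ?_⟩
    have hR : ∀ n : ℕ, (1 : ℝ) ≤ n + 1 + r := fun n => by
      have : (0:ℝ) ≤ n := Nat.cast_nonneg n
      linarith
    have := fun n : ℕ => trunc_step hd (b := b) hV hρ hκ hβ hCE hH hw hg hS hε hg1 hg2
      (fun x => (le_abs_self _).trans (hΦ' x)) hr hP0 hP (R := n + 1 + r) (hR n)
      (by have : (0:ℝ) ≤ n := Nat.cast_nonneg n
          linarith)
    choose Un hUi hUc hUV hUe hUn using this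
    have h1 : ∀ x, ∀ᶠ n in Filter.atTop, Un n x = V x := by
      intro x
      obtain ⟨N, hN⟩ := exists_nat_ge ‖x‖
      filter_upwards [Filter.eventually_ge_atTop N] with n hn
      apply hUV
      have : (N : ℝ) ≤ n := by exact_mod_cast hn
      linarith [norm_nonneg x]
    have lim : ∀ {ψ : EuclideanSpace ℝ (Fin d) → ℝ} {C : ℝ}, Measurable ψ → (∀ x, |ψ x| ≤ C) →
        Filter.Tendsto (fun n => II (Un n) ψ) Filter.atTop (nhds (II V ψ)) := fun hm hb =>
      tendsto_II hVi h1 hUe hUc (fun _ => hm) (fun _ => hb) (fun _ => tendsto_const_nhds)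
    have l1 := lim (ψ := fun _ => 1) (C := 1) measurable_const (by simp)
    have l2 := lim hg.cont.measurable hS.zero
    obtain ⟨C, hC⟩ := mul_log_bdd (fun x => hε.le.trans (hg1 x)) hg2
    have l3 := lim (ψ := fun x => g x * Real.log (g x))
      (Real.continuous_mul_log.comp hg.cont).measurable hC
    have l4 := lim hfis.cont.measurable hΦ'
    have l5 := lim (ψ := (Metric.closedBall (0 : EuclideanSpace ℝ (Fin d)) r)ᶜ.indicator fun _ => 1)
      (C := 1) (measurable_const.indicator Metric.isClosed_closedBall.measurableSet.compl)
      (fun x => by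
        by_cases hx : x ∈ (Metric.closedBall (0 : EuclideanSpace ℝ (Fin d)) r)ᶜ
        · rw [Set.indicator_of_mem hx]; simp
        · rw [Set.indicator_of_notMem hx]; simp)
    have l6 : Filter.Tendsto (fun n : ℕ => II (Un n)
        ({x : EuclideanSpace ℝ (Fin d) | (n : ℝ) + 1 + r ≤ ‖x‖}.indicator (fun _ => CE)))
        Filter.atTop (nhds (II V (fun _ => 0))) := by
      refine tendsto_II hVi h1 hUe hUc (C := CE) (fun n => ?_) (fun n x => ?_) (fun x => ?_)
      · exact measurable_const.indicator (measurableSet_le measurable_const measurable_norm)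
      · rw [abs_of_nonneg (Set.indicator_nonneg (fun _ _ => hCE) x)]
        exact Set.indicator_le_self' (fun _ _ => hCE) x
      · refine tendsto_const_nhds.congr' ?_
        obtain ⟨N, hN⟩ := exists_nat_ge ‖x‖
        filter_upwards [Filter.eventually_ge_atTop N] with n hn
        rw [Set.indicator_of_notMem]
        have : (N : ℝ) ≤ n := by exact_mod_cast hn
        simp only [Set.mem_ofPred_eq, not_le]
        linarith
    have z0 : II V (fun _ => 0) = 0 := by simp [II]
    rw [z0] at l6
    have hgpos : 0 < II V g := by
      have : ε * II V (fun _ => 1) ≤ II V g := by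
        unfold II
        rw [← integral_const_mul]
        refine integral_mono ((by simpa using hVi : Integrable fun x => (1:ℝ) * Real.exp (-V x)).const_mul ε)
          (int_bdd hVi hg.cont.measurable hS.zero) fun x => ?_
        simp only
        have := mul_le_mul_of_nonneg_right (hg1 x) (Real.exp_pos (-V x)).le
        linarith
      have := mul_pos hε hZ
      linarith
    have lL : Filter.Tendsto (fun n => Lam (Un n) g) Filter.atTop (nhds (Lam V g)) := by
      unfold Lam
      refine l3.sub (Filter.Tendsto.mul ?_ l2)
      exact (l2.div l1 hZ.ne').log (div_pos hgpos hZ).ne'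
    have lS : Filter.Tendsto (fun n : ℕ => (c * II (Un n) (fi g) + t * (c * (Real.exp ((2 * ρ + 1) * t) * Φ) *
        II (Un n) ({x : EuclideanSpace ℝ (Fin d) | (n : ℝ) + 1 + r ≤ ‖x‖}.indicator (fun _ => CE)))) / (κ * β))
        Filter.atTop (nhds (c * II V (fi g) / (κ * β))) := by
      have := (((l4.const_mul c).add ((l6.const_mul (c * (Real.exp ((2 * ρ + 1) * t) * Φ))).const_mul t)).div_const
        (κ * β))
      simpa using this
    refine le_of_tendsto_of_tendsto' lL
      (lS.add ((((lS.div_const t).const_mul P).add (l5.const_mul (S ^ 2))).div_const ε)) fun n => ?_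
    exact hUn n t ht _ rfl
  have step2 : ∀ r : ℝ, 0 < r → Lam V g ≤ c * II V (fi g) / (κ * β) + (S ^ 2 *
          II V ((Metric.closedBall (0 : EuclideanSpace ℝ (Fin d)) r)ᶜ.indicator fun _ => 1)) / ε := by
    intro r hr
    obtain ⟨P, hP0, hP⟩ := step1 r hr
    have ht : Filter.Tendsto (fun n : ℕ => (n : ℝ) + 1) Filter.atTop Filter.atTop :=
      Filter.tendsto_atTop_add_const_right _ _ tendsto_natCast_atTop_atTop
    have l1 : Filter.Tendsto (fun n : ℕ => c * II V (fi g) / (κ * β) / ((n : ℝ) + 1)) Filter.atTop (nhds 0) :=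
      ht.const_div_atTop _
    have l2 := ((((l1.const_mul P).add_const (S ^ 2 *
      II V ((Metric.closedBall (0 : EuclideanSpace ℝ (Fin d)) r)ᶜ.indicator fun _ => 1))).div_const ε).const_add
        (c * II V (fi g) / (κ * β)))
    rw [mul_zero, zero_add] at l2
    exact ge_of_tendsto' l2 fun n => hP _ (by positivity)
  have l5 : Filter.Tendsto (fun n : ℕ => II V
      ((Metric.closedBall (0 : EuclideanSpace ℝ (Fin d)) ((n : ℝ) + 1))ᶜ.indicator fun _ => 1))
      Filter.atTop (nhds (II V (fun _ => 0))) := by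
    refine tendsto_II (Un := fun _ => V) hVi (fun x => Filter.Eventually.of_forall fun _ => rfl)
      (fun n x => by linarith [Real.exp_pos (-nsq x)]) (fun _ => hV.cont) (C := 1) (fun n => ?_)
      (fun n x => ?_) (fun x => ?_)
    · exact measurable_const.indicator Metric.isClosed_closedBall.measurableSet.compl
    · by_cases hx : x ∈ (Metric.closedBall (0 : EuclideanSpace ℝ (Fin d)) ((n : ℝ) + 1))ᶜ
      · rw [Set.indicator_of_mem hx]; simp
      · rw [Set.indicator_of_notMem hx]; simp
    · refine tendsto_const_nhds.congr' ?_
      obtain ⟨N, hN⟩ := exists_nat_ge ‖x‖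
      filter_upwards [Filter.eventually_ge_atTop N] with n hn
      rw [Set.indicator_of_notMem]
      have : (N : ℝ) ≤ n := by exact_mod_cast hn
      simp only [Set.mem_compl_iff, mem_closedBall_zero_iff, not_not]
      linarith
  have z0 : II V (fun _ => 0) = 0 := by simp [II]
  rw [z0] at l5
  have l6 := ((l5.const_mul (S ^ 2)).div_const ε).const_add (c * II V (fi g) / (κ * β))
  rw [mul_zero, zero_div, add_zero] at l6
  exact ge_of_tendsto' l6 fun n => step2 _ (by positivity)

end limits


section final
variable {d : ℕ}

theorem gibbs_integral {V : EuclideanSpace ℝ (Fin d) → ℝ} (hV : Continuous V)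
    (hVi : Integrable (fun x => Real.exp (-V x))) (ψ : EuclideanSpace ℝ (Fin d) → ℝ) :
    ∫ x, ψ x ∂(gibbs V) = (II V (fun _ => 1))⁻¹ * II V ψ := by
  unfold gibbs
  have hm : Measurable fun x => Real.exp (-V x) := (Real.continuous_exp.comp hV.neg).measurable
  have h1 : (∫⁻ x, ENNReal.ofReal (Real.exp (-V x))) = ENNReal.ofReal (II V (fun _ => 1)) := by
    rw [← ofReal_integral_eq_lintegral_ofReal hVi
      (Filter.Eventually.of_forall fun x => (Real.exp_pos _).le)]
    simp [II]
  rw [integral_smul_measure, h1, ENNReal.toReal_inv, ENNReal.toReal_ofReal (II_pos hVi).le,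
    smul_eq_mul]
  congr 1
  rw [integral_withDensity_eq_integral_toReal_smul (by fun_prop)
    (Filter.Eventually.of_forall fun x => ENNReal.ofReal_lt_top)]
  unfold II
  refine integral_congr_ae (Filter.Eventually.of_forall fun x => ?_)
  simp only [smul_eq_mul]
  rw [ENNReal.toReal_ofReal (Real.exp_pos _).le, mul_comm]

theorem entropy_gibbs {V : EuclideanSpace ℝ (Fin d) → ℝ} (hV : Continuous V)
    (hVi : Integrable (fun x => Real.exp (-V x))) (g : EuclideanSpace ℝ (Fin d) → ℝ) :
    entropy (gibbs V) g = (II V (fun _ => 1))⁻¹ * Lam V g := by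
  unfold entropy Lam
  rw [gibbs_integral hV hVi, gibbs_integral hV hVi, div_eq_inv_mul]
  ring

theorem Lam_sq_le {V f : EuclideanSpace ℝ (Fin d) → ℝ} (hV : Continuous V) (hf : Sm f)
    (hVi : Integrable (fun x => Real.exp (-V x))) {r0 A : ℝ} (hfo : ∀ x, r0 < ‖x‖ → f x = 0)
    (hA : 0 ≤ A)
    (h : ∀ (g : EuclideanSpace ℝ (Fin d) → ℝ) (ε r0 : ℝ), Sm g → 0 < ε → (∀ x, ε ≤ g x) →
      (∀ x, r0 < ‖x‖ → g x = ε) → Lam V g ≤ A * II V (fi g)) :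
    Lam V (fun x => f x ^ 2) ≤ A * (4 * II V (gradSq f)) := by
  have hZ := II_pos hVi
  obtain ⟨S, hS⟩ := Bd.of_const_outside 1 hf hfo
  have hS0 := hS.nonneg
  have hf2 : ∀ x, f x ^ 2 ≤ S ^ 2 := fun x => by
    rw [← sq_abs]
    exact pow_le_pow_left₀ (abs_nonneg _) (hS.zero x) 2
  have hgs : Continuous (gradSq f) := by
    unfold gradSq
    exact continuous_finsetSum _ fun i _ => (hf.pd i).cont.pow 2
  have hgb : ∀ x, |gradSq f x| ≤ ∑ _i : Fin d, S ^ 2 := fun x => by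
    unfold gradSq
    rw [abs_of_nonneg (Finset.sum_nonneg fun i _ => sq_nonneg _)]
    refine Finset.sum_le_sum fun i _ => ?_
    rw [← sq_abs]
    exact pow_le_pow_left₀ (abs_nonneg _) ((hS.2 i).zero x) 2
  set e : ℕ → ℝ := fun n => 1 / ((n : ℝ) + 1) with he
  have he0 : ∀ n, 0 < e n := fun n => by positivity
  have he1 : ∀ n, e n ≤ 1 := fun n => by
    rw [he]
    simp only
    rw [div_le_one (by positivity)]
    have : (0:ℝ) ≤ n := Nat.cast_nonneg n
    linarith
  have hel : Filter.Tendsto e Filter.atTop (nhds 0) := tendsto_one_div_add_atTop_nhds_zero_nat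
  have hgS : ∀ n, Sm (fun x => f x ^ 2 + e n) := fun n => (hf.pow 2).add (Sm.const _)
  have hstep : ∀ n, Lam V (fun x => f x ^ 2 + e n) ≤ A * (4 * II V (gradSq f)) := by
    intro n
    refine (h _ (e n) r0 (hgS n) (he0 n) (fun x => by nlinarith [sq_nonneg (f x)])
      (fun x hx => by rw [hfo x hx]; ring)).trans ?_
    refine mul_le_mul_of_nonneg_left ?_ hA
    have hpd : ∀ i x, pd i (fun x => f x ^ 2 + e n) x = 2 * (f x * pd i f x) := by
      intro i x
      have h1 : (fun x => f x ^ 2 + e n) = fun x => f x * f x + e n := by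
        funext x; ring
      rw [h1, pd_add (hf.mul hf) (Sm.const _) i, pd_mul hf hf i, pd_const]
      ring
    have hfi : ∀ x, fi (fun x => f x ^ 2 + e n) x ≤ 4 * gradSq f x := by
      intro x
      unfold fi gradSq
      simp only [hpd]
      have hp : 0 < f x ^ 2 + e n := by nlinarith [sq_nonneg (f x), he0 n]
      rw [← div_eq_mul_inv, div_le_iff₀ hp]
      have e1 : ∑ i, 2 * (f x * pd i f x) * (2 * (f x * pd i f x)) =
          4 * (∑ i, pd i f x ^ 2) * f x ^ 2 := by
        rw [Finset.mul_sum, Finset.sum_mul]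
        exact Finset.sum_congr rfl fun i _ => by ring
      rw [e1]
      refine mul_le_mul_of_nonneg_left (by linarith [he0 n]) ?_
      exact mul_nonneg (by norm_num) (Finset.sum_nonneg fun i _ => sq_nonneg _)
    have hfi0 : ∀ x, 0 ≤ fi (fun x => f x ^ 2 + e n) x :=
      fi_nonneg fun x => by nlinarith [sq_nonneg (f x), he0 n]
    unfold II
    rw [← integral_const_mul]
    refine integral_mono
      (int_bdd hVi (fi_smooth (hgS n) fun x => by nlinarith [sq_nonneg (f x), he0 n]).cont.measurable
        (C := 4 * ∑ _i : Fin d, S ^ 2) fun x => ?_)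
      ((int_bdd hVi hgs.measurable hgb).const_mul 4) fun x => ?_
    · rw [abs_of_nonneg (hfi0 x)]
      have := (le_abs_self _).trans (hgb x)
      linarith [hfi x]
    · simp only
      rw [← mul_assoc]
      exact mul_le_mul_of_nonneg_right (hfi x) (Real.exp_pos _).le
  have lim : ∀ {ψn : ℕ → EuclideanSpace ℝ (Fin d) → ℝ} {ψ : EuclideanSpace ℝ (Fin d) → ℝ} {C : ℝ},
      (∀ n, Measurable (ψn n)) → (∀ n x, |ψn n x| ≤ C) →
      (∀ x, Filter.Tendsto (fun n => ψn n x) Filter.atTop (nhds (ψ x))) →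
      Filter.Tendsto (fun n => II V (ψn n)) Filter.atTop (nhds (II V ψ)) := fun hm hb hl =>
    tendsto_II (Un := fun _ => V) hVi (fun x => Filter.Eventually.of_forall fun _ => rfl)
      (fun n x => by linarith [Real.exp_pos (-nsq x)]) (fun _ => hV) hm hb hl
  have l0 : ∀ x, Filter.Tendsto (fun n => f x ^ 2 + e n) Filter.atTop (nhds (f x ^ 2)) := fun x => by
    simpa using hel.const_add (f x ^ 2)
  have l1 := lim (ψn := fun n x => f x ^ 2 + e n) (C := S ^ 2 + 1) (fun n => (hgS n).cont.measurable)
    (fun n x => by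
      rw [abs_of_nonneg (by nlinarith [sq_nonneg (f x), he0 n])]
      linarith [hf2 x, he1 n]) l0
  obtain ⟨C, hC⟩ := (isCompact_Icc (a := (0:ℝ)) (b := S ^ 2 + 1)).exists_bound_of_continuousOn
    (f := fun s => s * Real.log s) Real.continuous_mul_log.continuousOn
  have l2 := lim (ψn := fun n x => (f x ^ 2 + e n) * Real.log (f x ^ 2 + e n)) (C := C)
    (fun n => (Real.continuous_mul_log.comp (hgS n).cont).measurable)
    (fun n x => hC _ ⟨by nlinarith [sq_nonneg (f x), he0 n], by linarith [hf2 x, he1 n]⟩)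
    (fun x => (Real.continuous_mul_log.tendsto _).comp (l0 x))
  have l3 := ((Real.continuous_mul_log.tendsto _).comp (l1.div_const (II V fun _ => 1))).const_mul
    (II V fun _ => 1)
  have key : ∀ u : EuclideanSpace ℝ (Fin d) → ℝ, Lam V u = II V (fun x => u x * Real.log (u x)) -
      (II V fun _ => 1) * (II V u / (II V fun _ => 1) * Real.log (II V u / (II V fun _ => 1))) := by
    intro u
    unfold Lam
    field_simp
  have lL : Filter.Tendsto (fun n => Lam V (fun x => f x ^ 2 + e n)) Filter.atTop
      (nhds (Lam V (fun x => f x ^ 2))) := by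
    simp only [key]
    exact l2.sub l3
  exact le_of_tendsto' lL hstep

end final

theorem lsi_general {d : ℕ} (hd : 1 ≤ d) (V a : EuclideanSpace ℝ (Fin d) → ℝ)
    (hV : ContDiff ℝ (⊤ : ℕ∞) V)
    (hint : Integrable (fun x => Real.exp (-V x)))
    (hconv : ∃ ρ : ℝ, ∀ x, Matrix.PosSemidef (hess V x - ρ • 1))
    (ha : ContDiff ℝ (⊤ : ℕ∞) a) (hapos : ∀ x, 0 < a x)
    (haB : ∃ M : ℝ, ∀ x, a x ≤ M)
    (hainvB : ∃ M : ℝ, ∀ x, (a x)⁻¹ ≤ M)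
    (hgradB : ∃ M : ℝ, ∀ x, Real.sqrt (gradSq a x) ≤ M)
    (hκ : 0 < ⨅ x, (2 * minEig (hess V x) - a x * diffOp V (fun y => (a y)⁻¹) x)) :
    ∀ f : EuclideanSpace ℝ (Fin d) → ℝ, ContDiff ℝ (⊤ : ℕ∞) f → HasCompactSupport f →
      entropy (gibbs V) (fun x => f x ^ 2) ≤
        (4 * (⨆ x, a x) * (⨆ x, (a x)⁻¹) /
            ⨅ x, (2 * minEig (hess V x) - a x * diffOp V (fun y => (a y)⁻¹) x)) *
          ∫ x, gradSq f x ∂(gibbs V) := by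
  intro f hf hfc
  obtain ⟨ρ, hρ⟩ := hconv
  obtain ⟨Ma, hMa⟩ := haB
  obtain ⟨Mi, hMi⟩ := hainvB
  obtain ⟨Mg, hMg⟩ := hgradB
  have hκb : BddBelow (Set.range fun x =>
      (2 * minEig (hess V x) - a x * diffOp V (fun y => (a y)⁻¹) x)) := by
    by_contra hcon
    rw [Real.iInf_of_not_bddBelow hcon] at hκ
    exact lt_irrefl _ hκ
  have hκle := fun x => ciInf_le hκb x
  set κ := ⨅ x, (2 * minEig (hess V x) - a x * diffOp V (fun y => (a y)⁻¹) x) with hκdef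
  have hbA : BddAbove (Set.range a) := ⟨Ma, by rintro _ ⟨x, rfl⟩; exact hMa x⟩
  have hbI : BddAbove (Set.range fun x => (a x)⁻¹) := ⟨Mi, by rintro _ ⟨x, rfl⟩; exact hMi x⟩
  have hale : ∀ x, a x ≤ ⨆ x, a x := fun x => le_ciSup hbA x
  have haile : ∀ x, (a x)⁻¹ ≤ ⨆ x, (a x)⁻¹ := fun x => le_ciSup hbI x
  have hApos : 0 < ⨆ x, a x := (hapos 0).trans_le (hale 0)
  have hIpos : 0 < ⨆ x, (a x)⁻¹ := (inv_pos.2 (hapos 0)).trans_le (haile 0)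
  set A := ⨆ x, a x with hA
  set c := ⨆ x, (a x)⁻¹ with hc
  have hane : ∀ x, a x ≠ 0 := fun x => (hapos x).ne'
  have hVs : Sm V := hV
  have has : Sm a := ha
  have hbs : Sm (fun x => (a x)⁻¹) := has.inv hane
  have hfs : Sm f := hf
  have hnn : ∀ v : EuclideanSpace ℝ (Fin d), 0 ≤ ∑ i, v i * v i := fun v =>
    Finset.sum_nonneg fun i _ => mul_self_nonneg _
  have hHerm : ∀ x, (hess V x).IsHermitian := fun x => by
    have h1 := (hρ x).1
    have h2 : (ρ • (1 : Matrix (Fin d) (Fin d) ℝ)).IsHermitian := by simp [Matrix.IsHermitian]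
    simpa using h1.add h2
  have hH : ∀ x v : EuclideanSpace ℝ (Fin d), (-(max (-ρ) 0)) * ∑ i, v i * v i ≤
      ∑ i, ∑ j, v i * pd i (pd j V) x * v j := fun x v => by
    have h1 : ρ * ∑ i, v i * v i ≤ ∑ i, ∑ j, v i * pd i (pd j V) x * v j := psd_form (hρ x) v
    refine le_trans (mul_le_mul_of_nonneg_right ?_ (hnn v)) h1
    linarith [le_max_left (-ρ) 0]
  have hq : ∀ x v : EuclideanSpace ℝ (Fin d),
      (diffOp V (fun x => (a x)⁻¹) x / (a x)⁻¹ + κ) * ∑ i, v i * v i ≤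
      2 * ∑ i, ∑ j, v i * pd i (pd j V) x * v j := fun x v => by
    have h1 : minEig (hess V x) * ∑ i, v i * v i ≤ ∑ i, ∑ j, v i * pd i (pd j V) x * v j :=
      minEig_form (hHerm x) v
    have h2 := hκle x
    have h3 : diffOp V (fun x => (a x)⁻¹) x / (a x)⁻¹ + κ ≤ 2 * minEig (hess V x) := by
      rw [div_inv_eq_mul]
      linarith
    have h4 := mul_le_mul_of_nonneg_right h3 (hnn v)
    linarith
  have hG : ∀ i x, |pd i (fun x => (a x)⁻¹) x| ≤ Mg * (Mi * Mi) := fun i x => by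
    rw [pd_inv has hane i]
    simp only
    have hi : 0 < (a x)⁻¹ := inv_pos.2 (hapos x)
    rw [abs_mul, abs_mul, abs_mul, abs_of_pos hi, abs_neg, abs_one, one_mul]
    have h1 : |pd i a x| ≤ Mg := by
      refine le_trans ?_ (hMg x)
      rw [← Real.sqrt_sq_eq_abs]
      apply Real.sqrt_le_sqrt
      unfold gradSq
      exact Finset.single_le_sum (f := fun i => pd i a x ^ 2) (fun j _ => sq_nonneg _)
        (Finset.mem_univ i)
    exact mul_le_mul h1 (mul_le_mul (hMi x) (hMi x) hi.le (hi.le.trans (hMi x)))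
      (mul_nonneg hi.le hi.le) ((abs_nonneg _).trans h1)
  have hfo : ∃ r0 : ℝ, ∀ x, r0 < ‖x‖ → f x = 0 := by
    obtain ⟨r0, hr0⟩ := hfc.isCompact.isBounded.subset_closedBall (0 : EuclideanSpace ℝ (Fin d))
    refine ⟨r0, fun x hx => ?_⟩
    by_contra hne
    have := hr0 (subset_tsupport f hne)
    rw [mem_closedBall_zero_iff] at this
    linarith
  obtain ⟨r0, hfo⟩ := hfo
  have hmain := Lam_sq_le hVs.cont hfs hint hfo (A := c / (κ * A⁻¹)) (by positivity)
    (fun g ε r0 hg hε hg1 hgo => by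
      have := entropy_core hd hVs hbs hint (le_max_right (-ρ) 0) hκ hH (β := A⁻¹) (c := c)
        (inv_pos.2 hApos) (fun x => inv_anti₀ (hapos x) (hale x)) haile hG hq hg hε hg1 hgo
      rw [div_mul_eq_mul_div]
      exact this)
  rw [entropy_gibbs hVs.cont hint, gibbs_integral hVs.cont hint]
  have hZ := II_pos hint
  have h1 := mul_le_mul_of_nonneg_left hmain (inv_pos.2 hZ).le
  refine h1.trans (le_of_eq ?_)
  field_simp
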